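/- Let $R_0$ be an arbitrary commutative Noetherian ring, $\mathfrak{f} \geq 4$, $\mathcal{R} = R_0[x_{i,j}; t_i]$, and $J = \operatorname{Pf}_4(\mathbf{X}) + I_1(\mathbf{t}\mathbf{X})$. If $R_0$ is a Gorenstein ring, then $\mathcal{R}/J$ is a Gorenstein ring. -/

import Mathlib

open CategoryTheory

noncomputable section
namespace AluffiStmt

universe u

/-- The index set for the entries of a generic `f × f` alternating matrix:
pairs `(i, j)` with `i < j`. -/
abbrev P2 (f : ℕ) := {p : Fin f × Fin f // p.1 < p.2}

/-- `l` is a (weakly) regular sequence on `R`: each entry is a nonzerodivisor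
modulo the ideal generated by the previous entries. -/
def IsRegSeq (R : Type*) [CommRing R] (l : List R) : Prop :=
  ∀ (i : ℕ) (h : i < l.length) (x : R),
    l.get ⟨i, h⟩ * x ∈ Ideal.span {y | y ∈ l.take i} →
      x ∈ Ideal.span {y | y ∈ l.take i}

/-- The grade of an ideal: the supremum of lengths of regular sequences on `R`
contained in `I`. -/
def grade {R : Type*} [CommRing R] (I : Ideal R) : ℕ :=
  sSup {n | ∃ l : List R, l.length = n ∧ (∀ r ∈ l, r ∈ I) ∧ IsRegSeq R l}

/-- Projective dimension at most `n`, expressed by vanishing of `Ext^i (M, -)`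
for all `i > n`. -/
def projDimLE (R : Type u) [CommRing R] (M : ModuleCat.{u} R) (n : ℕ) : Prop :=
  ∀ (N : ModuleCat.{u} R) (i : ℕ), n < i →
    Subsingleton (((Ext R (ModuleCat.{u} R) i).obj (Opposite.op M)).obj N)

/-- `M` has projective dimension exactly `n`. -/
def projDimEq (R : Type u) [CommRing R] (M : ModuleCat.{u} R) (n : ℕ) : Prop :=
  projDimLE R M n ∧ ∀ k : ℕ, projDimLE R M k → n ≤ k

/-- An ideal `I` is perfect if `grade I = pd_R (R/I)`. -/
def IsPerfectIdeal (R : Type u) [CommRing R] (I : Ideal R) : Prop :=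
  projDimEq R (ModuleCat.of R (R ⧸ I)) (grade I)
/-- Variables for the ring `𝓡 = R₀[x_{i,j}; t_i]`. -/
abbrev Var (f : ℕ) := P2 f ⊕ Fin f

/-- The `(i,j)` entry of the generic alternating matrix `X` in `𝓡`. -/
def xvt (R₀ : Type u) [CommRing R₀] (f : ℕ) (i j : Fin f) : MvPolynomial (Var f) R₀ :=
  if h : i < j then MvPolynomial.X (Sum.inl ⟨(i, j), h⟩)
  else if h : j < i then - MvPolynomial.X (Sum.inl ⟨(j, i), h⟩) else 0

/-- The entry `t_i` of the generic row vector `t` in `𝓡`. -/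
def tvt (R₀ : Type u) [CommRing R₀] (f : ℕ) (i : Fin f) : MvPolynomial (Var f) R₀ :=
  MvPolynomial.X (Sum.inr i)

/-- The Pfaffian of the `4 × 4` principal submatrix of `X` with rows/columns
`i < j < k < l`. -/
def pf4t (R₀ : Type u) [CommRing R₀] (f : ℕ) (i j k l : Fin f) : MvPolynomial (Var f) R₀ :=
  xvt R₀ f i j * xvt R₀ f k l - xvt R₀ f i k * xvt R₀ f j l + xvt R₀ f i l * xvt R₀ f j k

/-- The ideal `Pf₄(X)` of `𝓡`. -/
def Pf4t (R₀ : Type u) [CommRing R₀] (f : ℕ) : Ideal (MvPolynomial (Var f) R₀) :=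
  Ideal.span {p | ∃ i j k l : Fin f, i < j ∧ j < k ∧ k < l ∧ p = pf4t R₀ f i j k l}

/-- The `j`-th entry of the row vector `t·X`. -/
def tX (R₀ : Type u) [CommRing R₀] (f : ℕ) (j : Fin f) : MvPolynomial (Var f) R₀ :=
  ∑ i : Fin f, tvt R₀ f i * xvt R₀ f i j

/-- The ideal `I₁(t·X)` generated by the entries of `t·X`. -/
def ItX (R₀ : Type u) [CommRing R₀] (f : ℕ) : Ideal (MvPolynomial (Var f) R₀) :=
  Ideal.span {p | ∃ j : Fin f, p = tX R₀ f j}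

/-- The ideal `J = Pf₄(X) + I₁(t·X)`. -/
def Jt (R₀ : Type u) [CommRing R₀] (f : ℕ) : Ideal (MvPolynomial (Var f) R₀) :=
  Pf4t R₀ f + ItX R₀ f
/-- Self-injective dimension at most `n`: `Ext^i(-, R)` vanishes for `i > n`. -/
def selfInjDimLE (R : Type u) [CommRing R] (n : ℕ) : Prop :=
  ∀ (M : ModuleCat.{u} R) (i : ℕ), n < i →
    Subsingleton (((Ext R (ModuleCat.{u} R) i).obj (Opposite.op M)).obj (ModuleCat.of R R))

/-- A ring is Gorenstein if it is Noetherian and every localization at a prime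
has finite self-injective dimension. -/
def IsGorensteinRing (R : Type u) [CommRing R] : Prop :=
  IsNoetherianRing R ∧ ∀ (P : Ideal R) [P.IsPrime],
    ∃ n : ℕ, selfInjDimLE (Localization.AtPrime P) n

set_option linter.unusedSimpArgs false
set_option linter.unusedTactic false
set_option linter.unreachableTactic false
set_option linter.unusedSectionVars false

/-- Finite injective dimension, expressed with explicit cosyzygies. -/
def IDLE (R : Type u) [CommRing R] :
    ℕ → ∀ (M : Type u) [AddCommGroup M] [Module R M], Prop
  | 0, M, _, _ => Module.Injective R M
  | n + 1, M, _, _ => ∃ (E : Type u) (_ : AddCommGroup E) (_ : Module R E)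
      (C : Type u) (_ : AddCommGroup C) (_ : Module R C) (i : M →ₗ[R] E) (p : E →ₗ[R] C),
      Function.Injective i ∧ Function.Surjective p ∧ LinearMap.range i = LinearMap.ker p ∧
      Module.Injective R E ∧ IDLE R n C

/-- cocycle condition in degree `i+1` -/
def CocyZ {R : Type u} [CommRing R] {M : ModuleCat.{u} R} (P : ProjectiveResolution M)
    (N : ModuleCat.{u} R) (i : ℕ) : Prop :=
  ∀ g : P.complex.X (i+1) ⟶ N, P.complex.d (i+2) (i+1) ≫ g = 0 →
    ∃ h : P.complex.X i ⟶ N, P.complex.d (i+1) i ≫ h = g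

lemma ext_subsingleton_iff {R : Type u} [CommRing R] {M : ModuleCat.{u} R}
    (P : ProjectiveResolution M) (N : ModuleCat.{u} R) (i : ℕ) :
    Subsingleton (((Ext R (ModuleCat.{u} R) (i+1)).obj (Opposite.op M)).obj N) ↔
      CocyZ P N i := by
  rw [← ModuleCat.isZero_iff_subsingleton, (P.isoExt (i+1) N).isZero_iff,
    ← HomologicalComplex.exactAt_iff_isZero_homology,
    HomologicalComplex.exactAt_iff' _ i (i+1) (i+2) (by simp) (by simp),
    ShortComplex.moduleCat_exact_iff]
  rfl

variable {R : Type u} [CommRing R]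

lemma res_exact {M : ModuleCat.{u} R} (P : ProjectiveResolution M) (i : ℕ)
    (x : P.complex.X (i+1)) (hx : P.complex.d (i+1) i x = 0) :
    ∃ y : P.complex.X (i+2), P.complex.d (i+2) (i+1) y = x := by
  have h := P.complex_exactAt_succ i
  rw [HomologicalComplex.exactAt_iff' _ (i+2) (i+1) i (by simp) (by simp),
    ShortComplex.moduleCat_exact_iff] at h
  exact h x hx

lemma res_exact0 {M : ModuleCat.{u} R} (P : ProjectiveResolution M)
    (x : P.complex.X 0) (hx : P.π.f 0 x = 0) :
    ∃ y : P.complex.X 1, P.complex.d 1 0 y = x := by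
  have h := P.exact₀
  rw [ShortComplex.moduleCat_exact_iff] at h
  exact h x hx
lemma dcomp {M : ModuleCat.{u} R} (P : ProjectiveResolution M) (i : ℕ) 
    (x : P.complex.X (i+2)) : P.complex.d (i+1) i (P.complex.d (i+2) (i+1) x) = 0 := by
  have := P.complex.d_comp_d (i+2) (i+1) i
  exact congrArg (fun f => f x) this

/-- Extending along a linear map whose kernel is killed. -/
lemma inj_ext {A B E : Type u} [AddCommGroup A] [Module R A] [AddCommGroup B] [Module R B]
    [AddCommGroup E] [Module R E] [hE : Module.Injective R E] (d : A →ₗ[R] B) (g : A →ₗ[R] E)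
    (h : LinearMap.ker d ≤ LinearMap.ker g) : ∃ k : B →ₗ[R] E, k ∘ₗ d = g := by
  obtain ⟨k, hk⟩ := hE.out ((LinearMap.ker d).liftQ d le_rfl)
    (LinearMap.ker_eq_bot.mp (Submodule.ker_liftQ_eq_bot _ _ _ le_rfl))
    ((LinearMap.ker d).liftQ g h)
  refine ⟨k, LinearMap.ext fun x => ?_⟩
  simpa using hk (Submodule.Quotient.mk x)

lemma coc_of_inj {M : ModuleCat.{u} R} (P : ProjectiveResolution M)
    (E : ModuleCat.{u} R) [hE : Module.Injective R E] (i : ℕ) : CocyZ P E i := by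
  intro g hg
  obtain ⟨k, hk⟩ := inj_ext (P.complex.d (i+1) i).hom g.hom (by
    intro x hx
    obtain ⟨y, rfl⟩ := res_exact P i x hx
    exact congrArg (fun f => f y) hg)
  exact ⟨ModuleCat.ofHom k, by ext x; exact LinearMap.congr_fun hk x⟩

instance {M : ModuleCat.{u} R} (P : ProjectiveResolution M) (i : ℕ) : 
    Module.Projective R (P.complex.X i) :=
  (IsProjective.iff_projective _).mpr (P.projective i)

/-- lift a map through injective with the same kernel -/
lemma lift_ker {N E C : Type u} [AddCommGroup N] [Module R N] [AddCommGroup E] [Module R E]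
    [AddCommGroup C] [Module R C] (i : N →ₗ[R] E) (p : E →ₗ[R] C)
    (hi : Function.Injective i)
    (hip : LinearMap.range i = LinearMap.ker p)
    {A : Type u} [AddCommGroup A] [Module R A] (g : A →ₗ[R] E) (h : p ∘ₗ g = 0) :
    ∃ k : A →ₗ[R] N, i ∘ₗ k = g := by
  have : ∀ x, g x ∈ LinearMap.range i := by
    intro x; rw [hip]; exact LinearMap.congr_fun h x
  refine ⟨(LinearEquiv.ofInjective i hi).symm.toLinearMap ∘ₗ g.codRestrict _ this, ?_⟩
  ext x
  have := (LinearEquiv.ofInjective i hi).apply_symm_apply (g.codRestrict _ this x)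
  exact congrArg Subtype.val this

lemma coc_shift {N E C : Type u} [AddCommGroup N] [Module R N] [AddCommGroup E] [Module R E]
    [AddCommGroup C] [Module R C] (i : N →ₗ[R] E) (p : E →ₗ[R] C)
    (hi : Function.Injective i) (hp : Function.Surjective p)
    (hip : LinearMap.range i = LinearMap.ker p) (hE : Module.Injective R E)
    {M : ModuleCat.{u} R} (P : ProjectiveResolution M) (n : ℕ) :
    CocyZ P (ModuleCat.of R N) (n+1) ↔ CocyZ P (ModuleCat.of R C) n := by
  have hpi : ∀ x, p (i x) = 0 := fun x => by
    have : i x ∈ LinearMap.ker p := hip ▸ ⟨x, rfl⟩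
    exact this
  constructor
  · intro h g hg
    obtain ⟨G, hG⟩ := Module.projective_lifting_property p g.hom hp
    obtain ⟨k, hk⟩ := lift_ker i p hi hip (G ∘ₗ (P.complex.d (n+2) (n+1)).hom) (by
      ext x
      have := congrArg (fun f => f x) hg
      rw [← LinearMap.comp_assoc, hG]; exact this)
    obtain ⟨l, hl⟩ := h (ModuleCat.ofHom k) (by
      ext x
      apply hi
      have := LinearMap.congr_fun hk (P.complex.d (n+3) (n+2) x)
      refine this.trans ?_
      simp only [LinearMap.comp_apply]
      erw [dcomp P (n+1) x]
      simp)
    have hE' := coc_of_inj P (ModuleCat.of R E) n (ModuleCat.ofHom (G - i ∘ₗ l.hom)) (by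
      ext x
      have h1 := LinearMap.congr_fun hk x
      have h2 := congrArg (fun f => f x) hl
      change G (P.complex.d (n+2) (n+1) x) - i (l (P.complex.d (n+2) (n+1) x)) = 0
      rw [sub_eq_zero]
      refine h1.symm.trans ?_
      exact congrArg i h2.symm)
    obtain ⟨e, he⟩ := hE'
    refine ⟨ModuleCat.ofHom (p ∘ₗ e.hom), ?_⟩
    ext x
    have h1 := congrArg (fun f => f x) he
    have h2 := LinearMap.congr_fun hG x
    change p (e (P.complex.d (n+1) n x)) = g x
    have h3 : e (P.complex.d (n+1) n x) = G x - i (l x) := h1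
    rw [h3, map_sub, hpi, sub_zero]; exact h2
  · intro h g hg
    obtain ⟨e, he⟩ := coc_of_inj P (ModuleCat.of R E) (n+1) (ModuleCat.ofHom (i ∘ₗ g.hom)) (by
      ext x
      have := congrArg (fun f => f x) hg
      exact (congrArg i this).trans (map_zero i))
    have he' : ∀ x, e (P.complex.d (n+2) (n+1) x) = i (g x) := 
      fun x => congrArg (fun f => f x) he
    obtain ⟨l, hl⟩ := h (ModuleCat.ofHom (p ∘ₗ e.hom)) (by
      ext x
      change p (e (P.complex.d (n+2) (n+1) x)) = 0
      rw [he', hpi])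
    have hl' : ∀ x, l (P.complex.d (n+1) n x) = p (e x) := 
      fun x => congrArg (fun f => f x) hl
    obtain ⟨G, hG⟩ := Module.projective_lifting_property p l.hom hp
    have hG' : ∀ x, p (G x) = l x := fun x => LinearMap.congr_fun hG x
    obtain ⟨k, hk⟩ := lift_ker i p hi hip (e.hom - G ∘ₗ (P.complex.d (n+1) n).hom) (by
      ext x
      change p (e x - G (P.complex.d (n+1) n x)) = 0
      rw [map_sub, hG', hl', sub_self])
    refine ⟨ModuleCat.ofHom k, ?_⟩
    ext x
    apply hi
    have := LinearMap.congr_fun hk (P.complex.d (n+2) (n+1) x)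
    refine this.trans ?_
    change e (P.complex.d (n+2) (n+1) x) - G (P.complex.d (n+1) n (P.complex.d (n+2) (n+1) x)) = _
    rw [dcomp, he', map_zero, sub_zero]

lemma inj_of_coc (N : Type u) [AddCommGroup N] [Module R N]
    (h : ∀ (M : ModuleCat.{u} R) (P : ProjectiveResolution M), CocyZ P (ModuleCat.of R N) 0) :
    Module.Injective R N := by
  apply Module.Baer.injective
  intro I f
  let M := ModuleCat.of R (R ⧸ I)
  let P := projectiveResolution M
  let π : P.complex.X 0 →ₗ[R] (R ⧸ I) := (P.π.f 0).hom
  have hπ : Function.Surjective π := by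
    have : Epi (P.π.f 0) := inferInstance
    exact (ModuleCat.epi_iff_surjective _).mp this
  obtain ⟨l, hl⟩ := Module.projective_lifting_property I.mkQ π (Submodule.mkQ_surjective I)
  have hl' : ∀ x, Submodule.Quotient.mk (l x) = π x := fun x => LinearMap.congr_fun hl x
  obtain ⟨s, hs⟩ := Module.projective_lifting_property π I.mkQ hπ
  have hs' : ∀ x, π (s x) = Submodule.Quotient.mk x := fun x => LinearMap.congr_fun hs x
  have hd : ∀ x, π (P.complex.d 1 0 x) = 0 := fun x => by
    have := P.complex_d_comp_π_f_zero
    exact congrArg (fun f => f x) this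
  have hm : ∀ x, l (P.complex.d 1 0 x) ∈ I := fun x => by
    rw [← Submodule.Quotient.mk_eq_zero, hl', hd]
  let d1 : P.complex.X 1 →ₗ[R] I := (l ∘ₗ (P.complex.d 1 0).hom).codRestrict I hm
  obtain ⟨g, hg⟩ := h M P (ModuleCat.ofHom (f ∘ₗ d1)) (by
    ext x
    change f (d1 (P.complex.d 2 1 x)) = 0
    have : d1 (P.complex.d 2 1 x) = 0 := by
      apply Subtype.ext
      change l (P.complex.d 1 0 (P.complex.d 2 1 x)) = 0
      rw [dcomp, map_zero]
    rw [this, map_zero])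
  have hg' : ∀ x, g (P.complex.d 1 0 x) = f (d1 x) := fun x => congrArg (fun f => f x) hg
  have hm2 : ∀ x, (l ∘ₗ s - LinearMap.id : R →ₗ[R] R) x ∈ I := fun x => by
    rw [← Submodule.Quotient.mk_eq_zero]
    change Submodule.Quotient.mk (l (s x) - x) = _
    rw [Submodule.Quotient.mk_sub, hl', hs', sub_self]
  let e := (l ∘ₗ s - LinearMap.id : R →ₗ[R] R).codRestrict I hm2
  refine ⟨g.hom ∘ₗ s - f ∘ₗ e, ?_⟩
  intro x hx
  obtain ⟨y, hy⟩ := res_exact0 P (s x) (by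
    change π (s x) = 0
    rw [hs', Submodule.Quotient.mk_eq_zero]; exact hx)
  change g (s x) - f (e x) = _
  rw [← hy, hg', ← map_sub]
  congr 1
  apply Subtype.ext
  change l (P.complex.d 1 0 y) - (l (s x) - x) = x
  rw [hy]; abel

lemma coc_of_IDLE (n : ℕ) : ∀ (N : Type u) [AddCommGroup N] [Module R N], IDLE R n N → 
    ∀ (M : ModuleCat.{u} R) (P : ProjectiveResolution M) (i : ℕ), n ≤ i → 
      CocyZ P (ModuleCat.of R N) i := by
  induction n with
  | zero => intro N _ _ h M P i _; have : Module.Injective R N := h; exact coc_of_inj P _ i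
  | succ n ih =>
    rintro N _ _ ⟨E, _, _, C, _, _, i, p, hi, hp, hip, hE, hC⟩ M P j hj
    obtain ⟨j, rfl⟩ : ∃ k, j = k + 1 := ⟨j - 1, by omega⟩
    rw [coc_shift i p hi hp hip hE]
    exact ih C hC M P j (by omega)

lemma exists_inj_embed (N : Type u) [AddCommGroup N] [Module R N] :
    ∃ (E : Type u) (_ : AddCommGroup E) (_ : Module R E) (i : N →ₗ[R] E),
      Function.Injective i ∧ Module.Injective R E := by
  let E := Injective.under (ModuleCat.of R N)
  let i : ModuleCat.of R N ⟶ E := Injective.ι _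
  have : Mono i := inferInstance
  refine ⟨E, inferInstance, inferInstance, i.hom, (ModuleCat.mono_iff_injective _).mp this, ?_⟩
  rw [Module.injective_iff_injective_object]
  exact inferInstanceAs (Injective (Injective.under (ModuleCat.of R N)))

lemma IDLE_of_coc (n : ℕ) : ∀ (N : Type u) [AddCommGroup N] [Module R N],
    (∀ (M : ModuleCat.{u} R) (P : ProjectiveResolution M) (i : ℕ), n ≤ i → 
      CocyZ P (ModuleCat.of R N) i) → IDLE R n N := by
  induction n with
  | zero => intro N _ _ h; exact inj_of_coc N fun M P => h M P 0 le_rfl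
  | succ n ih =>
    intro N _ _ h
    obtain ⟨E, _, _, i, hi, hE⟩ := exists_inj_embed (R := R) N
    refine ⟨E, _, _, E ⧸ LinearMap.range i, _, _, i, (LinearMap.range i).mkQ, hi,
      Submodule.mkQ_surjective _, (Submodule.ker_mkQ _).symm, hE, ?_⟩
    apply ih
    intro M P j hj
    rw [← coc_shift i (LinearMap.range i).mkQ hi
      (Submodule.mkQ_surjective _) (Submodule.ker_mkQ _).symm hE]
    exact h M P (j+1) (by omega)

lemma selfInjDimLE_iff (R : Type u) [CommRing R] (n : ℕ) : selfInjDimLE R n ↔ IDLE R n R := by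
  constructor
  · intro h
    apply IDLE_of_coc
    intro M P i hi
    rw [← ext_subsingleton_iff]
    exact h M (i+1) (by omega)
  · intro h M i hi
    obtain ⟨j, rfl⟩ : ∃ k, i = k + 1 := ⟨i - 1, by omega⟩
    rw [ext_subsingleton_iff (projectiveResolution M)]
    exact coc_of_IDLE n R h M _ j (by omega)

/-- independence of the chosen embedding -/
lemma IDLE_succ_iff {N E C : Type u} [AddCommGroup N] [Module R N] [AddCommGroup E] [Module R E]
    [AddCommGroup C] [Module R C] (i : N →ₗ[R] E) (p : E →ₗ[R] C)
    (hi : Function.Injective i) (hp : Function.Surjective p)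
    (hip : LinearMap.range i = LinearMap.ker p) (hE : Module.Injective R E) (n : ℕ) :
    IDLE R (n+1) N ↔ IDLE R n C := by
  constructor
  · intro h
    apply IDLE_of_coc
    intro M P j hj
    rw [← coc_shift i p hi hp hip hE]
    exact coc_of_IDLE _ N h M P _ (by omega)
  · intro h
    exact ⟨E, _, _, C, _, _, i, p, hi, hp, hip, hE, h⟩

section basic
variable {R : Type u} [CommRing R]

lemma inj_of_linearEquiv {M N : Type u} [AddCommGroup M] [Module R M] [AddCommGroup N] [Module R N]
    (e : M ≃ₗ[R] N) (h : Module.Injective R M) : Module.Injective R N :=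
  Module.Baer.injective ((Module.Baer.of_injective h).of_equiv e)

lemma IDLE_of_linearEquiv {M N : Type u} [AddCommGroup M] [Module R M] [AddCommGroup N]
    [Module R N] (e : M ≃ₗ[R] N) (n : ℕ) (h : IDLE R n M) : IDLE R n N := by
  cases n with
  | zero => exact inj_of_linearEquiv e h
  | succ n =>
    obtain ⟨E, _, _, C, _, _, i, p, hi, hp, hip, hE, hC⟩ := h
    refine ⟨E, _, _, C, _, _, i ∘ₗ e.symm.toLinearMap, p, ?_, hp, ?_, hE, hC⟩
    · exact hi.comp e.symm.injective
    · rw [← hip, LinearMap.range_comp]; simp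

lemma inj_restrict {A B : Type u} [CommRing A] [CommRing B] [Algebra A B] [Module.Flat A B]
    {M : Type u} [AddCommGroup M] [Module B M] [Module A M] [IsScalarTower A B M]
    (h : Module.Injective B M) : Module.Injective A M := by
  constructor
  intro X Y _ _ _ _ f hf g
  obtain ⟨k, hk⟩ := h.out (f.baseChange B) (by
    exact Module.Flat.lTensor_preserves_injective_linearMap f hf) (g.liftBaseChange B)
  refine ⟨(k.restrictScalars A) ∘ₗ (TensorProduct.mk A B Y 1), fun x => ?_⟩
  have := hk (1 ⊗ₜ x)
  simpa using this

lemma IDLE_restrict {A B : Type u} [CommRing A] [CommRing B] [Algebra A B] [Module.Flat A B] (n : ℕ) :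
    ∀ {M : Type u} [AddCommGroup M] [Module B M] [Module A M] [IsScalarTower A B M]
    (_ : IDLE B n M), IDLE A n M := by
  induction n with
  | zero => intro M _ _ _ _ h; exact inj_restrict (B := B) h
  | succ n ih =>
    rintro M _ _ _ _ ⟨E, _, _, C, _, _, i, p, hi, hp, hip, hE, hC⟩
    let _ : Module A E := Module.compHom E (algebraMap A B)
    let _ : Module A C := Module.compHom C (algebraMap A B)
    have _ : IsScalarTower A B E := IsScalarTower.of_algebraMap_smul fun _ _ => rfl
    have _ : IsScalarTower A B C := IsScalarTower.of_algebraMap_smul fun _ _ => rfl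
    refine ⟨E, _, _, C, _, _, i.restrictScalars A, p.restrictScalars A, hi, hp, ?_,
      inj_restrict (B := B) hE, ih hC⟩
    ext x
    exact SetLike.ext_iff.mp hip x

lemma IDLE_localize [IsNoetherianRing R] (S : Submonoid R) (n : ℕ) :
    ∀ {M : Type u} [AddCommGroup M] [Module R M] (_ : IDLE R n M), 
      IDLE (Localization S) n (LocalizedModule S M) := by
  induction n with
  | zero =>
    intro M _ _ h
    have : Module.Injective R M := h
    exact Module.injective_of_isLocalizedModule S (LocalizedModule.mkLinearMap S M) 
  | succ n ih =>
    rintro M _ _ ⟨E, _, _, C, _, _, i, p, hi, hp, hip, hE, hC⟩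
    refine ⟨_, _, _, _, _, _, LocalizedModule.map S i, LocalizedModule.map S p,
      LocalizedModule.map_injective S i hi, LocalizedModule.map_surjective S p hp, ?_,
      Module.injective_of_isLocalizedModule S (LocalizedModule.mkLinearMap S E), ih hC⟩
    have := LocalizedModule.map_exact S i p (LinearMap.exact_iff.mpr hip.symm)
    ext x
    exact (this x).symm

/-- The alternative form of the Gorenstein property. -/
def Gor' (R : Type u) [CommRing R] : Prop :=
  IsNoetherianRing R ∧ ∀ (P : Ideal R) [P.IsPrime], ∃ n, IDLE R n (Localization.AtPrime P)

lemma gor'_of_gor (h : IsGorensteinRing R) : Gor' R := by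
  refine ⟨h.1, fun P _ => ?_⟩
  obtain ⟨n, hn⟩ := h.2 P
  rw [selfInjDimLE_iff] at hn
  have : Module.Flat R (Localization.AtPrime P) := IsLocalization.flat _ P.primeCompl
  exact ⟨n, IDLE_restrict (B := Localization.AtPrime P) n hn⟩

lemma mk_zero_iff (S : Submonoid R) {N : Type u} [AddCommGroup N] [Module R N] (m : N) (s : S) :
    LocalizedModule.mk m s = 0 ↔ ∃ c ∈ S, c • m = 0 := by
  rw [← LocalizedModule.zero_mk (1 : S), LocalizedModule.mk_eq]
  constructor
  · rintro ⟨c, hc⟩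
    exact ⟨c, c.2, by simpa [Submonoid.smul_def] using hc⟩
  · rintro ⟨c, hc, h⟩
    exact ⟨⟨c, hc⟩, by simpa [Submonoid.smul_def] using h⟩

/-- if `j : R → N` becomes an isomorphism after localizing -/
lemma loc_equiv (S : Submonoid R) {N : Type u} [AddCommGroup N] [Module R N] (j : R →ₗ[R] N)
    (h1 : ∀ n : N, ∃ s ∈ S, ∃ b, j b = s • n) (h2 : ∀ b, j b = 0 → ∃ s ∈ S, s * b = 0) :
    Nonempty (LocalizedModule S N ≃ₗ[Localization S] Localization S) := by
  let J := LocalizedModule.map S j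
  have inj : Function.Injective J := by
    rw [← LinearMap.ker_eq_bot, eq_bot_iff]
    intro x hx
    induction x using LocalizedModule.induction_on with
    | h b s =>
      rw [LinearMap.mem_ker, LocalizedModule.map_mk, mk_zero_iff] at hx
      obtain ⟨c, hc, hcj⟩ := hx
      have hcj : j (c * b) = 0 := by rw [← smul_eq_mul, map_smul]; exact hcj
      obtain ⟨d, hd, hdb⟩ := h2 _ hcj
      rw [Submodule.mem_bot, mk_zero_iff]
      refine ⟨d * c, S.mul_mem hd hc, ?_⟩
      rw [← hdb, smul_eq_mul, mul_assoc]
  have surj : Function.Surjective J := by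
    intro x
    induction x using LocalizedModule.induction_on with
    | h n s =>
      obtain ⟨c, hc, b, hb⟩ := h1 n
      refine ⟨LocalizedModule.mk b (⟨c, hc⟩ * s), ?_⟩
      rw [LocalizedModule.map_mk, hb]
      exact LocalizedModule.mk_cancel_common_left ⟨c, hc⟩ s n
  let e1 := LinearEquiv.ofBijective J ⟨inj, surj⟩
  let e2 : LocalizedModule S R ≃ₗ[R] Localization S :=
    IsLocalizedModule.iso S (Algebra.linearMap R (Localization S))
  exact ⟨e1.symm.trans (e2.extendScalarsOfIsLocalization S (Localization S))⟩

lemma gor_of_loc [IsNoetherianRing R]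
    (h : ∀ (P : Ideal R) [P.IsPrime], ∃ (n : ℕ) (N : Type u) (_ : AddCommGroup N) (_ : Module R N)
      (j : R →ₗ[R] N), IDLE R n N ∧
      (∀ n : N, ∃ s ∉ P, ∃ b, j b = s • n) ∧ (∀ b, j b = 0 → ∃ s ∉ P, s * b = 0)) :
    IsGorensteinRing R := by
  refine ⟨inferInstance, fun P _ => ?_⟩
  obtain ⟨n, N, _, _, j, hN, h1, h2⟩ := h P
  obtain ⟨e⟩ := loc_equiv P.primeCompl j h1 h2
  refine ⟨n, ?_⟩
  rw [selfInjDimLE_iff]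
  exact IDLE_of_linearEquiv e n (IDLE_localize P.primeCompl n hN)

lemma finsupp_inj [IsNoetherianRing R] (E : Type u) [AddCommGroup E] [Module R E]
    (hE : Module.Injective R E) : Module.Injective R (ℕ →₀ E) := by
  apply Module.Baer.injective
  intro I g
  classical
  obtain ⟨T, hT⟩ := (Module.Finite.fg_top : (⊤ : Submodule R I).FG)
  let F : Finset ℕ := T.biUnion fun x => (g x).support
  have key : ∀ x : I, g x ∈ Finsupp.supported E R (F : Set ℕ) := by
    have : (⊤ : Submodule R I) ≤ (Finsupp.supported E R (F : Set ℕ)).comap g := by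
      rw [← hT, Submodule.span_le]
      intro x hx
      change ((g x).support : Set ℕ) ⊆ F
      exact_mod_cast Finset.subset_biUnion_of_mem (fun x => (g x).support) hx
    exact fun x => this trivial
  have hB := Module.Baer.of_injective hE
  choose h hh using fun k : ℕ => hB I ((Finsupp.lapply k : (ℕ →₀ E) →ₗ[R] E) ∘ₗ g)
  refine ⟨∑ k ∈ F, (Finsupp.lsingle k : E →ₗ[R] (ℕ →₀ E)) ∘ₗ h k, fun x hx => ?_⟩
  ext m
  have h1 := key ⟨x, hx⟩
  rw [Finsupp.mem_supported'] at h1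
  simp only [LinearMap.sum_apply, LinearMap.comp_apply, Finsupp.finsetSum_apply, hh _ x hx,
    Finsupp.lsingle_apply, Finsupp.lapply_apply, Finsupp.single_apply]
  by_cases hm : m ∈ F
  · simp [hm]
  · rw [h1 m (by simpa using hm)]
    simp [hm]

open Polynomial in
/-- An `R`-linear map of `R[X]`-modules commuting with `X` is `R[X]`-linear. -/
def polyLin {A B : Type u} [AddCommGroup A] [AddCommGroup B] [Module R A] [Module R B]
    [Module R[X] A] [Module R[X] B] [IsScalarTower R R[X] A] [IsScalarTower R R[X] B]
    (h : A →ₗ[R] B) (hX : ∀ a, h ((X : R[X]) • a) = (X : R[X]) • h a) : A →ₗ[R[X]] B where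
  toFun := h
  map_add' := h.map_add
  map_smul' := by
    intro q a
    simp only [RingHom.id_apply]
    induction q using Polynomial.induction_on generalizing a with
    | C r => 
      have h1 : (C r : R[X]) • a = r • a := algebraMap_smul R[X] r a
      have h2 : (C r : R[X]) • h a = r • h a := algebraMap_smul R[X] r (h a)
      rw [h1, h2, map_smul]
    | add p q hp hq => rw [add_smul, map_add, hp, hq, add_smul]
    | monomial n r ih =>
      rw [pow_succ, ← mul_assoc, mul_smul, ih, hX, smul_smul]

lemma factor_surj {A B D : Type u} [AddCommGroup A] [Module R A] [AddCommGroup B] [Module R B]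
    [AddCommGroup D] [Module R D] (q : A →ₗ[R] B) (g : A →ₗ[R] D) (hq : Function.Surjective q)
    (h : LinearMap.ker q ≤ LinearMap.ker g) : ∃ δ : B →ₗ[R] D, ∀ a, δ (q a) = g a := by
  let P' := q.quotKerEquivOfSurjective hq
  refine ⟨(LinearMap.ker q).liftQ g h ∘ₗ P'.symm.toLinearMap, fun n => ?_⟩
  have : P'.symm (q n) = Submodule.Quotient.mk n := by
    rw [LinearEquiv.symm_apply_eq]; rfl
  simp [this]

open Polynomial in
lemma solve_defect {W Q : Type u} [AddCommGroup Q] [Module R Q] [Module R[X] Q]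
    [IsScalarTower R R[X] Q] [AddCommGroup W] [Module R W] [Module R[X] W]
    [IsScalarTower R R[X] W] (hQ : Module.Injective R[X] Q) (δ : W →ₗ[R] Q) :
    ∃ κ : W →ₗ[R] Q, ∀ w, (X : R[X]) • κ w = δ w + κ ((X : R[X]) • w) := by
  let XQ : Q →ₗ[R] Q := (LinearMap.lsmul R[X] Q X).restrictScalars R
  let XW : W →ₗ[R] W := (LinearMap.lsmul R[X] W X).restrictScalars R
  let φ : Module.End R (Q × W) := 
    LinearMap.prod (XQ ∘ₗ LinearMap.fst R Q W + δ ∘ₗ LinearMap.snd R Q W) (XW ∘ₗ LinearMap.snd R Q W)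
  let of : (Q × W) ≃ₗ[R] Module.AEval' φ := Module.AEval'.of φ
  have hof : ∀ z, (X : R[X]) • of z = of (φ z) := fun z => Module.AEval'.X_smul_of φ z
  let j : Q →ₗ[R[X]] Module.AEval' φ := polyLin (of.toLinearMap ∘ₗ LinearMap.inl R Q W) (by
    intro a
    simp only [LinearMap.comp_apply, LinearEquiv.coe_coe]
    rw [hof]
    congr 1
    simp [φ, XQ])
  have hj : ∀ a, j a = of (a, 0) := fun a => rfl
  obtain ⟨ρ, hρ⟩ := hQ.out j (by
    intro a b hab
    rw [hj, hj] at hab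
    have := of.injective hab
    exact (Prod.ext_iff.mp this).1) LinearMap.id
  let κ : W →ₗ[R] Q := ρ.restrictScalars R ∘ₗ of.toLinearMap ∘ₗ LinearMap.inr R Q W
  have hκ0 : ∀ w, κ w = ρ (of (0, w)) := fun w => rfl
  have hκ : ∀ w, (X : R[X]) • κ w = δ w + κ ((X : R[X]) • w) := by
    intro w
    have e1 : φ (0, w) = (δ w, 0) + (0, (X : R[X]) • w) := by
      simp [φ, XW]
    have e2 := hρ (δ w)
    rw [hj] at e2
    rw [hκ0, ← map_smul, hof, e1, map_add, map_add, e2, hκ0]; rfl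
  exact ⟨κ, hκ⟩

open Polynomial in
lemma ext_aux {Q C M N W : Type u}
    [AddCommGroup Q] [Module R Q] [Module R[X] Q] [IsScalarTower R R[X] Q]
    [AddCommGroup C] [Module R C] [Module R[X] C] [IsScalarTower R R[X] C]
    [AddCommGroup M] [Module R M] [Module R[X] M] [IsScalarTower R R[X] M]
    [AddCommGroup N] [Module R N] [Module R[X] N] [IsScalarTower R R[X] N]
    [AddCommGroup W] [Module R W] [Module R[X] W] [IsScalarTower R R[X] W]
    (p : Q →ₗ[R[X]] C) (s : C →ₗ[R] Q) (hs : ∀ c, p (s c) = c)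
    (hQ : Module.Injective R[X] Q) (hQR : Module.Injective R Q)
    (f : M →ₗ[R[X]] N) (hf : Function.Injective f) (g : M →ₗ[R[X]] C)
    (q' : N →ₗ[R[X]] W) (hqs : Function.Surjective q') (hqk : LinearMap.ker q' = LinearMap.range f) :
    ∃ H : N →ₗ[R[X]] C, ∀ m, H (f m) = g m := by
  obtain ⟨h0, hh0⟩ := hQR.out (f.restrictScalars R) hf (s ∘ₗ g.restrictScalars R)
  obtain ⟨h, hh1⟩ : ∃ h : N →ₗ[R] C, ∀ n, h n = p (h0 n) := 
    ⟨(p.restrictScalars R) ∘ₗ h0, fun _ => rfl⟩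
  have hh : ∀ m, h (f m) = g m := fun m => by
    have := hh0 m
    simp only [LinearMap.restrictScalars_apply, LinearMap.comp_apply] at this
    rw [hh1, this, hs]
  obtain ⟨δ0, hδ0⟩ : ∃ δ0 : N →ₗ[R] C, ∀ n, δ0 n = (X : R[X]) • h n - h ((X : R[X]) • n) := 
   ⟨(LinearMap.lsmul R[X] C X).restrictScalars R ∘ₗ h -
    h ∘ₗ (LinearMap.lsmul R[X] N X).restrictScalars R, fun n => rfl⟩
  obtain ⟨q, hqq⟩ : ∃ q : N →ₗ[R] W, ∀ n, q n = q' n := ⟨q'.restrictScalars R, fun _ => rfl⟩ 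
  have hqX : ∀ n, q ((X : R[X]) • n) = (X : R[X]) • q n := fun n => by
    rw [hqq, hqq, map_smul]
  have hqs : Function.Surjective q := fun w => by
    obtain ⟨n, hn⟩ := hqs w
    exact ⟨n, by rw [hqq, hn]⟩
  have hqf : ∀ m, q (f m) = 0 := fun m => by
    rw [hqq]
    have : f m ∈ LinearMap.ker q' := hqk ▸ ⟨m, rfl⟩
    exact this
  have hker : LinearMap.ker q ≤ LinearMap.ker (s ∘ₗ δ0) := by
    intro n hn
    have : n ∈ LinearMap.range f := by
      rw [← hqk, LinearMap.mem_ker, ← hqq]; exact hn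
    obtain ⟨m, rfl⟩ := this
    rw [LinearMap.mem_ker, LinearMap.comp_apply, hδ0, ← f.map_smul, hh, hh, g.map_smul, sub_self,
      map_zero]
  obtain ⟨δ, hδ⟩ := factor_surj q _ hqs hker
  obtain ⟨κ, hκ⟩ := solve_defect hQ δ
  refine ⟨polyLin (h - p.restrictScalars R ∘ₗ κ ∘ₗ q) ?_, ?_⟩
  · intro n
    simp only [LinearMap.sub_apply, LinearMap.comp_apply, LinearMap.restrictScalars_apply]
    rw [hqX, smul_sub, ← p.map_smul, hκ, map_add, hδ, LinearMap.comp_apply, hs, hδ0]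
    abel
  · intro m
    change h (f m) - p (κ (q (f m))) = g m
    rw [hqf, hh, map_zero, map_zero, sub_zero]

open Polynomial in
lemma key_poly_aux {Y Q C : Type u} [AddCommGroup Y] [Module R Y]
    [Module R[X] Y] [IsScalarTower R R[X] Y] (hY : Module.Injective R Y) 
    [AddCommGroup Q] [Module R Q] [Module R[X] Q] [IsScalarTower R R[X] Q]
    [AddCommGroup C] [Module R C] [Module R[X] C] [IsScalarTower R R[X] C]
    (i : Y →ₗ[R[X]] Q) (p : Q →ₗ[R[X]] C) (hi : Function.Injective i)
    (hps : Function.Surjective p) (hpk : LinearMap.range i = LinearMap.ker p)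
    (hQ : Module.Injective R[X] Q) : Module.Injective R[X] C := by
  have hpi : ∀ y, p (i y) = 0 := fun y => by
    have : i y ∈ LinearMap.ker p := hpk ▸ ⟨y, rfl⟩
    exact this
  -- the `R`-linear section
  have hsec : ∃ s : C →ₗ[R] Q, ∀ c, p (s c) = c := by
    obtain ⟨r, hr⟩ := hY.out (i.restrictScalars R) hi LinearMap.id
    let e : Q →ₗ[R] Q := LinearMap.id - (i.restrictScalars R) ∘ₗ r
    have he : LinearMap.ker (p.restrictScalars R) ≤ LinearMap.ker e := by
      intro x hx
      have hx' : x ∈ LinearMap.range i := hpk ▸ hx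
      obtain ⟨y, rfl⟩ := hx'
      have := hr y
      simp only [LinearMap.restrictScalars_apply, LinearMap.id_apply] at this
      simp [e, this]
    obtain ⟨s, hs⟩ := factor_surj (p.restrictScalars R) e hps he
    refine ⟨s, fun c => ?_⟩
    obtain ⟨q, rfl⟩ := hps c
    have := hs q
    simp only [LinearMap.restrictScalars_apply] at this
    rw [this]
    simp [e, hpi]
  obtain ⟨s, hs⟩ := hsec
  have hQR : Module.Injective R Q := inj_restrict (B := R[X]) hQ
  constructor
  intro M N _ _ _ _ f hf g
  let _ : Module R M := Module.compHom M (algebraMap R R[X])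
  let _ : Module R N := Module.compHom N (algebraMap R R[X])
  have _ : IsScalarTower R R[X] M := IsScalarTower.of_algebraMap_smul fun _ _ => rfl
  have _ : IsScalarTower R R[X] N := IsScalarTower.of_algebraMap_smul fun _ _ => rfl
  exact ext_aux p s hs hQ hQR f hf g (LinearMap.range f).mkQ (Submodule.mkQ_surjective _)
    (Submodule.ker_mkQ _)

open Polynomial in
lemma key_poly {Y : Type u} [AddCommGroup Y] [Module R Y]
    [Module R[X] Y] [IsScalarTower R R[X] Y] (hY : Module.Injective R Y) : IDLE R[X] 1 Y := by
  obtain ⟨Q, _, _, i, hi, hQ⟩ := exists_inj_embed (R := R[X]) Y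
  refine ⟨Q, _, _, Q ⧸ LinearMap.range i, _, _, i, (LinearMap.range i).mkQ, hi,
      Submodule.mkQ_surjective _, (Submodule.ker_mkQ _).symm, hQ, ?_⟩
  let _ : Module R Q := Module.compHom Q (algebraMap R R[X])
  have _ : IsScalarTower R R[X] Q := IsScalarTower.of_algebraMap_smul fun _ _ => rfl
  exact key_poly_aux hY i (LinearMap.range i).mkQ hi (Submodule.mkQ_surjective _)
    (Submodule.ker_mkQ _).symm hQ

end basic

section polyc
variable {R : Type u} [CommRing R]

lemma coc_shift' {N E C : Type u} [AddCommGroup N] [Module R N] [AddCommGroup E] [Module R E]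
    [AddCommGroup C] [Module R C] (i : N →ₗ[R] E) (p : E →ₗ[R] C)
    (hi : Function.Injective i) (hp : Function.Surjective p)
    (hip : LinearMap.range i = LinearMap.ker p)
    {M : ModuleCat.{u} R} (P : ProjectiveResolution M) (n : ℕ)
    (hE : CocyZ P (ModuleCat.of R E) (n+1)) (h : CocyZ P (ModuleCat.of R C) n) :
    CocyZ P (ModuleCat.of R N) (n+1) := by
  have hpi : ∀ x, p (i x) = 0 := fun x => by
    have : i x ∈ LinearMap.ker p := hip ▸ ⟨x, rfl⟩
    exact this
  intro g hg
  obtain ⟨e, he⟩ := hE (ModuleCat.ofHom (i ∘ₗ g.hom)) (by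
    ext x
    have := congrArg (fun f => f x) hg
    exact (congrArg i this).trans (map_zero i))
  have he' : ∀ x, e (P.complex.d (n+2) (n+1) x) = i (g x) := 
    fun x => congrArg (fun f => f x) he
  obtain ⟨l, hl⟩ := h (ModuleCat.ofHom (p ∘ₗ e.hom)) (by
    ext x
    change p (e (P.complex.d (n+2) (n+1) x)) = 0
    rw [he', hpi])
  have hl' : ∀ x, l (P.complex.d (n+1) n x) = p (e x) := 
    fun x => congrArg (fun f => f x) hl
  obtain ⟨G, hG⟩ := Module.projective_lifting_property p l.hom hp
  have hG' : ∀ x, p (G x) = l x := fun x => LinearMap.congr_fun hG x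
  obtain ⟨k, hk⟩ := lift_ker i p hi hip (e.hom - G ∘ₗ (P.complex.d (n+1) n).hom) (by
    ext x
    change p (e x - G (P.complex.d (n+1) n x)) = 0
    rw [map_sub, hG', hl', sub_self])
  refine ⟨ModuleCat.ofHom k, ?_⟩
  ext x
  apply hi
  have := LinearMap.congr_fun hk (P.complex.d (n+2) (n+1) x)
  refine this.trans ?_
  change e (P.complex.d (n+2) (n+1) x) - G (P.complex.d (n+1) n (P.complex.d (n+2) (n+1) x)) = _
  rw [dcomp, he', map_zero, sub_zero]

lemma IDLE_two_three {N E C : Type u} [AddCommGroup N] [Module R N] [AddCommGroup E] [Module R E]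
    [AddCommGroup C] [Module R C] (i : N →ₗ[R] E) (p : E →ₗ[R] C)
    (hi : Function.Injective i) (hp : Function.Surjective p)
    (hip : LinearMap.range i = LinearMap.ker p) (n : ℕ)
    (hE : IDLE R 1 E) (hC : IDLE R (n+1) C) : IDLE R (n+2) N := by
  apply IDLE_of_coc
  intro M P k hk
  obtain ⟨k, rfl⟩ : ∃ l, k = l + 1 := ⟨k - 1, by omega⟩
  exact coc_shift' i p hi hp hip P k (coc_of_IDLE 1 E hE M P _ (by omega)) 
    (coc_of_IDLE _ C hC M P _ (by omega))

open Polynomial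

lemma X_smul_coeff {M : Type u} [AddCommGroup M] [Module R M] (x : PolynomialModule R M) (n : ℕ) :
    ((X : R[X]) • x).coeff n = if 1 ≤ n then x.coeff (n-1) else 0 := by
  have := PolynomialModule.monomial_smul_apply 1 (1 : R) x n
  rw [← Polynomial.X] at this
  simpa using this

/-- functoriality of `M[X]`. -/
def pmap {M N : Type u} [AddCommGroup M] [Module R M] [AddCommGroup N] [Module R N]
    (f : M →ₗ[R] N) : PolynomialModule R M →ₗ[R[X]] PolynomialModule R N :=
  polyLin (PolynomialModule.map R f) (by
    intro a
    apply PolynomialModule.ext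
    ext n
    rw [X_smul_coeff]
    change f (((X : R[X]) • a).coeff n) = if 1 ≤ n then f (a.coeff (n-1)) else 0
    rw [X_smul_coeff]
    split_ifs <;> simp)

lemma pmap_coeff {M N : Type u} [AddCommGroup M] [Module R M] [AddCommGroup N] [Module R N]
    (f : M →ₗ[R] N) (x : PolynomialModule R M) (n : ℕ) : (pmap f x).coeff n = f (x.coeff n) := rfl

lemma IDLE_poly [IsNoetherianRing R] (n : ℕ) : ∀ {M : Type u} [AddCommGroup M] [Module R M]
    (_ : IDLE R n M), IDLE R[X] (n+1) (PolynomialModule R M) := by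
  have h0 : ∀ (E : Type u) [AddCommGroup E] [Module R E] (_ : Module.Injective R E),
      IDLE R[X] 1 (PolynomialModule R E) := by
    intro E _ _ h
    apply key_poly
    exact inj_of_linearEquiv (PolynomialModule.coeffLinearEquiv R R).symm (finsupp_inj E h)
  induction n with
  | zero => intro M _ _ h; exact h0 M h
  | succ n ih =>
    rintro M _ _ ⟨E, _, _, C, _, _, i, p, hi, hp, hip, hE, hC⟩
    refine IDLE_two_three (pmap i) (pmap p) ?_ ?_ ?_ n (h0 E hE) (ih hC)
    · intro x y hxy
      apply PolynomialModule.ext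
      ext k
      apply hi
      rw [← pmap_coeff, hxy, pmap_coeff]
    · intro y
      obtain ⟨x, hx⟩ := Finsupp.mapRange_surjective p (map_zero p) hp y.coeff
      refine ⟨PolynomialModule.ofCoeff R x, ?_⟩
      apply PolynomialModule.ext
      rw [← hx]; rfl
    · ext y
      constructor
      · rintro ⟨x, rfl⟩
        apply PolynomialModule.ext
        ext k
        rw [pmap_coeff, pmap_coeff]
        have : i (x.coeff k) ∈ LinearMap.ker p := hip ▸ ⟨_, rfl⟩
        exact this
      · intro hy
        have : ∀ k, ∃ m, i m = y.coeff k := fun k => by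
          have : y.coeff k ∈ LinearMap.range i := by
            rw [hip, LinearMap.mem_ker, ← pmap_coeff, LinearMap.mem_ker.mp hy]; rfl
          exact this
        choose m hm using this
        refine ⟨PolynomialModule.ofCoeff R (Finsupp.onFinset y.coeff.support m ?_), ?_⟩
        · intro k hk
          rw [Finsupp.mem_support_iff, ← hm]
          intro h
          exact hk (hi (h.trans (map_zero i).symm))
        · apply PolynomialModule.ext
          ext k
          rw [pmap_coeff]
          exact hm k

theorem gor_poly (h : IsGorensteinRing R) : IsGorensteinRing R[X] := by
  have hN := h.1
  have h' := (gor'_of_gor h).2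
  apply gor_of_loc
  intro Q hQ
  let q : Ideal R := Q.comap C
  have hmem : ∀ {s}, s ∉ q → (C s : R[X]) ∉ Q := fun hs => hs
  obtain ⟨n, hn⟩ := h' q
  let L := Localization.AtPrime q
  let j : R[X] →ₗ[R[X]] PolynomialModule R L := LinearMap.toSpanSingleton _ _ (PolynomialModule.single R 0 1)
  have hj : ∀ b k, (j b).coeff k = algebraMap R L (b.coeff k) := by
    intro b k
    simp [j, PolynomialModule.smul_single_apply, Algebra.smul_def]
  refine ⟨n+1, _, _, _, j, IDLE_poly n hn, ?_, ?_⟩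
  · intro x
    induction x using PolynomialModule.induction_linear with
    | zero => exact ⟨1, fun h => hQ.ne_top ((Ideal.eq_top_iff_one _).mpr h), 0, by simp⟩
    | add x y hx hy =>
      obtain ⟨s, hs, b, hb⟩ := hx
      obtain ⟨t, ht, c, hc⟩ := hy
      refine ⟨s * t, fun h => (hQ.mem_or_mem h).elim hs ht, t * b + s * c, ?_⟩
      rw [map_add, smul_add, ← smul_eq_mul, ← smul_eq_mul, map_smul, map_smul, hb, hc, smul_smul, 
        smul_smul, mul_comm t s]
    | single k m =>
      obtain ⟨⟨a, s⟩, has⟩ := IsLocalization.surj q.primeCompl m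
      refine ⟨C s, hmem s.2, monomial k a, ?_⟩
      have : (C (s : R) : R[X]) • PolynomialModule.single R k m = 
        (s : R) • PolynomialModule.single R k m := algebraMap_smul R[X] _ _
      rw [this, ← PolynomialModule.single_smul]
      simp only [j, LinearMap.toSpanSingleton_apply, PolynomialModule.monomial_smul_single, add_zero]
      congr 1
      rw [Algebra.smul_def, Algebra.smul_def, mul_comm _ m, has, mul_one]
  · intro b hb
    have : ∀ k, ∃ s : q.primeCompl, s * b.coeff k = 0 := by
      intro k
      have := hj b k
      rw [hb] at this
      exact (IsLocalization.map_eq_zero_iff q.primeCompl L _).mp this.symm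
    choose s hs using this
    refine ⟨C ((∏ k ∈ b.support, s k : q.primeCompl) : R), hmem (∏ k ∈ b.support, s k).2, ?_⟩
    ext k
    rw [coeff_C_mul, coeff_zero]
    by_cases hk : k ∈ b.support
    · rw [← Finset.prod_erase_mul _ _ hk, Submonoid.coe_mul, mul_assoc, hs, mul_zero]
    · rw [notMem_support_iff.mp hk, mul_zero]

end polyc

/-- Frobenius data for an algebra -/
def Frob (S B : Type*) [CommRing S] [CommRing B] [Algebra S B] : Prop :=
  ∃ (n : ℕ) (e e' : Fin n → B) (τ : B →ₗ[S] S), (∀ b, ∑ i, τ (b * e' i) • e i = b) ∧ 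
    (∀ b, ∑ i, τ (b * e i) • e' i = b)

lemma Frob.of_algEquiv {S B B' : Type*} [CommRing S] [CommRing B] [Algebra S B] [CommRing B']
    [Algebra S B'] (φ : B ≃ₐ[S] B') (h : Frob S B) : Frob S B' := by
  obtain ⟨n, e, e', τ, h1, h2⟩ := h
  refine ⟨n, φ ∘ e, φ ∘ e', τ ∘ₗ φ.symm.toLinearMap, fun b => ?_, fun b => ?_⟩
  · have := congrArg φ (h1 (φ.symm b))
    simpa using this
  · have := congrArg φ (h2 (φ.symm b))
    simpa using this

open TensorProduct in
lemma Frob.baseChange {S S' A : Type*} [CommRing S] [CommRing A] [Algebra S A] [CommRing S']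
    [Algebra S S'] (h : Frob S A) : Frob S' (S' ⊗[S] A) := by
  obtain ⟨n, e, e', τ, h1, h2⟩ := h
  let τ' : S' ⊗[S] A →ₗ[S'] S' := 
    (AlgebraTensorModule.rid S S' S').toLinearMap ∘ₗ τ.baseChange S'
  have hτ : ∀ s a, τ' (s ⊗ₜ a) = τ a • s := by
    intro s a; simp [τ']
  have key : ∀ e e' : Fin n → A, (∀ b, ∑ i, τ (b * e' i) • e i = b) → 
      ∀ b, ∑ i, τ' (b * (1 ⊗ₜ e' i)) • (1 ⊗ₜ[S] e i : S' ⊗[S] A) = b := by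
    intro e e' h b
    induction b using TensorProduct.induction_on with
    | zero => simp
    | add x y hx hy => simp only [add_mul, map_add, add_smul, Finset.sum_add_distrib, hx, hy]
    | tmul s a =>
      simp only [Algebra.TensorProduct.tmul_mul_tmul, mul_one, hτ]
      conv_rhs => rw [← h a, tmul_sum]
      refine Finset.sum_congr rfl fun i _ => ?_
      rw [smul_tmul', smul_eq_mul, mul_one, ← smul_tmul]
  exact ⟨n, _, _, τ', key e e' h1, key e' e h2⟩

section frob
open TensorProduct
variable {S B : Type u} [CommRing S] [CommRing B] [Algebra S B]

lemma Frob.projective (h : Frob S B) : Module.Projective S B := by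
  obtain ⟨n, e, e', τ, h1, h2⟩ := h
  let i : B →ₗ[S] (Fin n → S) := LinearMap.pi fun k => τ ∘ₗ (LinearMap.mulRight S (e' k))
  let p : (Fin n → S) →ₗ[S] B := Fintype.linearCombination S e
  refine Module.Projective.of_split i p ?_
  ext b
  simpa [p, i, Fintype.linearCombination_apply] using h1 b

lemma Frob.inj (h : Frob S B) {E : Type u} [AddCommGroup E] [Module S E]
    (hE : Module.Injective S E) : Module.Injective B (B ⊗[S] E) := by
  obtain ⟨n, e, e', τ, h1, h2⟩ := h
  constructor
  intro X Y _ _ _ _ f hf g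
  let _ : Module S X := Module.compHom X (algebraMap S B)
  let _ : Module S Y := Module.compHom Y (algebraMap S B)
  have _ : IsScalarTower S B X := IsScalarTower.of_algebraMap_smul fun _ _ => rfl
  have _ : IsScalarTower S B Y := IsScalarTower.of_algebraMap_smul fun _ _ => rfl
  let T : B ⊗[S] E →ₗ[S] E := (TensorProduct.lid S E).toLinearMap ∘ₗ τ.rTensor E
  have hT : ∀ b x, T (b ⊗ₜ x) = τ b • x := fun b x => by simp [T]
  have hT2 : ∀ z, ∑ i, e i ⊗ₜ T (e' i • z) = z := by
    intro z
    induction z using TensorProduct.induction_on with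
    | zero => simp
    | add x y hx hy => simp only [smul_add, map_add, tmul_add, Finset.sum_add_distrib, hx, hy]
    | tmul b x =>
      simp only [smul_tmul', hT, smul_eq_mul, ← smul_tmul]
      rw [← sum_tmul]
      congr 1
      conv_rhs => rw [← h1 b]
      simp [mul_comm]
  obtain ⟨k, hk⟩ := hE.out (f.restrictScalars S) hf (T ∘ₗ g.restrictScalars S)
  have hk' : ∀ x, k (f x) = T (g x) := hk
  refine ⟨{ toFun := fun y => ∑ i, e i ⊗ₜ k (e' i • y), map_add' := ?_, map_smul' := ?_ }, ?_⟩
  · intro x y; simp only [smul_add, map_add, tmul_add, Finset.sum_add_distrib]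
  · intro c y
    simp only [RingHom.id_apply, Finset.smul_sum, smul_tmul', smul_eq_mul]
    have e1 : ∀ i, (c * e i) ⊗ₜ[S] k (e' i • y) = 
        ∑ j, e j ⊗ₜ[S] k ((τ (c * e' j * e i) • e' i) • y) := by
      intro i
      conv_lhs => rw [← h1 (c * e i), sum_tmul]
      refine Finset.sum_congr rfl fun j _ => ?_
      rw [smul_tmul, ← map_smul, smul_assoc, mul_right_comm]
    simp only [e1]
    rw [Finset.sum_comm]
    refine Finset.sum_congr rfl fun j _ => ?_
    rw [← tmul_sum, ← map_sum, ← Finset.sum_smul, h2, smul_smul, mul_comm]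
  · intro x
    change ∑ i, e i ⊗ₜ k (e' i • f x) = g x
    simp only [← map_smul, hk']
    simp only [map_smul, hT2]

lemma Frob.IDLE (h : Frob S B) (n : ℕ) : ∀ {M : Type u} [AddCommGroup M] [Module S M]
    (_ : IDLE S n M), IDLE B n (B ⊗[S] M) := by
  have := h.projective
  induction n with
  | zero => intro M _ _ hM; exact h.inj hM
  | succ n ih =>
    rintro M _ _ ⟨E, _, _, C, _, _, i, p, hi, hp, hip, hE, hC⟩
    refine ⟨_, _, _, _, _, _, i.baseChange B, p.baseChange B, ?_, ?_, ?_, h.inj hE, ih hC⟩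
    · exact Module.Flat.lTensor_preserves_injective_linearMap i hi
    · exact LinearMap.lTensor_surjective B hp
    · have := lTensor_exact B (LinearMap.exact_iff.mpr hip.symm) hp
      ext x
      exact (this x).symm

theorem Frob.gor (h : Frob S B) [IsNoetherianRing B] (hS : IsGorensteinRing S) :
    IsGorensteinRing B := by
  have h' := (gor'_of_gor hS).2
  apply gor_of_loc
  intro Q hQ
  let q : Ideal S := Q.comap (algebraMap S B)
  have hmem : ∀ {s}, s ∉ q → algebraMap S B s ∉ Q := fun hs => hs
  obtain ⟨n, hn⟩ := h' q
  let L := Localization.AtPrime q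
  let j : B →ₗ[B] B ⊗[S] L := LinearMap.toSpanSingleton _ _ (1 ⊗ₜ 1)
  have hj : ∀ b, j b = b ⊗ₜ 1 := by
    intro b
    simp [j, smul_tmul']
  refine ⟨n, _, _, _, j, h.IDLE n hn, ?_, ?_⟩
  · intro x
    induction x using TensorProduct.induction_on with
    | zero => exact ⟨1, fun h => hQ.ne_top ((Ideal.eq_top_iff_one _).mpr h), 0, by simp⟩
    | add x y hx hy =>
      obtain ⟨s, hs, b, hb⟩ := hx
      obtain ⟨t, ht, c, hc⟩ := hy
      refine ⟨s * t, fun h => (hQ.mem_or_mem h).elim hs ht, t * b + s * c, ?_⟩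
      rw [map_add, smul_add, ← smul_eq_mul, ← smul_eq_mul, map_smul, map_smul, hb, hc, smul_smul, 
        smul_smul, mul_comm t s]
    | tmul b m =>
      obtain ⟨⟨a, s⟩, has⟩ := IsLocalization.surj q.primeCompl m
      refine ⟨algebraMap S B s, hmem s.2, a • b, ?_⟩
      rw [hj, algebraMap_smul, ← tmul_smul, smul_tmul]
      congr 1
      rw [Algebra.smul_def, Algebra.smul_def, mul_comm _ m, has, mul_one]
  · intro b hb
    obtain ⟨n, e, e', τ, h1, h2⟩ := h
    have : ∀ k, ∃ s : q.primeCompl, s * τ (b * e' k) = 0 := by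
      intro k
      have := congrArg ((TensorProduct.lid S L).toLinearMap ∘ₗ 
        (τ ∘ₗ (LinearMap.mulRight S (e' k))).rTensor L) ((hj b).symm.trans hb)
      simp only [LinearMap.comp_apply, LinearMap.rTensor_tmul, map_zero, LinearEquiv.coe_coe, 
        TensorProduct.lid_tmul, LinearMap.mulRight_apply, Algebra.smul_def, mul_one] at this
      exact (IsLocalization.map_eq_zero_iff q.primeCompl L _).mp this
    choose s hs using this
    refine ⟨algebraMap S B ((∏ k, s k : q.primeCompl) : S), hmem (∏ k, s k).2, ?_⟩
    rw [← Algebra.smul_def, ← h1 b, Finset.smul_sum]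
    refine Finset.sum_eq_zero fun k _ => ?_
    rw [← Finset.prod_erase_mul _ _ (Finset.mem_univ k), Submonoid.coe_mul, smul_smul, mul_assoc, 
      hs, mul_zero, zero_smul]

end frob

lemma Frob.self_of_equiv {S B : Type*} [CommRing S] [CommRing B] [Algebra S B] 
    (e : S ≃ₐ[S] B) : Frob S B := by
  refine Frob.of_algEquiv e ⟨1, fun _ => 1, fun _ => 1, LinearMap.id, ?_, ?_⟩ <;> simp

lemma gor_ringEquiv {A B : Type u} [CommRing A] [CommRing B] (e : A ≃+* B)
    (h : IsGorensteinRing A) : IsGorensteinRing B := by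
  have := h.1
  have : IsNoetherianRing B := isNoetherianRing_of_ringEquiv A e
  let _ : Algebra A B := e.toRingHom.toAlgebra
  exact (Frob.self_of_equiv (AlgEquiv.ofRingEquiv (f := e) fun _ => rfl : A ≃ₐ[A] B)).gor h

theorem gor_mvPoly (R : Type u) [CommRing R] (h : IsGorensteinRing R) (N : ℕ) :
    IsGorensteinRing (MvPolynomial (Fin N) R) := by
  induction N with
  | zero => exact gor_ringEquiv (MvPolynomial.isEmptyRingEquiv R (Fin 0)).symm h
  | succ n ih => exact gor_ringEquiv (MvPolynomial.finSuccEquiv R n).symm.toRingEquiv (gor_poly ih)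

section ufd
variable {S A : Type*} [CommRing S] [IsDomain S] [CommRing A] [IsDomain A] [Algebra S A]
  [Module.Free S A] [Module.Finite S A]

lemma nondeg {τ : A →ₗ[S] S} {a : A} (ha : a ≠ 0) (h : ∀ x, τ (a * x) = 0) : τ = 0 := by
  have hi : IsIntegral S a := Algebra.IsIntegral.isIntegral a
  obtain ⟨m, hm, c, hc⟩ := hi.isAlgebraic.exists_nonzero_dvd (mem_nonZeroDivisors_of_ne_zero ha)
  ext x
  have h1 := h (c * x)
  rw [← mul_assoc, ← hc, ← Algebra.smul_def, map_smul, smul_eq_mul] at h1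
  simpa [hm] using h1

lemma rank_one {τ : A →ₗ[S] S} (hτ : τ ≠ 0) (σ : A →ₗ[S] S) :
    ∃ (a c : A), a ≠ 0 ∧ ∀ x, σ (a * x) = τ (c * x) := by
  classical
  let b := Module.Free.chooseBasis S A
  let M : Matrix _ _ S := Matrix.of fun i j => τ (b j * b i)
  have hM : M.det ≠ 0 := by
    intro h0
    obtain ⟨v, hv, hMv⟩ := Matrix.exists_mulVec_eq_zero_iff.mpr h0
    have hc : ∑ j, v j • b j ≠ 0 := by
      intro h
      apply hv
      funext j
      exact Fintype.linearIndependent_iff.mp b.linearIndependent v h j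
    apply hτ
    apply nondeg hc
    have : τ ∘ₗ LinearMap.mulLeft S (∑ j, v j • b j) = 0 := by
      apply b.ext
      intro i
      have := congrFun hMv i
      simp only [Matrix.mulVec, dotProduct, M, Matrix.of_apply, Pi.zero_apply] at this
      simp only [LinearMap.comp_apply, LinearMap.mulLeft_apply, Finset.sum_mul, map_sum, 
        smul_mul_assoc, map_smul, smul_eq_mul, LinearMap.zero_apply]
      rw [← this]
      exact Finset.sum_congr rfl fun j _ => mul_comm _ _
    exact fun x => LinearMap.congr_fun this x
  let s := fun i => σ (b i)
  let v := M.adjugate.mulVec s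
  have hv : M.mulVec v = M.det • s := by
    rw [Matrix.mulVec_mulVec, Matrix.mul_adjugate, Matrix.smul_mulVec, Matrix.one_mulVec]
  refine ⟨algebraMap S A M.det, ∑ j, v j • b j, ?_, ?_⟩
  · rw [Ne, FaithfulSMul.algebraMap_eq_zero_iff]; exact hM
  · have : σ ∘ₗ LinearMap.mulLeft S (algebraMap S A M.det) = 
        τ ∘ₗ LinearMap.mulLeft S (∑ j, v j • b j) := by
      apply b.ext
      intro i
      have := congrFun hv i
      simp only [Matrix.mulVec, dotProduct, M, Matrix.of_apply, Pi.smul_apply, s, 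
        smul_eq_mul] at this
      simp only [LinearMap.comp_apply, LinearMap.mulLeft_apply, Finset.sum_mul, map_sum, 
        smul_mul_assoc, map_smul, smul_eq_mul, ← Algebra.smul_def]
      rw [← this]
      exact Finset.sum_congr rfl fun j _ => mul_comm _ _
    exact fun x => LinearMap.congr_fun this x

lemma ufd_div [UniqueFactorizationMonoid S] (I : Ideal S) 
    (hI : ∀ q : S, Prime q → ∃ n ∈ I, ¬ q ∣ n) (m : S) (hm : m ≠ 0) : 
    ∀ y, (∀ n ∈ I, m ∣ n * y) → m ∣ y := by
  induction m using UniqueFactorizationMonoid.induction_on_prime with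
  | h₁ => exact absurd rfl hm
  | h₂ u hu => intro y _; exact hu.dvd
  | h₃ a q ha hq ih =>
    intro y hy
    obtain ⟨n, hn, hqn⟩ := hI q hq
    obtain ⟨y', rfl⟩ := (hq.dvd_or_dvd ((dvd_mul_right q a).trans (hy n hn))).resolve_left hqn
    refine mul_dvd_mul_left q (ih ha y' fun n hn => ?_)
    have := hy n hn
    rw [mul_left_comm] at this
    exact (mul_dvd_mul_iff_left hq.ne_zero).mp this

lemma div_prime [UniqueFactorizationMonoid S] (τ σ : A →ₗ[S] S) (b p : A) (hp : Prime p) 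
    (hb : ¬ p ∣ b) (h : ∀ x, τ (b * x) = σ (p * x)) : 
    ∃ τ' : A →ₗ[S] S, ∀ x, τ x = τ' (p * x) := by
  have hi : IsIntegral S p := Algebra.IsIntegral.isIntegral p
  obtain ⟨m, hm, p', hpp⟩ := hi.isAlgebraic.exists_nonzero_dvd 
    (mem_nonZeroDivisors_of_ne_zero hp.ne_zero)
  have key : ∀ x, m ∣ τ (p' * x) := by
    intro x
    apply ufd_div ((Ideal.span {b, p}).comap (algebraMap S A)) _ m hm
    · intro n hn
      rw [Ideal.mem_comap, Ideal.mem_span_pair] at hn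
      obtain ⟨u, v, huv⟩ := hn
      refine ⟨σ (x * u) + τ (x * v), ?_⟩
      have e1 : n * τ (p' * x) = τ (algebraMap S A n * (p' * x)) := by
        rw [← Algebra.smul_def, map_smul, smul_eq_mul]
      have e2 : algebraMap S A n * (p' * x) = b * (p' * x * u) + (p * p') * (x * v) := by
        rw [← huv]; ring
      rw [e1, e2, map_add, h, ← hpp, ← Algebra.smul_def, map_smul, smul_eq_mul, mul_add]
      congr 1
      have e3 : p * (p' * x * u) = algebraMap S A m * (x * u) := by rw [hpp]; ring
      rw [e3, ← Algebra.smul_def, map_smul, smul_eq_mul]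
    · intro q hq
      by_contra hcon
      push Not at hcon
      have hle : (Ideal.span {b, p}).comap (algebraMap S A) ≤ Ideal.span {q} := fun n hn => 
        Ideal.mem_span_singleton.mpr (hcon n hn)
      have hqp : (Ideal.span {q}).IsPrime := (Ideal.span_singleton_prime hq.ne_zero).mpr hq
      obtain ⟨Q, hQ, hQp, hQc⟩ := Ideal.exists_ideal_over_prime_of_isIntegral _ _ hle
      have hP : (Ideal.span {p}).IsPrime := (Ideal.span_singleton_prime hp.ne_zero).mpr hp
      have hPQ : Ideal.span {p} ≤ Q := le_trans (Ideal.span_mono (by simp)) hQ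
      have hlt := Ideal.comap_lt_comap_of_integral_mem_sdiff hPQ (x := b) 
        ⟨hQ (Ideal.subset_span (by simp)), fun hh => hb (Ideal.mem_span_singleton.mp hh)⟩
        (Algebra.IsIntegral.isIntegral (R := S) b)
      rw [hQc] at hlt
      have hne : (Ideal.span {p}).comap (algebraMap S A) ≠ ⊥ := by
        intro hbot
        have : m ∈ (Ideal.span {p}).comap (algebraMap S A) := by
          rw [Ideal.mem_comap, hpp]; exact Ideal.mul_mem_right _ _ (Ideal.mem_span_singleton_self p)
        rw [hbot] at this
        exact hm this
      obtain ⟨π, hπ, hπp⟩ := Ideal.IsPrime.exists_mem_prime_of_ne_bot 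
        (inferInstance : ((Ideal.span {p}).comap (algebraMap S A)).IsPrime) hne
      have hdv : q ∣ π := Ideal.mem_span_singleton.mp (hlt.le hπ)
      have hass := hq.associated_of_dvd hπp hdv
      apply not_le_of_gt hlt
      rw [Ideal.span_singleton_le_iff_mem]
      exact (Ideal.mem_iff_of_associated hass).mpr hπ
  choose g hg using key
  refine ⟨{ toFun := g, map_add' := ?_, map_smul' := ?_ }, ?_⟩
  · intro x y
    apply mul_left_cancel₀ hm
    rw [← hg, mul_add, map_add, hg, hg, mul_add]
  · intro r x
    apply mul_left_cancel₀ hm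
    rw [← hg, mul_smul_comm, map_smul, hg, RingHom.id_apply, smul_eq_mul, smul_eq_mul, 
      mul_left_comm]
  · intro x
    apply mul_left_cancel₀ hm
    change _ = m * g (p * x)
    rw [← hg, ← mul_assoc, mul_comm p' p, ← hpp, ← Algebra.smul_def, map_smul, smul_eq_mul]

theorem frob_of_ufd [IsNoetherianRing S] [UniqueFactorizationMonoid S] 
    [UniqueFactorizationMonoid A] : Frob S A := by
  classical
  let act : (A →ₗ[S] S) → (A →ₗ[S] (A →ₗ[S] S)) := fun τ => 
    (LinearMap.mul S A).compr₂ τ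
  have hact : ∀ τ a x, act τ a x = τ (a * x) := fun _ _ _ => rfl
  obtain ⟨n, ⟨b⟩⟩ : ∃ n, Nonempty (Module.Basis (Fin n) S A) := 
    ⟨_, ⟨Module.finBasis S A⟩⟩
  have hne : ∃ τ : A →ₗ[S] S, τ ≠ 0 := by
    have : Nonempty (Fin n) := b.index_nonempty
    obtain ⟨i⟩ := this
    refine ⟨b.coord i, fun h => ?_⟩
    have := LinearMap.congr_fun h (b i)
    simp at this
  have hNo : IsNoetherian S (A →ₗ[S] S) := inferInstance
  obtain ⟨N, ⟨τ, hτ, rfl⟩, hmax⟩ := set_has_maximal_iff_noetherian.mpr hNo 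
    {N | ∃ τ : A →ₗ[S] S, τ ≠ 0 ∧ LinearMap.range (act τ) = N} 
    (by obtain ⟨τ, h⟩ := hne; exact ⟨_, τ, h, rfl⟩)
  have hprim : ∀ (p : A) (τ' : A →ₗ[S] S), (∀ x, τ x = τ' (p * x)) → IsUnit p := by
    intro p τ' h
    have hτ' : τ' ≠ 0 := by
      rintro rfl
      exact hτ (LinearMap.ext h)
    have hle : LinearMap.range (act τ) ≤ LinearMap.range (act τ') := by
      rintro _ ⟨a, rfl⟩
      refine ⟨p * a, LinearMap.ext fun x => ?_⟩
      rw [hact, hact, h, mul_assoc]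
    have heq := eq_of_le_of_not_lt hle (hmax _ ⟨τ', hτ', rfl⟩)
    have : τ' ∈ LinearMap.range (act τ) := by
      rw [heq]; exact ⟨1, LinearMap.ext fun x => by rw [hact, one_mul]⟩
    obtain ⟨a, ha⟩ := this
    have h2 : ∀ x, τ' ((1 - p * a) * x) = 0 := by
      intro x
      rw [sub_mul, one_mul, map_sub, mul_assoc, ← h, ← hact, ha, sub_self]
    by_contra hu
    apply hτ'
    refine nondeg ?_ h2
    intro h0
    exact hu (IsUnit.of_mul_eq_one a (sub_eq_zero.mp h0).symm)
  have hsurj : ∀ σ : A →ₗ[S] S, ∃ c, ∀ x, σ x = τ (c * x) := by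
    intro σ
    obtain ⟨a, c, ha, hac⟩ := rank_one hτ σ
    obtain ⟨a', c', d, hrel, rfl, rfl⟩ := 
      UniqueFactorizationMonoid.exists_reduced_factors a ha c
    have hd : d ≠ 0 := left_ne_zero_of_mul ha
    have ha' : a' ≠ 0 := right_ne_zero_of_mul ha
    have h1 : ∀ x, σ (a' * x) = τ (c' * x) := by
      have : act σ a' - act τ c' = 0 := by
        refine nondeg hd fun x => ?_
        rw [LinearMap.sub_apply, hact, hact, sub_eq_zero]
        have := hac x
        rw [show a' * (d * x) = d * a' * x by ring, this]
        congr 1; ring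
      intro x
      exact LinearMap.congr_fun (sub_eq_zero.mp this) x
    have hu : IsUnit a' := by
      by_contra hu
      obtain ⟨p, hp, r, rfl⟩ := WfDvdMonoid.exists_irreducible_factor hu ha'
      have hpp : Prime p := UniqueFactorizationMonoid.irreducible_iff_prime.mp hp
      have hpc : ¬ p ∣ c' := fun h => hp.not_isUnit (hrel (dvd_mul_right p r) h)
      obtain ⟨τ', hτ'⟩ := div_prime τ (act σ r) c' p hpp hpc (by
        intro x
        rw [← h1, hact]
        congr 1; ring)
      exact hp.not_isUnit (hprim p τ' hτ')
    obtain ⟨u, rfl⟩ := hu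
    refine ⟨c' * ↑u⁻¹, fun x => ?_⟩
    have := h1 (↑u⁻¹ * x)
    rw [← mul_assoc, Units.mul_inv, one_mul] at this
    rw [this, mul_assoc]
  choose c hc using fun i => hsurj (b.coord i)
  have H1 : ∀ x, ∑ i, τ (x * c i) • b i = x := by
    intro x
    conv_rhs => rw [← b.sum_repr x]
    refine Finset.sum_congr rfl fun i _ => ?_
    rw [mul_comm x, ← hc]; rfl
  refine ⟨n, b, c, τ, H1, ?_⟩
  intro x
  have hz : ∀ y, τ (y * (∑ i, τ (x * b i) • c i)) = τ (y * x) := by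
    intro y
    conv_rhs => rw [← H1 y]
    simp only [Finset.mul_sum, Finset.sum_mul, map_sum, mul_smul_comm, smul_mul_assoc, map_smul, 
      smul_eq_mul]
    exact Finset.sum_congr rfl fun i _ => by rw [mul_comm (b i) x, mul_comm]
  rw [← sub_eq_zero, ← H1 (∑ i, τ (x * b i) • c i - x)]
  refine Finset.sum_eq_zero fun i _ => ?_
  rw [sub_mul, map_sub, mul_comm _ (c i), hz, mul_comm x, sub_self, zero_smul]

end ufd

/-! ### Part III a: an abstract straightening-law machine -/

/-- A polynomial is standard if every monomial is supported on a chain. -/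
def Std {σ : Type} [PartialOrder σ] (q : MvPolynomial σ ℤ) : Prop :=
  ∀ m ∈ q.support, ∀ a ∈ m.support, ∀ b ∈ m.support, a ≤ b ∨ b ≤ a

/-- The sub-sum of a polynomial on the monomials satisfying a predicate. -/
def part {σ : Type} (q : MvPolynomial σ ℤ) (C : (σ →₀ ℕ) → Prop) : MvPolynomial σ ℤ :=
  open Classical in ∑ m ∈ q.support with C m, MvPolynomial.monomial m (q.coeff m)

theorem coeff_part {σ : Type} (q : MvPolynomial σ ℤ) (C : (σ →₀ ℕ) → Prop) (m : σ →₀ ℕ) :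
    (part q C).coeff m = open Classical in if C m then q.coeff m else 0 := by
  classical
  unfold part
  rw [MvPolynomial.coeff_sum]
  simp only [MvPolynomial.coeff_monomial]
  rw [Finset.sum_ite_eq']
  simp only [Finset.mem_filter, MvPolynomial.mem_support_iff]
  split_ifs <;> simp_all

theorem mem_support_part {σ : Type} (q : MvPolynomial σ ℤ) (C : (σ →₀ ℕ) → Prop) (m : σ →₀ ℕ) :
    m ∈ (part q C).support ↔ m ∈ q.support ∧ C m := by
  classical
  rw [MvPolynomial.mem_support_iff, coeff_part, MvPolynomial.mem_support_iff]
  split_ifs <;> simp_all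

theorem Std.part {σ : Type} [PartialOrder σ] {q : MvPolynomial σ ℤ} (h : Std q)
    (C : (σ →₀ ℕ) → Prop) : Std (part q C) :=
  fun m hm => h m ((mem_support_part q C m).1 hm).1

/-- data of the straightening machine -/
structure ASL (σ : Type) [Fintype σ] [PartialOrder σ] where
  J : Ideal (MvPolynomial σ ℤ)
  K : σ → Ideal (MvPolynomial σ ℤ)
  prime : ∀ v, (K v).IsPrime
  J_le : ∀ v, J ≤ K v
  X_mem : ∀ v u, ¬ v ≤ u → MvPolynomial.X u ∈ K v
  X_notMem : ∀ v, MvPolynomial.X v ∉ K v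
  mono : ∀ v v', v ≤ v' → K v ≤ K v'
  const : ∀ v p, p ∈ K v → MvPolynomial.constantCoeff p = 0
  std : ∀ p, ∃ q, Std q ∧ p - q ∈ J
  homog : ∀ p ∈ J, ∀ n, MvPolynomial.homogeneousComponent n p ∈ J

namespace ASL
variable {σ : Type} [Fintype σ] [PartialOrder σ] (D : ASL σ)

/-- the ideal generated by the variables not above `v` -/
def Z (v : σ) : Ideal (MvPolynomial σ ℤ) := Ideal.span (MvPolynomial.X '' {u | ¬ v ≤ u})

theorem Z_le (v : σ) : Z v ≤ D.K v := by
  rw [Z, Ideal.span_le]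
  rintro _ ⟨u, hu, rfl⟩
  exact D.X_mem v u hu

theorem sub_part_mem (v : σ) (p : MvPolynomial σ ℤ) :
    p - part p (fun m => ∀ a ∈ m.support, v ≤ a) ∈ Z v := by
  classical
  rw [Z, MvPolynomial.mem_ideal_span_X_image]
  intro m hm
  rw [MvPolynomial.mem_support_iff, MvPolynomial.coeff_sub, coeff_part] at hm
  split_ifs at hm with h
  · simp at hm
  · push Not at h
    obtain ⟨a, ha, hva⟩ := h
    exact ⟨a, hva, by simpa using ha⟩

theorem exists_min {m : σ →₀ ℕ} (hm : m ≠ 0)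
    (h : ∀ a ∈ m.support, ∀ b ∈ m.support, a ≤ b ∨ b ≤ a) :
    ∃ u ∈ m.support, ∀ a ∈ m.support, u ≤ a := by
  obtain ⟨u, hu⟩ := m.support.exists_minimal (by simpa using hm)
  refine ⟨u, hu.prop, fun a ha => ?_⟩
  rcases h a ha u hu.prop with h1 | h1
  · exact hu.le_of_le ha h1
  · exact h1

theorem indep (v : σ) : ∀ p : MvPolynomial σ ℤ, Std p →
    (∀ m ∈ p.support, ∀ a ∈ m.support, v ≤ a) → p ∈ D.K v → p = 0 := by
  classical
  induction v using WellFoundedGT.induction with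
  | ind v ihv =>
  intro p
  induction hd : p.totalDegree using Nat.strong_induction_on generalizing p with
  | _ d ihd =>
  intro hstd habove hp
  by_contra hp0
  have hall : ∀ m ∈ p.support, v ∈ m.support := by
    intro m hm
    by_contra hvm
    have hm0 : m ≠ 0 := by
      rintro rfl
      have := D.const v p hp
      rw [MvPolynomial.mem_support_iff] at hm
      exact hm this
    obtain ⟨u, hu, hmin⟩ := exists_min hm0 (hstd m hm)
    have hvu : v < u := lt_of_le_of_ne (habove m hm u hu) (by rintro rfl; exact hvm hu)
    have h1 := ihv u hvu (part p (fun m => ∀ a ∈ m.support, u ≤ a)) (hstd.part _)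
      (fun m hm => ((mem_support_part _ _ m).1 hm).2) (by
        have := Ideal.sub_mem _ (D.mono v u hvu.le hp) (D.Z_le u (sub_part_mem u p))
        simpa using this)
    have h2 : m ∈ (part p (fun m => ∀ a ∈ m.support, u ≤ a)).support :=
      (mem_support_part _ _ m).2 ⟨hm, hmin⟩
    rw [h1] at h2
    simp at h2
  have hdvd : MvPolynomial.X v ∣ p := by
    rw [← Ideal.mem_span_singleton, ← Set.image_singleton, MvPolynomial.mem_ideal_span_X_image]
    intro m hm
    exact ⟨v, rfl, by simpa using hall m hm⟩
  obtain ⟨p1, rfl⟩ := hdvd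
  have hp1 : p1 ≠ 0 := by rintro rfl; simp at hp0
  have hmem := ((D.prime v).mem_or_mem hp).resolve_left (D.X_notMem v)
  have hs : ∀ m ∈ p1.support, m + Finsupp.single v 1 ∈ (MvPolynomial.X v * p1).support := by
    intro m hm
    rw [MvPolynomial.mem_support_iff, add_comm, MvPolynomial.coeff_X_mul]
    exact MvPolynomial.mem_support_iff.1 hm
  have hss : ∀ m : σ →₀ ℕ, ∀ a ∈ m.support, a ∈ (m + Finsupp.single v 1).support := by
    intro m a ha
    simp only [Finsupp.mem_support_iff, Finsupp.add_apply] at ha ⊢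
    omega
  refine hp1 (ihd p1.totalDegree ?_ p1 rfl ?_ ?_ hmem)
  · rw [← hd, MvPolynomial.totalDegree_mul_of_isDomain (MvPolynomial.X_ne_zero v) hp1]
    simp
  · intro m hm a ha b hb
    exact hstd _ (hs m hm) a (hss m a ha) b (hss m b hb)
  · intro m hm a ha
    exact habove _ (hs m hm) a (hss m a ha)

theorem K_eq (v : σ) : D.K v = D.J ⊔ Z v := by
  apply le_antisymm
  · intro p hp
    obtain ⟨q, hq, hpq⟩ := D.std p
    have hqv : q ∈ D.K v := by
      have := Ideal.sub_mem _ hp (D.J_le v hpq)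
      simpa using this
    have h1 := D.indep v (part q (fun m => ∀ a ∈ m.support, v ≤ a)) (hq.part _)
      (fun m hm => ((mem_support_part _ _ m).1 hm).2) (by
        have := Ideal.sub_mem _ hqv (D.Z_le v (sub_part_mem v q))
        simpa using this)
    have h2 := sub_part_mem v q
    rw [h1, sub_zero] at h2
    have h3 := Submodule.add_mem_sup hpq h2
    simpa using h3
  · exact sup_le (D.J_le v) (D.Z_le v)

theorem K_homog (v : σ) (p) (hp : p ∈ D.K v) (n : ℕ) :
    MvPolynomial.homogeneousComponent n p ∈ D.K v := by
  rw [K_eq] at hp ⊢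
  obtain ⟨a, ha, b, hb, rfl⟩ := Submodule.mem_sup.1 hp
  rw [map_add]
  refine Submodule.add_mem_sup (D.homog a ha n) ?_
  rw [Z, MvPolynomial.mem_ideal_span_X_image] at hb ⊢
  intro m hm
  apply hb m
  rw [MvPolynomial.support_homogeneousComponent] at hm
  exact (Finset.mem_filter.1 hm).1

theorem cover (v v' v'' : σ) (h' : v < v') (h'' : v < v'')
    (hc : ∀ u, v < u → v' ≤ u ∨ v'' ≤ u) (p : MvPolynomial σ ℤ)
    (hp' : p ∈ D.K v') (hp'' : p ∈ D.K v'') :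
    ∃ p1, p - MvPolynomial.X v * p1 ∈ D.K v := by
  classical
  obtain ⟨q, hq, hpq⟩ := D.std p
  set r := part q (fun m => ∀ a ∈ m.support, v < a) with hr
  -- q - r ∈ K v + (X v)
  have key : q - r ∈ Z v ⊔ Ideal.span {MvPolynomial.X v} := by
    rw [Z, ← Set.image_singleton, ← Ideal.span_union, ← Set.image_union,
      MvPolynomial.mem_ideal_span_X_image]
    intro m hm
    rw [MvPolynomial.mem_support_iff, MvPolynomial.coeff_sub, hr, coeff_part] at hm
    split_ifs at hm with h
    · simp at hm
    · push Not at h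
      obtain ⟨a, ha, hva⟩ := h
      refine ⟨a, ?_, by simpa using ha⟩
      by_cases hav : a = v
      · right; exact hav
      · left; intro h; exact hva (lt_of_le_of_ne h (Ne.symm hav))
  have hle : ∀ w, v < w → p ∈ D.K w → r ∈ D.K w := by
    intro w hw hp
    have h1 : q ∈ D.K w := by
      have := Ideal.sub_mem _ hp (D.J_le w hpq)
      simpa using this
    have h2 : q - r ∈ D.K w := by
      refine (sup_le ((D.Z_le v).trans (D.mono v w hw.le)) ?_) key
      rw [Ideal.span_singleton_le_iff_mem]
      exact D.X_mem _ _ (not_le_of_gt hw)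
    have := Ideal.sub_mem _ h1 h2
    simpa using this
  have hstd : Std r := hq.part _
  have hr0 : r = 0 := by
    by_contra h
    obtain ⟨m, hm⟩ : r.support.Nonempty := by simpa using h
    have hm0 : m ≠ 0 := by
      rintro rfl
      have := D.const v' r (hle v' h' hp')
      rw [MvPolynomial.mem_support_iff] at hm
      exact hm this
    obtain ⟨u, hu, hmin⟩ := exists_min hm0 (hstd m hm)
    have hvu : v < u := ((mem_support_part _ _ m).1 hm).2 u hu
    have main : ∀ w, v < w → p ∈ D.K w → w ≤ u → False := by
      intro w hw hp hwu
      have h1 := D.indep w (part r (fun m => ∀ a ∈ m.support, w ≤ a)) (hstd.part _)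
        (fun m hm => ((mem_support_part _ _ m).1 hm).2) (by
          have := Ideal.sub_mem _ (hle w hw hp) (D.Z_le w (sub_part_mem w r))
          simpa using this)
      have h2 : m ∈ (part r (fun m => ∀ a ∈ m.support, w ≤ a)).support :=
        (mem_support_part _ _ m).2 ⟨hm, fun a ha => hwu.trans (hmin a ha)⟩
      rw [h1] at h2
      simp at h2
    rcases hc u hvu with h | h
    · exact main _ h' hp' h
    · exact main _ h'' hp'' h
  rw [hr0, sub_zero] at key
  obtain ⟨a, ha, b, hb, hab⟩ := Submodule.mem_sup.1 key
  obtain ⟨p1, rfl⟩ := Ideal.mem_span_singleton'.1 hb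
  refine ⟨p1, ?_⟩
  have := Ideal.add_mem _ (D.J_le v hpq) (D.Z_le v ha)
  convert this using 1
  rw [← hab]; ring

end ASL

/-- ranked straightening data -/
structure RASL (σ : Type) [Fintype σ] [PartialOrder σ] extends ASL σ where
  N : ℕ
  rk : σ → Fin N
  bot : σ
  top : σ
  bot_le : ∀ u, bot ≤ u
  le_top : ∀ u, u ≤ top
  rk_lt : ∀ u v, u < v → (rk u : ℕ) < rk v
  rk_top : (rk top : ℕ) + 1 = N
  rk_bot : (rk bot : ℕ) = 0
  nxt : σ → σ
  le_nxt : ∀ v, v ≠ top → v ≤ nxt v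
  rk_nxt : ∀ v, v ≠ top → (rk (nxt v) : ℕ) = rk v + 1
  cov : ∀ v, v ≠ top → (∀ u, v < u → nxt v ≤ u) ∨
    ∃ v', v' ≠ top ∧ v' ≠ nxt v ∧ (rk v' : ℕ) = rk v + 1 ∧ v ≤ v' ∧
      (∀ u, v < u → v' ≤ u ∨ nxt v ≤ u) ∧ (∀ u, v' ≤ u → nxt v ≤ u → nxt v' ≤ u) ∧
      nxt v ≤ nxt v'

namespace RASL
variable {σ : Type} [Fintype σ] [PartialOrder σ] (D : RASL σ)

/-- the system of parameters -/
def θ : MvPolynomial (Fin D.N) ℤ →ₐ[ℤ] MvPolynomial σ ℤ :=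
  open Classical in MvPolynomial.aeval (fun k => ∑ u with D.rk u = k, MvPolynomial.X u)

/-- kill the first variables -/
def ε (N r : ℕ) : MvPolynomial (Fin N) ℤ →ₐ[ℤ] MvPolynomial (Fin N) ℤ :=
  MvPolynomial.aeval (fun k => if (k : ℕ) < r then 0 else MvPolynomial.X k)

theorem θ_X (k) : D.θ (MvPolynomial.X k) =
    open Classical in ∑ u with D.rk u = k, MvPolynomial.X u := by
  simp [θ]

theorem ε_X_of_le {N r : ℕ} (k : Fin N) (h : r ≤ k) : ε N r (MvPolynomial.X k) = MvPolynomial.X k := by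
  simp [ε, not_lt.2 h]

theorem ε_X_of_lt {N r : ℕ} (k : Fin N) (h : k < r) : ε N r (MvPolynomial.X k) = 0 := by
  simp [ε, h]

theorem ε_ε {N r : ℕ} (s) : ε N r (ε N r s) = ε N r s := by
  have : (ε N r).comp (ε N r) = ε N r := by
    apply MvPolynomial.algHom_ext
    intro k
    rw [AlgHom.comp_apply]
    by_cases h : (k : ℕ) < r
    · rw [ε_X_of_lt k h, map_zero]
    · rw [ε_X_of_le k (not_lt.1 h), ε_X_of_le k (not_lt.1 h)]
  exact DFunLike.congr_fun this s

theorem ε_zero {N : ℕ} (s) : ε N 0 s = s := by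
  have : (ε N 0) = AlgHom.id ℤ _ := by
    apply MvPolynomial.algHom_ext
    intro k
    rw [ε_X_of_le k (Nat.zero_le _)]; rfl
  exact DFunLike.congr_fun this s

theorem agree {τ : Type} {B : Type} [CommRing B] [Algebra ℤ B] (f g : MvPolynomial τ ℤ →ₐ[ℤ] B) (I : Ideal B)
    (h : ∀ k, f (MvPolynomial.X k) - g (MvPolynomial.X k) ∈ I) (s) : f s - g s ∈ I := by
  have : (Ideal.Quotient.mkₐ ℤ I).comp f = (Ideal.Quotient.mkₐ ℤ I).comp g := by
    apply MvPolynomial.algHom_ext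
    intro k
    exact (Ideal.Quotient.mk_eq_mk_iff_sub_mem _ _).2 (h k)
  exact (Ideal.Quotient.mk_eq_mk_iff_sub_mem _ _).1 (DFunLike.congr_fun this s)

theorem ε_succ_dvd {N : ℕ} (r : Fin N) (s) :
    MvPolynomial.X r ∣ ε N r s - ε N (r + 1) s := by
  rw [← Ideal.mem_span_singleton]
  apply agree
  intro k
  rcases lt_trichotomy (k : ℕ) r with h | h | h
  · rw [ε_X_of_lt k h, ε_X_of_lt k (by omega)]; simp
  · obtain rfl : k = r := Fin.ext h
    rw [ε_X_of_le k le_rfl, ε_X_of_lt k (Nat.lt_succ_self _), Ideal.mem_span_singleton]; simp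
  · rw [ε_X_of_le k (by omega), ε_X_of_le k (by omega)]; simp

theorem exists_ε {N : ℕ} (r : Fin N) (s) (h : ε N (r + 1) s = 0) :
    ∃ s1, ε N r s = MvPolynomial.X r * s1 := by
  have := ε_succ_dvd r s
  rwa [h, sub_zero] at this

theorem rk_le (u v : σ) (h : u ≤ v) : (D.rk u : ℕ) ≤ D.rk v := by
  rcases h.eq_or_lt with rfl | h
  · rfl
  · exact (D.rk_lt _ _ h).le

theorem θ_ε (v : σ) (r : ℕ) (h : r ≤ D.rk v) (s) : D.θ s - D.θ (ε D.N r s) ∈ D.K v := by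
  classical
  refine agree D.θ (D.θ.comp (ε D.N r)) (D.K v) (fun k => ?_) s
  rw [AlgHom.comp_apply]
  by_cases hk : (k : ℕ) < r
  · rw [ε_X_of_lt k hk, map_zero, sub_zero, θ_X]
    refine Ideal.sum_mem _ fun u hu => D.X_mem _ _ fun hvu => ?_
    have := D.rk_le _ _ hvu
    simp only [Finset.mem_filter] at hu
    rw [hu.2] at this
    omega
  · rw [ε_X_of_le k (by omega)]; simp

theorem θ_rk (v : σ) : D.θ (MvPolynomial.X (D.rk v)) - MvPolynomial.X v ∈ D.K v := by
  classical
  rw [θ_X, ← Finset.sum_erase_add _ _ (a := v) (by simp), add_sub_cancel_right]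
  refine Ideal.sum_mem _ fun u hu => D.X_mem _ _ fun hvu => ?_
  simp only [Finset.mem_erase, Finset.mem_filter] at hu
  have := D.rk_lt _ _ (lt_of_le_of_ne hvu (Ne.symm hu.1))
  rw [hu.2.2] at this
  omega

/-- linear combinations -/
def E {ι : Type} [Fintype ι] (b : ι → MvPolynomial σ ℤ) (s : ι → MvPolynomial (Fin D.N) ℤ) :
    MvPolynomial σ ℤ := ∑ i, D.θ (s i) * b i

theorem E_sub {ι : Type} [Fintype ι] (b : ι → MvPolynomial σ ℤ) (s t) :
    D.E b s - D.E b t = D.E b (fun i => s i - t i) := by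
  simp [E, sub_mul]

theorem E_mul {ι : Type} [Fintype ι] (b : ι → MvPolynomial σ ℤ) (a s) :
    D.E b (fun i => a * s i) = D.θ a * D.E b s := by
  simp [E, Finset.mul_sum, mul_assoc]

theorem E_elim {ι κ : Type} [Fintype ι] [Fintype κ] (b : ι → MvPolynomial σ ℤ)
    (c : κ → MvPolynomial σ ℤ) (s : ι ⊕ κ → MvPolynomial (Fin D.N) ℤ) :
    D.E (Sum.elim b c) s = D.E b (s ∘ Sum.inl) + D.E c (s ∘ Sum.inr) := by
  simp [E]

theorem E_ε {ι : Type} [Fintype ι] (b : ι → MvPolynomial σ ℤ) (s) (v : σ) (r : ℕ)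
    (h : r ≤ D.rk v) : D.E b s - D.E b (fun i => ε D.N r (s i)) ∈ D.K v := by
  rw [E_sub]
  refine Ideal.sum_mem _ fun i _ => Ideal.mul_mem_right _ _ ?_
  rw [map_sub]
  exact D.θ_ε v r h _

/-- a homogeneous basis modulo `K v` -/
structure Bas (v : σ) {ι : Type} [Fintype ι] (b : ι → MvPolynomial σ ℤ) : Prop where
  hom : ∀ i, ∃ d, (b i).IsHomogeneous d
  span : ∀ p, ∃ s, p - D.E b s ∈ D.K v
  ind : ∀ s, D.E b s ∈ D.K v → ∀ i, ε D.N (D.rk v) (s i) = 0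

theorem eq_zero_of_pow_dvd {N : ℕ} (r : Fin N) (q : MvPolynomial (Fin N) ℤ)
    (h : ∀ n : ℕ, MvPolynomial.X r ^ n ∣ q) : q = 0 := by
  by_contra hq
  obtain ⟨c, hc⟩ := h (q.totalDegree + 1)
  have hc0 : c ≠ 0 := by rintro rfl; simp at hc; exact hq hc
  have := congrArg MvPolynomial.totalDegree hc
  rw [MvPolynomial.totalDegree_mul_of_isDomain (pow_ne_zero _ (MvPolynomial.X_ne_zero r)) hc0,
    MvPolynomial.totalDegree_X_pow] at this
  omega

theorem indStep (v : σ) {ι : Type} [Fintype ι] (c : ι → MvPolynomial σ ℤ)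
    (H : ∀ s, D.E c s ∈ D.K v → ∀ i, ε D.N (D.rk v + 1) (s i) = 0) (s) (hs : D.E c s ∈ D.K v)
    (i : ι) : ε D.N (D.rk v) (s i) = 0 := by
  have main : ∀ n : ℕ, ∀ s, D.E c s ∈ D.K v → ∀ i,
      MvPolynomial.X (D.rk v) ^ n ∣ ε D.N (D.rk v) (s i) := by
    intro n
    induction n with
    | zero => intro s _ i; simp
    | succ n ih =>
      intro s hs i
      choose s1 hs1 using fun i => exists_ε (D.rk v) (s i) (H s hs i)
      have h1 := Ideal.sub_mem _ hs (D.E_ε c s v (D.rk v) le_rfl)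
      rw [sub_sub_cancel] at h1
      simp only [hs1] at h1
      rw [E_mul] at h1
      have h2 := ((D.prime v).mem_or_mem h1).resolve_left (fun h => D.X_notMem v (by
        have := Ideal.sub_mem _ h (D.θ_rk v)
        rwa [sub_sub_cancel] at this))
      rw [← ε_ε, hs1, map_mul, ε_X_of_le _ le_rfl, pow_succ']
      exact mul_dvd_mul_left _ (ih s1 h2 i)
  exact eq_zero_of_pow_dvd _ _ fun n => main n s hs i

theorem θ_homog (s : MvPolynomial (Fin D.N) ℤ) (n : ℕ) (hs : s.IsHomogeneous n) :
    (D.θ s).IsHomogeneous n := by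
  classical
  have := hs.aeval (fun k => ∑ u with D.rk u = k, (MvPolynomial.X u : MvPolynomial σ ℤ)) (n := 1)
    (fun k => MvPolynomial.IsHomogeneous.sum _ _ _ fun u _ => MvPolynomial.isHomogeneous_X _ _)
  rw [one_mul] at this
  unfold θ
  convert this

theorem comp_mul_homog {τ : Type} (p c : MvPolynomial τ ℤ) (e n : ℕ) (hc : c.IsHomogeneous e) :
    MvPolynomial.homogeneousComponent n (p * c) =
      if e ≤ n then MvPolynomial.homogeneousComponent (n - e) p * c else 0 := by
  classical
  conv_lhs => rw [← MvPolynomial.sum_homogeneousComponent p, Finset.sum_mul, map_sum]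
  have : ∀ i, MvPolynomial.homogeneousComponent n (MvPolynomial.homogeneousComponent i p * c) =
      if n = i + e then MvPolynomial.homogeneousComponent i p * c else 0 := fun i =>
    MvPolynomial.homogeneousComponent_of_mem
      ((MvPolynomial.homogeneousComponent_isHomogeneous i p).mul hc)
  simp only [this]
  split_ifs with h
  · rw [Finset.sum_eq_single (n - e)]
    · rw [if_pos (by omega)]
    · intro b _ hb; rw [if_neg (by omega)]
    · intro hn
      rw [if_pos (by omega), MvPolynomial.homogeneousComponent_eq_zero, zero_mul]
      simp at hn; omega
  · exact Finset.sum_eq_zero fun i _ => if_neg (by omega)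

theorem comp_θ (s : MvPolynomial (Fin D.N) ℤ) (n : ℕ) :
    MvPolynomial.homogeneousComponent n (D.θ s) = D.θ (MvPolynomial.homogeneousComponent n s) := by
  conv_lhs => rw [← MvPolynomial.sum_homogeneousComponent s, map_sum, map_sum]
  have : ∀ i, MvPolynomial.homogeneousComponent n (D.θ (MvPolynomial.homogeneousComponent i s)) =
      if n = i then D.θ (MvPolynomial.homogeneousComponent i s) else 0 := fun i =>
    MvPolynomial.homogeneousComponent_of_mem
      (D.θ_homog _ _ (MvPolynomial.homogeneousComponent_isHomogeneous i s))
  simp only [this, Finset.sum_ite_eq]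
  split_ifs with h
  · rfl
  · rw [MvPolynomial.homogeneousComponent_eq_zero, map_zero]
    simp at h; omega

theorem nakayama (v : σ) {ι : Type} [Fintype ι] (c : ι → MvPolynomial σ ℤ)
    (hc : ∀ i, ∃ d, (c i).IsHomogeneous d)
    (H : ∀ p, ∃ s p1, p - D.E c s - MvPolynomial.X v * p1 ∈ D.K v) (p) :
    ∃ s, p - D.E c s ∈ D.K v := by
  choose e he using hc
  have main : ∀ d : ℕ, ∀ p : MvPolynomial σ ℤ, p.IsHomogeneous d → ∃ s, p - D.E c s ∈ D.K v := by
    intro d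
    induction d using Nat.strong_induction_on with
    | _ d ih =>
    intro p hp
    obtain ⟨s, p1, h⟩ := H p
    have h1 := D.K_homog v _ h d
    rw [map_sub, map_sub, MvPolynomial.homogeneousComponent_eq_self hp, mul_comm,
      comp_mul_homog _ _ 1 d (MvPolynomial.isHomogeneous_X _ _)] at h1
    have h2 : MvPolynomial.homogeneousComponent d (D.E c s) =
        D.E c (fun i => if e i ≤ d then MvPolynomial.homogeneousComponent (d - e i) (s i) else 0) := by
      unfold E
      rw [map_sum]
      refine Finset.sum_congr rfl fun i _ => ?_
      rw [comp_mul_homog _ _ _ _ (he i), comp_θ]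
      by_cases h : e i ≤ d <;> simp [h]
    rw [h2] at h1
    split_ifs at h1 with hd
    · obtain ⟨t, ht⟩ := ih (d - 1) (by omega) _
        (MvPolynomial.homogeneousComponent_isHomogeneous (d - 1) p1)
      have h3 : MvPolynomial.X v * D.E c t - D.E c (fun i => MvPolynomial.X (D.rk v) * t i)
          ∈ D.K v := by
        rw [E_mul, ← sub_mul, ← neg_sub]
        exact Ideal.mul_mem_right _ _ (neg_mem (D.θ_rk v))
      set s' := fun i => if e i ≤ d then MvPolynomial.homogeneousComponent (d - e i) (s i) else 0
      refine ⟨fun i => s' i - - (MvPolynomial.X (D.rk v) * t i), ?_⟩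
      have h4 := Ideal.add_mem _ (Ideal.add_mem _ h1 (Ideal.mul_mem_left _ (MvPolynomial.X v) ht)) h3
      convert h4 using 1
      rw [← E_sub]
      have : D.E c (fun i => - (MvPolynomial.X (D.rk v) * t i)) =
        - D.E c (fun i => (MvPolynomial.X (D.rk v) * t i)) := by simp [E]
      rw [this]
      ring
    · exact ⟨_, by simpa using h1⟩
  choose! s hs using main
  refine ⟨fun i => ∑ d ∈ Finset.range (p.totalDegree + 1),
    s d (MvPolynomial.homogeneousComponent d p) i, ?_⟩
  have : p - D.E c (fun i => ∑ d ∈ Finset.range (p.totalDegree + 1),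
    s d (MvPolynomial.homogeneousComponent d p) i) = ∑ d ∈ Finset.range (p.totalDegree + 1),
      (MvPolynomial.homogeneousComponent d p - D.E c (s d (MvPolynomial.homogeneousComponent d p))) := by
    rw [Finset.sum_sub_distrib, MvPolynomial.sum_homogeneousComponent]
    congr 1
    simp only [E, map_sum, Finset.sum_mul]
    exact Finset.sum_comm
  rw [this]
  exact Ideal.sum_mem _ fun d _ => hs d _ (MvPolynomial.homogeneousComponent_isHomogeneous d p)

end RASL

namespace RASL
variable {σ : Type} [Fintype σ] [PartialOrder σ] (D : RASL σ)

theorem bas_top : D.Bas D.top (fun _ : Unit => 1) := by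
  classical
  refine ⟨fun _ => ⟨0, MvPolynomial.isHomogeneous_one _ _⟩, ?_, ?_⟩
  · apply D.nakayama
    · exact fun _ => ⟨0, MvPolynomial.isHomogeneous_one _ _⟩
    · intro p
      refine ⟨fun _ => MvPolynomial.C (MvPolynomial.constantCoeff p), ?_⟩
      have : p - MvPolynomial.C (MvPolynomial.constantCoeff p) ∈
          ASL.Z D.top ⊔ Ideal.span {MvPolynomial.X D.top} := by
        rw [ASL.Z, ← Set.image_singleton, ← Ideal.span_union, ← Set.image_union,
          MvPolynomial.mem_ideal_span_X_image]
        intro m hm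
        have hm0 : m ≠ 0 := by
          rintro rfl
          rw [MvPolynomial.mem_support_iff, MvPolynomial.coeff_sub, MvPolynomial.coeff_C,
            if_pos rfl] at hm
          exact hm (sub_self _)
        obtain ⟨a, ha⟩ := Finsupp.ne_iff.1 hm0
        refine ⟨a, ?_, ha⟩
        by_cases h : a = D.top
        · right; exact h
        · left; intro h2; exact h (le_antisymm (D.le_top _) h2)
      obtain ⟨a, ha, b, hb, hab⟩ := Submodule.mem_sup.1 this
      obtain ⟨p1, rfl⟩ := Ideal.mem_span_singleton'.1 hb
      refine ⟨p1, ?_⟩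
      convert D.Z_le _ ha using 1
      have h2 : D.θ (MvPolynomial.C (MvPolynomial.constantCoeff p)) =
          MvPolynomial.C (MvPolynomial.constantCoeff p) := D.θ.commutes _
      simp only [E, Finset.univ_unique, Finset.sum_singleton, mul_one, h2]
      rw [← hab]; ring
  · apply D.indStep
    intro s hs i
    have h1 : D.θ (s ()) ∈ D.K D.top := by simpa [E] using hs
    have h2 := D.const _ _ h1
    rw [D.rk_top]
    have h3 : MvPolynomial.constantCoeff (D.θ (s ())) = MvPolynomial.constantCoeff (s ()) := by
      have : (MvPolynomial.constantCoeff.comp D.θ.toRingHom) = MvPolynomial.constantCoeff := by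
        apply MvPolynomial.ringHom_ext'
        · exact RingHom.ext_int _ _
        · intro k
          simp [θ_X]
      exact DFunLike.congr_fun this _
    have h4 : ε D.N D.N (s ()) = MvPolynomial.C (MvPolynomial.constantCoeff (s ())) := by
      have : (ε D.N D.N).toRingHom =
          MvPolynomial.C.comp MvPolynomial.constantCoeff := by
        apply MvPolynomial.ringHom_ext'
        · exact RingHom.ext_int _ _
        · intro k
          simp [ε_X_of_lt k k.2]
      exact DFunLike.congr_fun this _
    rw [show s i = s () from rfl, h4, ← h3, h2, map_zero]

/-- existence of a basis -/
def E1 (v : σ) : Prop := ∃ (ι : Type) (_ : Fintype ι) (b : ι → MvPolynomial σ ℤ), D.Bas v b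

/-- existence of an adapted basis -/
def E2 (v : σ) : Prop := ∃ (ι κ : Type) (_ : Fintype ι) (_ : Fintype κ)
  (b : ι → MvPolynomial σ ℤ) (k : κ → MvPolynomial σ ℤ), D.Bas v (Sum.elim b k) ∧
  D.Bas (D.nxt v) b ∧
  ∀ i, k i ∈ Ideal.span (MvPolynomial.X '' {y | v ≤ y ∧ ¬ D.nxt v ≤ y})

theorem lt_nxt (v : σ) (hv : v ≠ D.top) : v < D.nxt v := by
  refine lt_of_le_of_ne (D.le_nxt v hv) fun h => ?_
  have := D.rk_nxt v hv
  rw [← h] at this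
  omega

theorem step_single (v : σ) (hv : v ≠ D.top) (hs : ∀ u, v < u → D.nxt v ≤ u)
    (h : D.E1 (D.nxt v)) : D.E2 v := by
  obtain ⟨ι, _, b, hb⟩ := h
  have hb' : ∀ (s : ι ⊕ Empty → MvPolynomial (Fin D.N) ℤ),
      D.E (Sum.elim b Empty.elim) s = D.E b (s ∘ Sum.inl) := by
    intro s
    rw [E_elim]; simp [E]
  refine ⟨ι, Empty, inferInstance, inferInstance, b, Empty.elim, ⟨?_, ?_, ?_⟩, hb, fun i => i.elim⟩
  · rintro (i | i)
    · exact hb.hom i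
    · exact i.elim
  · apply D.nakayama
    · rintro (i | i)
      · exact hb.hom i
      · exact i.elim
    intro p
    obtain ⟨s, hs1⟩ := hb.span p
    obtain ⟨p1, h1⟩ := D.cover v _ _ (D.lt_nxt v hv) (D.lt_nxt v hv) (fun u hu => Or.inl (hs u hu))
      _ hs1 hs1
    refine ⟨Sum.elim s Empty.elim, p1, ?_⟩
    rw [hb', Sum.elim_comp_inl]
    exact h1
  · apply D.indStep
    intro s hs1
    rw [hb'] at hs1
    rintro (i | i)
    · have := hb.ind _ (D.mono _ _ (D.le_nxt v hv) hs1) i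
      rw [D.rk_nxt v hv] at this
      exact this
    · exact i.elim

theorem E_mem {ι : Type} [Fintype ι] (b : ι → MvPolynomial σ ℤ) (s)
    (I : Ideal (MvPolynomial σ ℤ)) (h : ∀ i, b i ∈ I) : D.E b s ∈ I :=
  Ideal.sum_mem _ fun i _ => Ideal.mul_mem_left _ _ (h i)

theorem E_X {ι : Type} [Fintype ι] (b : ι → MvPolynomial σ ℤ) (s) (x : MvPolynomial σ ℤ) :
    D.E (fun i => x * b i) s = x * D.E b s := by
  unfold E
  rw [Finset.mul_sum]
  exact Finset.sum_congr rfl fun i _ => by ring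

theorem step_double (v v' : σ) (hv : v ≠ D.top) (hv' : v' ≠ D.top) (hne : v' ≠ D.nxt v)
    (hrk : (D.rk v' : ℕ) = D.rk v + 1) (hvv' : v ≤ v')
    (hc : ∀ u, v < u → v' ≤ u ∨ D.nxt v ≤ u)
    (hj : ∀ u, v' ≤ u → D.nxt v ≤ u → D.nxt v' ≤ u) (hle : D.nxt v ≤ D.nxt v')
    (h : D.E1 (D.nxt v)) (h' : D.E2 v') : D.E2 v := by
  obtain ⟨ι, _, B, hB⟩ := h
  obtain ⟨κ, μ, _, _, b, k, hbk, hb, hk⟩ := h'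
  have hr2 := D.rk_nxt v hv
  have hlt' : v < v' := lt_of_le_of_ne hvv' (by rintro rfl; omega)
  have hnle : ¬ D.nxt v ≤ v' := by
    intro h
    have := D.rk_lt _ _ (lt_of_le_of_ne h (Ne.symm hne))
    omega
  have hk' : ∀ i, k i ∈ Ideal.span (MvPolynomial.X '' {y | v ≤ y ∧ ¬ D.nxt v ≤ y}) := fun i =>
    Ideal.span_mono (Set.image_mono (show {y | v' ≤ y ∧ ¬ D.nxt v' ≤ y} ⊆
      {y | v ≤ y ∧ ¬ D.nxt v ≤ y} from fun y hy =>
      ⟨hvv'.trans hy.1, fun h => hy.2 (hj y hy.1 h)⟩)) (hk i)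
  have hnew : ∀ i, Sum.elim (fun i => MvPolynomial.X v' * b i) k i ∈
      Ideal.span (MvPolynomial.X '' {y | v ≤ y ∧ ¬ D.nxt v ≤ y}) := by
    rintro (i | i)
    · exact Ideal.mul_mem_right _ _ (Ideal.subset_span ⟨v', ⟨hvv', hnle⟩, rfl⟩)
    · exact hk' i
  have hsp : Ideal.span (MvPolynomial.X '' {y | v ≤ y ∧ ¬ D.nxt v ≤ y}) ≤ D.K (D.nxt v) := by
    rw [Ideal.span_le]
    rintro _ ⟨y, hy, rfl⟩
    exact D.X_mem _ _ hy.2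
  have hkw : ∀ i, k i ∈ D.K (D.nxt v') := fun i => by
    refine (Ideal.span_le.2 ?_) (hk i)
    rintro _ ⟨y, hy, rfl⟩
    exact D.X_mem _ _ hy.2
  have hhom : ∀ i, ∃ d, (Sum.elim B (Sum.elim (fun i => MvPolynomial.X v' * b i) k) i).IsHomogeneous
      d := by
    rintro (i | i | i)
    · exact hB.hom i
    · obtain ⟨d, hd⟩ := hb.hom i
      exact ⟨1 + d, (MvPolynomial.isHomogeneous_X _ _).mul hd⟩
    · exact hbk.hom (Sum.inr i)
  refine ⟨ι, κ ⊕ μ, inferInstance, inferInstance, B, Sum.elim (fun i => MvPolynomial.X v' * b i) k,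
    ⟨hhom, ?_, ?_⟩, hB, hnew⟩
  · apply D.nakayama v _ hhom
    intro p
    obtain ⟨s, hs⟩ := hB.span p
    set p' := p - D.E B s with hp'
    obtain ⟨tu, htu⟩ := hbk.span p'
    rw [E_elim] at htu
    set t := tu ∘ Sum.inl
    set u := tu ∘ Sum.inr
    have h1 : D.E b t ∈ D.K (D.nxt v') := by
      have a1 := D.mono _ _ (D.le_nxt v' hv') htu
      have a2 := D.mono _ _ hle hs
      have a3 := D.E_mem k u _ hkw
      have := Ideal.sub_mem _ (Ideal.sub_mem _ a2 a1) a3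
      convert this using 1
      ring
    have h2 := hb.ind _ h1
    rw [D.rk_nxt v' hv'] at h2
    choose t1 ht1 using fun i => exists_ε (D.rk v') (t i) (h2 i)
    have h3 : D.E b t - MvPolynomial.X v' * D.E b t1 ∈ D.K v' := by
      have a1 := D.E_ε b t v' _ le_rfl
      simp only [ht1] at a1
      rw [E_mul] at a1
      have a2 := Ideal.mul_mem_right (D.E b t1) _ (D.θ_rk v')
      have := Ideal.add_mem _ a1 a2
      convert this using 1
      ring
    have hE : ∀ (s : ι → MvPolynomial (Fin D.N) ℤ) (t1 : κ → MvPolynomial (Fin D.N) ℤ)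
      (u : μ → MvPolynomial (Fin D.N) ℤ),
      D.E (Sum.elim B (Sum.elim (fun i => MvPolynomial.X v' * b i) k))
        (Sum.elim s (Sum.elim t1 u)) = D.E B s + (MvPolynomial.X v' * D.E b t1 + D.E k u) := by
      intro s t1 u
      rw [E_elim, Sum.elim_comp_inl, Sum.elim_comp_inr, E_elim, Sum.elim_comp_inl, Sum.elim_comp_inr,
        E_X]
    have h4 : p' - (MvPolynomial.X v' * D.E b t1 + D.E k u) ∈ D.K v' := by
      have := Ideal.add_mem _ htu h3
      convert this using 1
      ring
    have h5 : p' - (MvPolynomial.X v' * D.E b t1 + D.E k u) ∈ D.K (D.nxt v) := by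
      refine Ideal.sub_mem _ hs (Ideal.add_mem _ (Ideal.mul_mem_right _ _ (D.X_mem _ _ hnle)) ?_)
      exact D.E_mem k u _ fun i => hsp (hk' i)
    obtain ⟨p1, hp1⟩ := D.cover v v' (D.nxt v) hlt' (D.lt_nxt v hv) hc _ h4 h5
    refine ⟨Sum.elim s (Sum.elim t1 u), p1, ?_⟩
    rw [hE]
    convert hp1 using 1
    rw [hp']; ring
  · apply D.indStep
    intro s hs
    rw [E_elim] at hs
    have h1 : D.E B (s ∘ Sum.inl) ∈ D.K (D.nxt v) := by
      have a1 := D.mono _ _ (D.le_nxt v hv) hs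
      have a2 := D.E_mem _ (s ∘ Sum.inr) _ fun i => hsp (hnew i)
      simpa using Ideal.sub_mem _ a1 a2
    have h2 := hB.ind _ h1
    rw [hr2] at h2
    have h3 : D.E B (s ∘ Sum.inl) ∈ D.K v' := by
      have := D.E_ε B (s ∘ Sum.inl) v' (D.rk v + 1) (by omega)
      simp only [h2] at this
      simpa [E] using this
    have h4 := Ideal.sub_mem _ (D.mono _ _ hvv' hs) h3
    rw [add_sub_cancel_left, E_elim, E_X] at h4
    set t := (s ∘ Sum.inr) ∘ Sum.inl
    set u := (s ∘ Sum.inr) ∘ Sum.inr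
    have h5 : D.E (Sum.elim b k) (Sum.elim (fun i => MvPolynomial.X (D.rk v') * t i) u) ∈ D.K v' := by
      rw [E_elim, Sum.elim_comp_inl, Sum.elim_comp_inr, E_mul]
      have a2 := Ideal.mul_mem_right (D.E b t) _ (D.θ_rk v')
      convert Ideal.add_mem _ h4 a2 using 1
      ring
    have h6 := hbk.ind _ h5
    rw [hrk] at h6
    rintro (i | i | i)
    · exact h2 i
    · have := h6 (Sum.inl i)
      simp only [Sum.elim_inl, map_mul] at this
      rw [ε_X_of_le _ hrk.ge] at this
      exact (mul_eq_zero.1 this).resolve_left (MvPolynomial.X_ne_zero _)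
    · exact h6 (Sum.inr i)

theorem E2_E1 (v : σ) (h : D.E2 v) : D.E1 v := by
  obtain ⟨ι, κ, _, _, b, k, h, -⟩ := h
  exact ⟨ι ⊕ κ, inferInstance, _, h⟩

theorem all (v : σ) : D.E1 v ∧ (v ≠ D.top → D.E2 v) := by
  induction v using WellFoundedGT.induction with
  | ind v ih =>
  have h2 : v ≠ D.top → D.E2 v := by
    intro hv
    rcases D.cov v hv with h | ⟨v', h1, h2, h3, h4, h5, h6, h7⟩
    · exact D.step_single v hv h (ih _ (D.lt_nxt v hv)).1
    · refine D.step_double v v' hv h1 h2 h3 h4 h5 h6 h7 (ih _ (D.lt_nxt v hv)).1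
        ((ih v' (lt_of_le_of_ne h4 ?_)).2 h1)
      rintro rfl
      omega
  refine ⟨?_, h2⟩
  by_cases hv : v = D.top
  · exact ⟨Unit, inferInstance, _, hv ▸ D.bas_top⟩
  · exact D.E2_E1 v (h2 hv)

theorem K_bot : D.K D.bot = D.J := by
  rw [D.K_eq, ASL.Z]
  simp [D.bot_le]

/-- the algebra structure over the parameters -/
abbrev alg : Algebra (MvPolynomial (Fin D.N) ℤ) (MvPolynomial σ ℤ ⧸ D.J) :=
  ((Ideal.Quotient.mk D.J).comp D.θ.toRingHom).toAlgebra

set_option synthInstance.maxHeartbeats 400000 in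
theorem free : letI := D.alg
    Module.Free (MvPolynomial (Fin D.N) ℤ) (MvPolynomial σ ℤ ⧸ D.J) ∧
    Module.Finite (MvPolynomial (Fin D.N) ℤ) (MvPolynomial σ ℤ ⧸ D.J) := by
  let := D.alg
  obtain ⟨ι, _, b, hb⟩ := (D.all D.bot).1
  have hsum : ∀ s : ι → MvPolynomial (Fin D.N) ℤ,
      ∑ i, s i • (Ideal.Quotient.mk D.J (b i)) = Ideal.Quotient.mk D.J (D.E b s) := by
    intro s
    rw [E, map_sum]
    refine Finset.sum_congr rfl fun i _ => ?_
    rw [Algebra.smul_def, map_mul]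
    rfl
  have hli : LinearIndependent (MvPolynomial (Fin D.N) ℤ)
      (fun i => Ideal.Quotient.mk D.J (b i)) := by
    rw [Fintype.linearIndependent_iff]
    intro s hs i
    rw [hsum, Ideal.Quotient.eq_zero_iff_mem, ← K_bot] at hs
    have := hb.ind s hs i
    rwa [D.rk_bot, ε_zero] at this
  have hsp : ⊤ ≤ Submodule.span (MvPolynomial (Fin D.N) ℤ)
      (Set.range fun i => Ideal.Quotient.mk D.J (b i)) := by
    intro x _
    obtain ⟨p, rfl⟩ := Ideal.Quotient.mk_surjective x
    obtain ⟨s, hs⟩ := hb.span p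
    rw [K_bot] at hs
    rw [(Ideal.Quotient.mk_eq_mk_iff_sub_mem _ _).2 hs, ← hsum]
    exact Submodule.sum_mem _ fun i _ => Submodule.smul_mem _ _ (Submodule.subset_span ⟨i, rfl⟩)
  let bb := Module.Basis.mk hli hsp
  exact ⟨Module.Free.of_basis bb, Module.Finite.of_basis bb⟩

end RASL

/-! ### Part III b: the concrete poset -/

/-- the variables, with a dedicated order -/
def W (f : ℕ) := Var f

instance (f : ℕ) : Fintype (W f) := inferInstanceAs (Fintype (Var f))

/-- the matrix variable -/
def xx {f : ℕ} (i j : ℕ) (hij : i < j) (hj : j < f) : W f :=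
  Sum.inl ⟨(⟨i, hij.trans hj⟩, ⟨j, hj⟩), hij⟩

/-- the vector variable -/
def tt {f : ℕ} (k : ℕ) (hk : k < f) : W f := Sum.inr ⟨k, hk⟩

theorem W.cases {f : ℕ} {C : W f → Prop} (v : W f)
    (hx : ∀ i j hij hj, C (xx i j hij hj)) (ht : ∀ k hk, C (tt k hk)) : C v := by
  rcases v with ⟨⟨⟨i, hi⟩, ⟨j, hj⟩⟩, hij⟩ | ⟨k, hk⟩
  · exact hx i j hij hj
  · exact ht k hk

/-- the order relation -/
def Wle {f : ℕ} : W f → W f → Prop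
  | Sum.inl a, Sum.inl b => a.1.1.1 ≤ b.1.1.1 ∧ a.1.2.1 ≤ b.1.2.1
  | Sum.inl a, Sum.inr k => ¬ (k.1 + 1 = f ∧ a.1.2.1 + 1 = f) ∧ ¬ (k.1 + 2 = f ∧ a.1.1.1 + 2 = f)
  | Sum.inr _, Sum.inl _ => False
  | Sum.inr k, Sum.inr l => l.1 ≤ k.1

theorem Wle_xx {f : ℕ} {i j hij hj k l hkl hl} :
    Wle (xx i j hij hj : W f) (xx k l hkl hl) ↔ i ≤ k ∧ j ≤ l := Iff.rfl
theorem Wle_xt {f : ℕ} {i j hij hj k hk} :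
    Wle (xx i j hij hj : W f) (tt k hk) ↔ ¬ (k + 1 = f ∧ j + 1 = f) ∧ ¬ (k + 2 = f ∧ i + 2 = f) :=
  Iff.rfl
theorem Wle_tx {f : ℕ} {i j hij hj k hk} :
    Wle (tt k hk : W f) (xx i j hij hj) ↔ False := Iff.rfl
theorem Wle_tt {f : ℕ} {k hk l hl} :
    Wle (tt k hk : W f) (tt l hl) ↔ l ≤ k := Iff.rfl
theorem eq_xx {f : ℕ} {i j hij hj k l hkl hl} :
    (xx i j hij hj : W f) = (xx k l hkl hl) ↔ i = k ∧ j = l := by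
  constructor
  · intro h
    have h1 := Subtype.ext_iff.1 (Sum.inl.inj h)
    simp only [Prod.mk.injEq, Fin.mk.injEq] at h1
    exact h1
  · rintro ⟨rfl, rfl⟩; rfl
theorem eq_tt {f : ℕ} {k hk l hl} :
    (tt k hk : W f) = (tt l hl) ↔ k = l := by
  constructor
  · intro h
    have h1 := Sum.inr.inj h
    simpa using h1
  · rintro rfl; rfl
theorem ne_xt {f : ℕ} {i j hij hj k hk} : (xx i j hij hj : W f) = (tt k hk) ↔ False := by
  simp [xx, tt]
theorem ne_tx {f : ℕ} {i j hij hj k hk} : (tt k hk : W f) = (xx i j hij hj) ↔ False := by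
  simp [xx, tt]

instance (f : ℕ) : PartialOrder (W f) where
  le := Wle
  le_refl v := by
    cases v using W.cases with
    | hx i j hij hj => rw [Wle_xx]; omega
    | ht k hk => rw [Wle_tt]
  le_trans a b c := by
    cases a using W.cases <;> cases b using W.cases <;> cases c using W.cases <;>
    simp only [Wle_xx, Wle_xt, Wle_tx, Wle_tt] <;> first | omega | (intros; omega) | tauto
  le_antisymm a b := by
    cases a using W.cases <;> cases b using W.cases <;>
    simp only [Wle_xx, Wle_xt, Wle_tx, Wle_tt, eq_xx, eq_tt] <;> first | omega | (intros; omega) | tauto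

theorem le_xx {f : ℕ} {i j hij hj k l hkl hl} :
    (xx i j hij hj : W f) ≤ (xx k l hkl hl) ↔ i ≤ k ∧ j ≤ l := Iff.rfl
theorem le_xt {f : ℕ} {i j hij hj k hk} :
    (xx i j hij hj : W f) ≤ (tt k hk) ↔ ¬ (k + 1 = f ∧ j + 1 = f) ∧ ¬ (k + 2 = f ∧ i + 2 = f) :=
  Iff.rfl
theorem le_tx {f : ℕ} {i j hij hj k hk} :
    (tt k hk : W f) ≤ (xx i j hij hj) ↔ False := Iff.rfl
theorem le_tt {f : ℕ} {k hk l hl} :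
    (tt k hk : W f) ≤ (tt l hl) ↔ l ≤ k := Iff.rfl

/-- the rank, as a natural number -/
def rkN {f : ℕ} : W f → ℕ
  | Sum.inl a => a.1.1.1 + a.1.2.1 - 1
  | Sum.inr k => 3 * f - 6 - k.1

theorem rkN_xx {f : ℕ} {i j hij hj} : rkN (xx i j hij hj : W f) = i + j - 1 := rfl
theorem rkN_tt {f : ℕ} {k hk} : rkN (tt k hk : W f) = 3 * f - 6 - k := rfl

theorem rkN_lt {f : ℕ} (hf : 4 ≤ f) (v : W f) : rkN v < 3 * f - 5 := by
  cases v using W.cases with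
  | hx i j hij hj => rw [rkN_xx]; omega
  | ht k hk => rw [rkN_tt]; omega

theorem rkN_mono {f : ℕ} (hf : 4 ≤ f) (a b : W f) (h : a < b) : rkN a < rkN b := by
  rw [lt_iff_le_and_ne] at h
  revert h
  cases a using W.cases <;> cases b using W.cases <;>
    simp only [le_xx, le_xt, le_tx, le_tt, ne_eq, eq_xx, eq_tt, rkN_xx, rkN_tt] <;> first | omega | (intros; omega) | tauto

/-- the preferred upper neighbour -/
def nxtW {f : ℕ} (hf : 4 ≤ f) : W f → W f
  | Sum.inl ⟨(i, j), hij⟩ => if h : j.1 + 1 < f then xx i.1 (j.1 + 1) (Nat.lt_succ_of_lt hij) h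
      else if h2 : i.1 + 2 < f then xx (i.1 + 1) (f - 1) (by omega) (by omega)
      else tt (f - 3) (by omega)
  | Sum.inr k => tt (k.1 - 1) (by omega)

theorem nxt_xx {f : ℕ} (hf : 4 ≤ f) {i j hij hj} : nxtW hf (xx i j hij hj : W f) =
    if h : j + 1 < f then xx i (j + 1) (Nat.lt_succ_of_lt hij) h
      else if h2 : i + 2 < f then xx (i + 1) (f - 1) (by omega) (by omega)
      else tt (f - 3) (by omega) := rfl
theorem nxt_tt {f : ℕ} (hf : 4 ≤ f) {k hk} : nxtW hf (tt k hk : W f) =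
    tt (k - 1) (by omega) := rfl

/-- the least element -/
def botW {f : ℕ} (hf : 4 ≤ f) : W f := xx 0 1 (by omega) (by omega)
/-- the largest element -/
def topW {f : ℕ} (hf : 4 ≤ f) : W f := tt 0 (by omega)

theorem botW_le {f : ℕ} (hf : 4 ≤ f) (v : W f) : botW hf ≤ v := by
  cases v using W.cases <;> simp only [botW, le_xx, le_xt] <;> first | omega | (intros; omega) | tauto

theorem le_topW {f : ℕ} (hf : 4 ≤ f) (v : W f) : v ≤ topW hf := by
  cases v using W.cases <;> simp only [topW, le_tt, le_xt] <;> first | omega | (intros; omega) | tauto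

theorem le_nxtW {f : ℕ} (hf : 4 ≤ f) (v : W f) : v ≤ nxtW hf v := by
  cases v using W.cases with
  | hx i j hij hj =>
    rw [nxt_xx]
    split_ifs <;> simp only [le_xx, le_xt] <;> first | omega | (intros; omega) | tauto
  | ht k hk => rw [nxt_tt, le_tt]; omega

theorem rk_nxtW {f : ℕ} (hf : 4 ≤ f) (v : W f) (hv : v ≠ topW hf) :
    rkN (nxtW hf v) = rkN v + 1 := by
  revert hv
  cases v using W.cases with
  | hx i j hij hj =>
    intro _
    rw [nxt_xx]
    split_ifs <;> simp only [rkN_xx, rkN_tt] <;> first | omega | (intros; omega) | tauto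
  | ht k hk => rw [nxt_tt, topW, ne_eq, eq_tt, rkN_tt, rkN_tt]; omega

theorem covW {f : ℕ} (hf : 4 ≤ f) (v : W f) (hv : v ≠ topW hf) :
    (∀ u, v < u → nxtW hf v ≤ u) ∨
    ∃ v', v' ≠ topW hf ∧ v' ≠ nxtW hf v ∧ (rkN v' : ℕ) = rkN v + 1 ∧ v ≤ v' ∧
      (∀ u, v < u → v' ≤ u ∨ nxtW hf v ≤ u) ∧ (∀ u, v' ≤ u → nxtW hf v ≤ u → nxtW hf v' ≤ u) ∧
      nxtW hf v ≤ nxtW hf v' := by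
  revert hv
  cases v using W.cases with
  | ht k hk =>
    intro _
    left
    intro u hu
    rw [lt_iff_le_and_ne] at hu
    revert hu
    cases u using W.cases <;> simp only [nxt_tt, le_tx, le_tt, ne_eq, eq_tt] <;> first | omega | (intros; omega) | tauto
  | hx i j hij hj =>
    intro _
    simp only [lt_iff_le_and_ne]
    by_cases h1 : i + 3 = f ∧ j + 2 = f
    · right
      refine ⟨tt (f - 1) (by omega), ?_⟩
      rw [nxt_xx, dif_pos (by omega), nxt_tt]
      refine ⟨?_, ?_, ?_, ?_, ?_, ?_, ?_⟩
      · simp only [topW, ne_eq, eq_tt]; omega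
      · simp only [ne_eq, ne_tx, not_false_eq_true]
      · rw [rkN_tt, rkN_xx]; omega
      · rw [le_xt]; omega
      · intro u; cases u using W.cases <;> simp only [le_xx, le_xt, le_tx, le_tt, ne_eq, eq_xx] <;> first | omega | (intros; omega) | tauto
      · intro u; cases u using W.cases <;> simp only [le_xx, le_xt, le_tx, le_tt, ne_eq, eq_xx] <;> first | omega | (intros; omega) | tauto
      · rw [le_xt]; omega
    by_cases h2 : i + 3 = f ∧ j + 1 = f
    · right
      refine ⟨tt (f - 2) (by omega), ?_⟩
      rw [nxt_xx, dif_neg (by omega), dif_pos (by omega), nxt_tt]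
      refine ⟨?_, ?_, ?_, ?_, ?_, ?_, ?_⟩
      · simp only [topW, ne_eq, eq_tt]; omega
      · simp only [ne_eq, ne_tx, not_false_eq_true]
      · rw [rkN_tt, rkN_xx]; omega
      · rw [le_xt]; omega
      · intro u; cases u using W.cases <;> simp only [le_xx, le_xt, le_tx, le_tt, ne_eq, eq_xx] <;> first | omega | (intros; omega) | tauto
      · intro u; cases u using W.cases <;> simp only [le_xx, le_xt, le_tx, le_tt, ne_eq, eq_xx] <;> first | omega | (intros; omega) | tauto
      · rw [le_xt]; omega
    by_cases h3 : j + 1 < f ∧ i + 1 < j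
    · right
      refine ⟨xx (i + 1) j (by omega) (by omega), ?_⟩
      rw [nxt_xx, dif_pos (by omega), nxt_xx, dif_pos (by omega)]
      refine ⟨?_, ?_, ?_, ?_, ?_, ?_, ?_⟩
      · simp only [topW, ne_eq, ne_xt, not_false_eq_true]
      · simp only [ne_eq, eq_xx]; omega
      · rw [rkN_xx, rkN_xx]; omega
      · rw [le_xx]; omega
      · intro u; cases u using W.cases <;> simp only [le_xx, le_xt, le_tx, le_tt, ne_eq, eq_xx] <;> first | omega | (intros; omega) | tauto
      · intro u; cases u using W.cases <;> simp only [le_xx, le_xt, le_tx, le_tt, ne_eq, eq_xx] <;> first | omega | (intros; omega) | tauto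
      · rw [le_xx]; omega
    · left
      intro u
      rw [nxt_xx]
      split_ifs <;> cases u using W.cases <;>
        simp only [le_xx, le_xt, le_tx, le_tt, ne_eq, eq_xx] <;> first | omega | (intros; omega) | tauto

/-- the matrix entry with natural number indices -/
def xW (f i j : ℕ) : MvPolynomial (W f) ℤ :=
  if h : i < j ∧ j < f then MvPolynomial.X (xx i j h.1 h.2)
  else if h : j < i ∧ i < f then - MvPolynomial.X (xx j i h.1 h.2) else 0

/-- the vector entry with natural number indices -/
def tW (f k : ℕ) : MvPolynomial (W f) ℤ := if h : k < f then MvPolynomial.X (tt k h) else 0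

theorem xW_eq {f i j : ℕ} (h : i < j) (hj : j < f) : xW f i j = MvPolynomial.X (xx i j h hj) :=
  dif_pos ⟨h, hj⟩

theorem xW_eq' {f i j : ℕ} (h : i < j) (hj : j < f) : xW f j i = -MvPolynomial.X (xx i j h hj) := by
  rw [xW, dif_neg (by omega), dif_pos ⟨h, hj⟩]

theorem xW_self {f i : ℕ} : xW f i i = 0 := by
  rw [xW, dif_neg (by omega), dif_neg (by omega)]

theorem tW_eq {f k : ℕ} (h : k < f) : tW f k = MvPolynomial.X (tt k h) := dif_pos h

theorem xvt_eq (f : ℕ) (i j : Fin f) : (xvt ℤ f i j : MvPolynomial (Var f) ℤ) = xW f i j := by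
  unfold xvt
  split_ifs with h h
  · exact (xW_eq (Fin.lt_def.1 h) j.2).symm
  · exact (xW_eq' (Fin.lt_def.1 h) i.2).symm
  · obtain rfl : i = j := by rcases lt_trichotomy i j with h | h | h <;> simp_all
    exact xW_self.symm

theorem tvt_eq (f : ℕ) (i : Fin f) : (tvt ℤ f i : MvPolynomial (Var f) ℤ) = tW f i :=
  (tW_eq i.2).symm

/-- the defining ideal -/
def JW (f : ℕ) : Ideal (MvPolynomial (W f) ℤ) := Jt ℤ f

/-- the Pfaffian with natural number indices -/
def pfW (f i j k l : ℕ) : MvPolynomial (W f) ℤ :=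
  xW f i j * xW f k l - xW f i k * xW f j l + xW f i l * xW f j k

/-- the entries of the product -/
def tXW (f j : ℕ) : MvPolynomial (W f) ℤ := ∑ i ∈ Finset.range f, tW f i * xW f i j

theorem pf4t_eq (f : ℕ) (i j k l : Fin f) : pf4t ℤ f i j k l = pfW f i j k l := by
  unfold pf4t
  simp only [xvt_eq]
  rfl

theorem tX_eq (f : ℕ) (j : Fin f) : tX ℤ f j = tXW f j := by
  unfold tX
  simp only [xvt_eq, tvt_eq]
  exact Fin.sum_univ_eq_sum_range (fun i => tW f i * xW f i j) f

theorem JW_eq (f : ℕ) : JW f = Ideal.span ({p | ∃ i j k l, i < j ∧ j < k ∧ k < l ∧ l < f ∧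
    p = pfW f i j k l} ∪ {p | ∃ j < f, p = tXW f j}) := by
  rw [Ideal.span_union]
  unfold JW Jt Pf4t ItX
  rw [Submodule.add_eq_sup]
  congr 2
  · ext p
    constructor
    · rintro ⟨i, j, k, l, h1, h2, h3, rfl⟩
      exact ⟨i, j, k, l, h1, h2, h3, l.2, pf4t_eq _ _ _ _ _⟩
    · rintro ⟨i, j, k, l, h1, h2, h3, h4, rfl⟩
      exact ⟨⟨i, by omega⟩, ⟨j, by omega⟩, ⟨k, by omega⟩, ⟨l, h4⟩, h1, h2, h3,
        (pf4t_eq f ⟨i, by omega⟩ ⟨j, by omega⟩ ⟨k, by omega⟩ ⟨l, h4⟩).symm⟩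
  · ext p
    constructor
    · rintro ⟨j, rfl⟩
      exact ⟨j, j.2, tX_eq _ _⟩
    · rintro ⟨j, hj, rfl⟩
      exact ⟨⟨j, hj⟩, (tX_eq f ⟨j, hj⟩).symm⟩

theorem pfW_mem {f i j k l : ℕ} (h1 : i < j) (h2 : j < k) (h3 : k < l) (h4 : l < f) :
    pfW f i j k l ∈ JW f := by
  rw [JW_eq]
  exact Ideal.subset_span (Or.inl ⟨i, j, k, l, h1, h2, h3, h4, rfl⟩)

theorem tXW_mem {f j : ℕ} (h : j < f) : tXW f j ∈ JW f := by
  rw [JW_eq]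
  exact Ideal.subset_span (Or.inr ⟨j, h, rfl⟩)

theorem xW_homog (f i j : ℕ) : (xW f i j).IsHomogeneous 1 := by
  unfold xW
  split_ifs
  · exact MvPolynomial.isHomogeneous_X _ _
  · exact (MvPolynomial.isHomogeneous_X _ _).neg
  · exact MvPolynomial.isHomogeneous_zero _ _ _

theorem tW_homog (f i : ℕ) : (tW f i).IsHomogeneous 1 := by
  unfold tW
  split_ifs
  · exact MvPolynomial.isHomogeneous_X _ _
  · exact MvPolynomial.isHomogeneous_zero _ _ _

attribute [local instance] MvPolynomial.gradedAlgebra in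
theorem JW_homog (f : ℕ) (p) (hp : p ∈ JW f) (n : ℕ) :
    MvPolynomial.homogeneousComponent n p ∈ JW f := by
  refine MvPolynomial.homogeneousComponent_mem_of_mem ?_ hp n
  rw [JW_eq]
  apply Ideal.homogeneous_span
  rintro p (⟨i, j, k, l, -, -, -, -, rfl⟩ | ⟨j, -, rfl⟩)
  · refine ⟨2, ?_⟩
    exact (((xW_homog f i j).mul (xW_homog f k l)).sub
      ((xW_homog f i k).mul (xW_homog f j l))).add ((xW_homog f i l).mul (xW_homog f j k))
  · refine ⟨2, ?_⟩
    exact MvPolynomial.IsHomogeneous.sum _ _ _ fun i _ => (tW_homog f i).mul (xW_homog f i j)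

/-! straightening -/

/-- monomials of small weight -/
def Low {σ : Type} (ω : σ → ℕ) (n : ℕ) : AddSubgroup (MvPolynomial σ ℤ) where
  carrier := {p | ∀ m ∈ p.support, Finsupp.weight ω m < n}
  zero_mem' := by simp
  add_mem' := by
    classical
    intro p q hp hq m hm
    rcases Finset.mem_union.1 (MvPolynomial.support_add hm) with h | h
    · exact hp m h
    · exact hq m h
  neg_mem' := by
    intro p hp m hm
    rw [MvPolynomial.support_neg] at hm
    exact hp m hm

theorem low_XX {σ : Type} (ω : σ → ℕ) (n : ℕ) (a b : σ) (h : ω a + ω b < n) :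
    MvPolynomial.X a * MvPolynomial.X b ∈ Low ω n := by
  intro m hm
  rw [MvPolynomial.X, MvPolynomial.X, MvPolynomial.monomial_mul] at hm
  have := Finset.mem_singleton.1 (MvPolynomial.support_monomial_subset hm)
  rw [this, map_add, Finsupp.weight_single, Finsupp.weight_single]
  simpa using h

theorem straighten {σ : Type} [Fintype σ] [PartialOrder σ] (J : Ideal (MvPolynomial σ ℤ))
    (ω : σ → ℕ) (H : ∀ a b : σ, ¬ a ≤ b → ¬ b ≤ a →
      ∃ r ∈ Low ω (ω a + ω b), MvPolynomial.X a * MvPolynomial.X b - r ∈ J) (p) :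
    ∃ q, Std q ∧ p - q ∈ J := by
  classical
  have hadd : ∀ q q' : MvPolynomial σ ℤ, Std q → Std q' → Std (q + q') := by
    intro q q' h h' m hm
    rcases Finset.mem_union.1 (MvPolynomial.support_add hm) with h1 | h1
    · exact h m h1
    · exact h' m h1
  have main : ∀ n : ℕ, ∀ p ∈ Low ω n, ∃ q, Std q ∧ p - q ∈ J := by
    intro n
    induction n with
    | zero =>
      intro p hp
      refine ⟨p, ?_, by simp⟩
      intro m hm
      exact absurd (hp m hm) (by omega)
    | succ n ih =>
      intro p hp
      have hmono : ∀ m ∈ p.support, ∀ c : ℤ,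
          ∃ q, Std q ∧ MvPolynomial.monomial m c - q ∈ J := by
        intro m hm c
        by_cases hs : ∀ a ∈ m.support, ∀ b ∈ m.support, a ≤ b ∨ b ≤ a
        · refine ⟨MvPolynomial.monomial m c, ?_, by simp⟩
          intro m' hm'
          rw [Finset.mem_singleton.1 (MvPolynomial.support_monomial_subset hm')]
          exact hs
        · push Not at hs
          obtain ⟨a, ha, b, hb, hab, hba⟩ := hs
          obtain ⟨r, hr, hrJ⟩ := H a b hab hba
          have hne : a ≠ b := by rintro rfl; exact hab le_rfl
          obtain ⟨m', rfl⟩ : ∃ m', m = Finsupp.single a 1 + Finsupp.single b 1 + m' := by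
            refine ⟨m - (Finsupp.single a 1 + Finsupp.single b 1), ?_⟩
            rw [add_tsub_cancel_of_le]
            intro y
            simp only [Finsupp.mem_support_iff] at ha hb
            simp only [Finsupp.add_apply, Finsupp.single_apply]
            rcases eq_or_ne a y with rfl | h1
            · rw [if_pos rfl, if_neg hne.symm]; omega
            · rw [if_neg h1]
              rcases eq_or_ne b y with rfl | h2
              · rw [if_pos rfl]; omega
              · rw [if_neg h2]; omega
          have hw := hp _ hm
          rw [map_add, map_add, Finsupp.weight_single, Finsupp.weight_single] at hw
          simp only [smul_eq_mul, one_mul] at hw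
          obtain ⟨q, hq, hqJ⟩ := ih (r * MvPolynomial.monomial m' c) (by
            intro y hy
            obtain ⟨y1, h1, y2, h2, rfl⟩ := Finset.mem_add.1 (MvPolynomial.support_mul _ _ hy)
            rw [Finset.mem_singleton.1 (MvPolynomial.support_monomial_subset h2), map_add]
            have := hr y1 h1
            omega)
          refine ⟨q, hq, ?_⟩
          have h1 := Ideal.add_mem _ (Ideal.mul_mem_right (MvPolynomial.monomial m' c) _ hrJ) hqJ
          convert h1 using 1
          have : (MvPolynomial.monomial (Finsupp.single a 1 + Finsupp.single b 1 + m') c :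
            MvPolynomial σ ℤ) =
            MvPolynomial.X a * MvPolynomial.X b * MvPolynomial.monomial m' c := by
            simp [MvPolynomial.X, MvPolynomial.monomial_mul]
          rw [this]; ring
      choose! g hg1 hg2 using hmono
      refine ⟨∑ m ∈ p.support, g m (p.coeff m), ?_, ?_⟩
      · refine Finset.sum_induction _ Std hadd (fun m hm => absurd hm (by simp)) ?_
        exact fun m hm => hg1 m hm _
      · have : p - ∑ m ∈ p.support, g m (p.coeff m) =
            ∑ m ∈ p.support, (MvPolynomial.monomial m (p.coeff m) - g m (p.coeff m)) := by
          rw [Finset.sum_sub_distrib, ← MvPolynomial.as_sum]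
        rw [this]
        exact Ideal.sum_mem _ fun m hm => hg2 m hm _
  obtain ⟨n, hn⟩ : ∃ n, p ∈ Low ω n := by
    refine ⟨p.support.sup (Finsupp.weight ω) + 1, fun m hm => ?_⟩
    exact Nat.lt_succ_of_le (Finset.le_sup (f := Finsupp.weight ω) hm)
  exact main n p hn

/-- weights of the vector variables -/
def ωt (f k : ℕ) : ℕ := if k + 1 = f then 3 * f ^ 2 else if k + 2 = f then 2 * f ^ 2 else 0

/-- weights -/
def ωW {f : ℕ} : W f → ℕ
  | Sum.inl a => (a.1.2.1 - a.1.1.1) ^ 2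
  | Sum.inr k => ωt f k.1

theorem ωW_xx {f i j hij hj} : ωW (xx i j hij hj : W f) = (j - i) ^ 2 := rfl
theorem ωW_tt {f k hk} : ωW (tt k hk : W f) = ωt f k := rfl

theorem low_tx {f : ℕ} (i k j n : ℕ) (h : ωt f i + (k - j) ^ 2 + (j - k) ^ 2 < n) :
    tW f i * xW f k j ∈ Low (ωW (f := f)) n := by
  unfold tW xW
  split_ifs with h1 h2 h3
  · apply low_XX
    rw [ωW_xx, ωW_tt]; omega
  · rw [mul_neg]
    apply neg_mem
    apply low_XX
    rw [ωW_xx, ωW_tt]; omega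
  all_goals simp

theorem str_xx {f : ℕ} (i k l j : ℕ) (h1 : i < k) (h2 : k < l) (h3 : l < j) (h4 : j < f) :
    ∃ r ∈ Low (ωW (f := f)) (ωW (xx i j (by omega) h4 : W f) +
      ωW (xx k l h2 (by omega) : W f)),
      MvPolynomial.X (xx i j (by omega) h4) * MvPolynomial.X (xx k l h2 (by omega)) - r ∈ JW f := by
  have := pfW_mem h1 h2 h3 h4
  unfold pfW at this
  rw [xW_eq h1 (by omega), xW_eq h3 h4, xW_eq (h1.trans h2) (by omega), xW_eq (h2.trans h3) h4,
    xW_eq (by omega) h4, xW_eq h2 (by omega)] at this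
  rw [ωW_xx, ωW_xx]
  obtain ⟨a, rfl⟩ := Nat.exists_eq_add_of_lt h1
  obtain ⟨b, rfl⟩ := Nat.exists_eq_add_of_lt h2
  obtain ⟨c, rfl⟩ := Nat.exists_eq_add_of_lt h3
  refine ⟨MvPolynomial.X (xx i (i + a + 1 + b + 1) (by omega) (by omega)) *
    MvPolynomial.X (xx (i + a + 1) (i + a + 1 + b + 1 + c + 1) (by omega) h4) -
    MvPolynomial.X (xx i (i + a + 1) (by omega) (by omega)) *
    MvPolynomial.X (xx (i + a + 1 + b + 1) (i + a + 1 + b + 1 + c + 1) (by omega) h4), ?_, ?_⟩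
  rotate_left
  · convert this using 1
    ring
  · apply sub_mem
    · apply low_XX
      rw [ωW_xx, ωW_xx]
      have e1 : i + a + 1 + b + 1 + c + 1 - i = a + b + c + 3 := by omega
      have e2 : i + a + 1 + b + 1 - (i + a + 1) = b + 1 := by omega
      have e3 : i + a + 1 + b + 1 - i = a + b + 2 := by omega
      have e4 : i + a + 1 + b + 1 + c + 1 - (i + a + 1) = b + c + 2 := by omega
      rw [e1, e2, e3, e4]
      nlinarith
    · apply low_XX
      rw [ωW_xx, ωW_xx]
      have e1 : i + a + 1 + b + 1 + c + 1 - i = a + b + c + 3 := by omega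
      have e2 : i + a + 1 + b + 1 - (i + a + 1) = b + 1 := by omega
      have e3 : i + a + 1 - i = a + 1 := by omega
      have e4 : i + a + 1 + b + 1 + c + 1 - (i + a + 1 + b + 1) = c + 1 := by omega
      rw [e1, e2, e3, e4]
      nlinarith

theorem sq_lt {f a : ℕ} (h : a < f) : a ^ 2 < f ^ 2 := Nat.pow_lt_pow_left h (by norm_num)

theorem sq_lt' {f i j : ℕ} (hi : i < f) (hj : j < f) : (i - j) ^ 2 + (j - i) ^ 2 < f ^ 2 := by
  rcases le_total i j with h | h
  · have : i - j = 0 := by omega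
    rw [this]
    simpa using sq_lt (show j - i < f by omega)
  · have : j - i = 0 := by omega
    rw [this]
    simpa using sq_lt (show i - j < f by omega)

theorem str_t1 {f : ℕ} (hf : 4 ≤ f) (j : ℕ) (hj : j < f - 1) :
    ∃ r ∈ Low (ωW (f := f)) (ωW (xx j (f - 1) hj (by omega) : W f) +
      ωW (tt (f - 1) (by omega) : W f)),
      MvPolynomial.X (xx j (f - 1) hj (by omega)) * MvPolynomial.X (tt (f - 1) (by omega)) - r
        ∈ JW f := by
  have := tXW_mem (f := f) (j := j) (by omega)
  unfold tXW at this
  obtain ⟨g, rfl⟩ : ∃ g, f = g + 1 := ⟨f - 1, by omega⟩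
  rw [Finset.sum_range_succ, xW_eq' (by omega) (by omega), tW_eq (by omega)] at this
  refine ⟨∑ x ∈ Finset.range g, tW (g + 1) x * xW (g + 1) x j, ?_, ?_⟩
  rotate_left
  · convert neg_mem this using 1
    change MvPolynomial.X (xx j g hj _) * MvPolynomial.X (tt g _) - _ = _
    ring
  · apply sum_mem
    intro i hi
    rw [Finset.mem_range] at hi
    apply low_tx
    rw [ωW_xx, ωW_tt]
    have h1 : ωt (g + 1) (g + 1 - 1) = 3 * (g + 1) ^ 2 := if_pos (by omega)
    have h2 : ωt (g + 1) i ≤ 2 * (g + 1) ^ 2 := by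
      unfold ωt; rw [if_neg (by omega)]; split_ifs <;> simp
    have h3 := sq_lt' (f := g + 1) (i := i) (j := j) (by omega) (by omega)
    rw [h1]
    omega

theorem str_t2 {f : ℕ} (hf : 4 ≤ f) :
    ∃ r ∈ Low (ωW (f := f)) (ωW (xx (f - 2) (f - 1) (by omega) (by omega) : W f) +
      ωW (tt (f - 2) (by omega) : W f)),
      MvPolynomial.X (xx (f - 2) (f - 1) (by omega) (by omega)) *
        MvPolynomial.X (tt (f - 2) (by omega)) - r ∈ JW f := by
  have := tXW_mem (f := f) (j := f - 1) (by omega)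
  unfold tXW at this
  obtain ⟨g, rfl⟩ : ∃ g, f = g + 2 := ⟨f - 2, by omega⟩
  rw [Finset.sum_range_succ, Finset.sum_range_succ, show g + 2 - 1 = g + 1 from rfl, xW_self,
    mul_zero, add_zero, xW_eq (by omega) (by omega), tW_eq (by omega)] at this
  refine ⟨-∑ x ∈ Finset.range g, tW (g + 2) x * xW (g + 2) x (g + 1), ?_, ?_⟩
  rotate_left
  · convert this using 1
    change MvPolynomial.X (xx g (g + 1) _ _) * MvPolynomial.X (tt g _) - _ = _
    ring
  · apply neg_mem
    apply sum_mem
    intro i hi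
    rw [Finset.mem_range] at hi
    apply low_tx
    rw [ωW_xx, ωW_tt]
    have h1 : ωt (g + 2) (g + 2 - 2) = 2 * (g + 2) ^ 2 := by
      unfold ωt; rw [if_neg (by omega), if_pos (by omega)]
    have h2 : ωt (g + 2) i = 0 := by
      unfold ωt; rw [if_neg (by omega), if_neg (by omega)]
    have h3 := sq_lt' (f := g + 2) (i := i) (j := g + 1) (by omega) (by omega)
    rw [h1]
    omega

theorem str_xt {f : ℕ} (hf : 4 ≤ f) {i j hij hj k hk}
    (h : ¬ (xx i j hij hj : W f) ≤ tt k hk) :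
    ∃ r ∈ Low (ωW (f := f)) (ωW (xx i j hij hj : W f) + ωW (tt k hk : W f)),
      MvPolynomial.X (xx i j hij hj) * MvPolynomial.X (tt k hk) - r ∈ JW f := by
  rw [le_xt] at h
  by_cases h1 : k + 1 = f ∧ j + 1 = f
  · obtain rfl : k = f - 1 := by omega
    obtain rfl : j = f - 1 := by omega
    exact str_t1 hf i hij
  · have h2 : k + 2 = f ∧ i + 2 = f := by tauto
    obtain rfl : k = f - 2 := by omega
    obtain rfl : i = f - 2 := by omega
    obtain rfl : j = f - 1 := by omega
    exact str_t2 hf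

theorem stdW {f : ℕ} (hf : 4 ≤ f) (p : MvPolynomial (W f) ℤ) : ∃ q, Std q ∧ p - q ∈ JW f := by
  apply straighten (JW f) ωW
  intro a b
  cases a using W.cases with
  | hx i j hij hj =>
    cases b using W.cases with
    | hx k l hkl hl =>
      rw [le_xx, le_xx]
      intro h1 h2
      by_cases h : i < k
      · exact str_xx i k l j h hkl (by omega) hj
      · rw [add_comm, mul_comm]
        exact str_xx k i j l (by omega) hij (by omega) hl
    | ht k hk =>
      intro h1 h2
      exact str_xt hf h1
  | ht k hk =>
    cases b using W.cases with
    | hx i j hij hj =>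
      intro h1 h2
      rw [add_comm, mul_comm]
      exact str_xt hf h2
    | ht l hl =>
      rw [le_tt, le_tt]; omega

/-! ### Part III c: the parametrization -/

/-- parameters -/
inductive GG : Type
  | u (k : ℕ) : GG
  | v (k : ℕ) : GG
  | w (k : ℕ) : GG
  | c : GG

open MvPolynomial in
/-- two by two minors -/
def mm (a b : ℕ) : MvPolynomial GG ℤ :=
  X (GG.u a) * X (GG.v b) - X (GG.u b) * X (GG.v a)

open MvPolynomial in
/-- images of vector variables -/
def φt (f k : ℕ) : MvPolynomial GG ℤ :=
  if k + 1 = f then ∑ i ∈ Finset.range (f - 2), X (GG.w i) * mm i (f - 2)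
  else if k + 2 = f then - ∑ i ∈ Finset.range (f - 2), X (GG.w i) * mm i (f - 1)
  else X (GG.w k) * mm (f - 2) (f - 1)

/-- images of the variables -/
def φvar {f : ℕ} : W f → MvPolynomial GG ℤ
  | Sum.inl a => MvPolynomial.X GG.c * mm a.1.1.1 a.1.2.1
  | Sum.inr k => φt f k.1

theorem φvar_xx {f i j hij hj} : φvar (xx i j hij hj : W f) = MvPolynomial.X GG.c * mm i j := rfl
theorem φvar_tt {f k hk} : φvar (tt k hk : W f) = φt f k := rfl

/-- the parametrization -/
def φW (f : ℕ) : MvPolynomial (W f) ℤ →ₐ[ℤ] MvPolynomial GG ℤ := MvPolynomial.aeval φvar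

theorem φW_x {f i j : ℕ} (hi : i < f) (hj : j < f) :
    φW f (xW f i j) = MvPolynomial.X GG.c * mm i j := by
  rcases lt_trichotomy i j with h | rfl | h
  · rw [xW_eq h hj, φW, MvPolynomial.aeval_X, φvar_xx]
  · rw [xW_self, map_zero]; unfold mm; ring
  · rw [xW_eq' h hi, map_neg, φW, MvPolynomial.aeval_X, φvar_xx]; unfold mm; ring

theorem φW_t {f k : ℕ} (hk : k < f) : φW f (tW f k) = φt f k := by
  rw [tW_eq hk, φW, MvPolynomial.aeval_X, φvar_tt]

theorem φW_J {f : ℕ} (hf : 4 ≤ f) : JW f ≤ RingHom.ker (φW f) := by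
  rw [JW_eq, Ideal.span_le]
  rintro p (⟨i, j, k, l, h1, h2, h3, h4, rfl⟩ | ⟨j, hj, rfl⟩)
  · rw [SetLike.mem_coe, RingHom.mem_ker]
    unfold pfW
    simp only [map_add, map_sub, map_mul]
    rw [φW_x (by omega) (by omega), φW_x (by omega) (by omega), φW_x (by omega) (by omega),
      φW_x (by omega) (by omega), φW_x (by omega) (by omega), φW_x (by omega) (by omega)]
    unfold mm
    ring
  · rw [SetLike.mem_coe, RingHom.mem_ker]
    unfold tXW
    rw [map_sum]
    obtain ⟨g, rfl⟩ : ∃ g, f = g + 2 := ⟨f - 2, by omega⟩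
    have : ∀ i ∈ Finset.range (g + 2), φW (g + 2) (tW (g + 2) i * xW (g + 2) i j) =
        φt (g + 2) i * (MvPolynomial.X GG.c * mm i j) := by
      intro i hi
      rw [Finset.mem_range] at hi
      rw [map_mul, φW_t hi, φW_x hi hj]
    rw [Finset.sum_congr rfl this, Finset.sum_range_succ, Finset.sum_range_succ]
    have h1 : φt (g + 2) (g + 1) =
      ∑ i ∈ Finset.range g, MvPolynomial.X (GG.w i) * mm i g := if_pos rfl
    have h2 : φt (g + 2) g =
        - ∑ i ∈ Finset.range g, MvPolynomial.X (GG.w i) * mm i (g + 1) := by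
      unfold φt; rw [if_neg (by omega), if_pos rfl]; rfl
    have h3 : ∀ i ∈ Finset.range g, φt (g + 2) i * (MvPolynomial.X GG.c * mm i j) =
        MvPolynomial.X (GG.w i) * mm g (g + 1) * (MvPolynomial.X GG.c * mm i j) := by
      intro i hi
      rw [Finset.mem_range] at hi
      unfold φt; rw [if_neg (by omega), if_neg (by omega)]; rfl
    rw [Finset.sum_congr rfl h3, h1, h2, neg_mul, Finset.sum_mul, Finset.sum_mul,
      ← sub_eq_add_neg, ← Finset.sum_sub_distrib, ← Finset.sum_add_distrib]
    apply Finset.sum_eq_zero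
    intro i _
    unfold mm
    ring

/-- vanishing parameters -/
def Zs (a b : ℕ) (e : Prop) (d : ℕ) : GG → Prop
  | GG.u k => k < a
  | GG.v k => k < b
  | GG.w k => d < k
  | GG.c => e

/-- vanishing parameters for a variable -/
def ZW {f : ℕ} : W f → GG → Prop
  | Sum.inl a => Zs a.1.1.1 a.1.2.1 False f
  | Sum.inr k => Zs (if f ≤ k.1 + 2 then f - 3 else f - 2) (if f ≤ k.1 + 1 then f - 2 else f - 1)
      True k.1

theorem ZW_xx {f i j hij hj} : ZW (xx i j hij hj : W f) = Zs i j False f := rfl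
theorem ZW_tt {f k hk} : ZW (tt k hk : W f) =
  Zs (if f ≤ k + 2 then f - 3 else f - 2) (if f ≤ k + 1 then f - 2 else f - 1) True k := rfl

theorem ZW_mono {f : ℕ} (hf : 4 ≤ f) {v v' : W f} (h : v ≤ v') (g : GG) : ZW v g → ZW v' g := by
  revert h
  cases v using W.cases <;> cases v' using W.cases <;>
    simp only [le_xx, le_xt, le_tx, le_tt, ZW_xx, ZW_tt] <;> cases g <;> simp only [Zs] <;>
    intros <;> (try split_ifs) <;> (try split_ifs at *) <;> first | omega | tauto

open scoped Classical in
/-- the killing map -/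
def kill (Z : GG → Prop) : MvPolynomial GG ℤ →ₐ[ℤ] MvPolynomial GG ℤ :=
  MvPolynomial.aeval fun g => if Z g then 0 else MvPolynomial.X g

open scoped Classical in
theorem kill_X (Z g) : kill Z (MvPolynomial.X g) = if Z g then 0 else MvPolynomial.X g :=
  MvPolynomial.aeval_X _ _

theorem kill_kill {Z Z' : GG → Prop} (h : ∀ g, Z g → Z' g) (p) :
    kill Z' (kill Z p) = kill Z' p := by
  rw [← AlgHom.comp_apply]
  congr 1
  apply MvPolynomial.algHom_ext
  intro g
  rw [AlgHom.comp_apply, kill_X, kill_X]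
  split_ifs with h1 h2 h2
  · simp
  · exact absurd (h g h1) h2
  · rw [kill_X, if_pos h2]
  · rw [kill_X, if_neg h2]

/-- the kernel ideals -/
def KW (f : ℕ) (v : W f) : Ideal (MvPolynomial (W f) ℤ) :=
  RingHom.ker ((kill (ZW v)).comp (φW f))

theorem mem_KW {f : ℕ} {v : W f} {p} : p ∈ KW f v ↔ kill (ZW v) (φW f p) = 0 := Iff.rfl

theorem kill_c {Z : GG → Prop} : MvPolynomial.constantCoeff (kill Z (MvPolynomial.X GG.c)) = 0 := by
  rw [kill_X]; split_ifs <;> simp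

theorem kill_w {Z : GG → Prop} {k} :
    MvPolynomial.constantCoeff (kill Z (MvPolynomial.X (GG.w k))) = 0 := by
  rw [kill_X]; split_ifs <;> simp

theorem KW_const {f : ℕ} (v : W f) (p) (h : p ∈ KW f v) : MvPolynomial.constantCoeff p = 0 := by
  have : (MvPolynomial.constantCoeff.comp (((kill (ZW v)).comp (φW f)).toRingHom)) =
      MvPolynomial.constantCoeff := by
    apply MvPolynomial.ringHom_ext
    · intro r
      simp
    · intro u
      change MvPolynomial.constantCoeff (kill (ZW v) (φW f (MvPolynomial.X u))) = _
      rw [φW, MvPolynomial.aeval_X]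
      cases u using W.cases with
      | hx i j hij hj =>
        rw [φvar_xx]
        simp only [map_mul, kill_c]
        simp
      | ht k hk =>
        rw [φvar_tt]
        unfold φt
        split_ifs <;> simp only [map_mul, map_sum, kill_w, map_neg] <;> simp
  rw [← this]
  change MvPolynomial.constantCoeff (kill (ZW v) (φW f p)) = 0
  rw [mem_KW.1 h, map_zero]

theorem kill_mm (Z : GG → Prop) (i j : ℕ) : kill Z (mm i j) =
    kill Z (MvPolynomial.X (GG.u i)) * kill Z (MvPolynomial.X (GG.v j)) -
    kill Z (MvPolynomial.X (GG.u j)) * kill Z (MvPolynomial.X (GG.v i)) := by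
  unfold mm; simp

theorem kill_z {Z : GG → Prop} {g : GG} (h : Z g) : kill Z (MvPolynomial.X g) = 0 := by
  rw [kill_X, if_pos h]

theorem kill_nz {Z : GG → Prop} {g : GG} (h : ¬ Z g) :
    kill Z (MvPolynomial.X g) = MvPolynomial.X g := by
  rw [kill_X, if_neg h]

theorem KW_X_mem {f : ℕ} (hf : 4 ≤ f) (v u : W f) (h : ¬ v ≤ u) : MvPolynomial.X u ∈ KW f v := by
  rw [mem_KW, φW, MvPolynomial.aeval_X]
  revert h
  cases v using W.cases with
  | hx i j hij hj =>
    cases u using W.cases with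
    | hx k l hkl hl =>
      rw [le_xx, φvar_xx, map_mul, kill_mm, ZW_xx]
      intro h
      have e1 : kill (Zs i j False f) (MvPolynomial.X (GG.v k)) = 0 :=
        kill_z (show k < j by omega)
      rw [e1]
      by_cases h1 : k < i
      · rw [kill_z (Z := Zs i j False f) (g := GG.u k) h1]; ring
      · rw [kill_z (Z := Zs i j False f) (g := GG.v l) (show l < j by omega)]; ring
    | ht k hk =>
      rw [le_xt, φvar_tt, ZW_xx]
      intro h
      by_cases h1 : k + 1 = f ∧ j + 1 = f
      · unfold φt
        rw [if_pos h1.1, map_sum]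
        apply Finset.sum_eq_zero
        intro l hl
        rw [Finset.mem_range] at hl
        rw [map_mul, kill_mm, kill_z (Z := Zs i j False f) (g := GG.v l) (show l < j by omega),
          kill_z (Z := Zs i j False f) (g := GG.v (f - 2)) (show f - 2 < j by omega)]
        ring
      · have h2 : k + 2 = f ∧ i + 2 = f := by tauto
        unfold φt
        rw [if_neg (by omega), if_pos h2.1, map_neg, map_sum, neg_eq_zero]
        apply Finset.sum_eq_zero
        intro l hl
        rw [Finset.mem_range] at hl
        rw [map_mul, kill_mm, kill_z (Z := Zs i j False f) (g := GG.v l) (show l < j by omega),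
          kill_z (Z := Zs i j False f) (g := GG.u l) (show l < i by omega)]
        ring
  | ht k hk =>
    cases u using W.cases with
    | hx i j hij hj =>
      intro _
      rw [φvar_xx, map_mul, kill_z (g := GG.c) trivial, zero_mul]
    | ht l hl =>
      rw [le_tt, φvar_tt, ZW_tt]
      intro h
      unfold φt
      split_ifs
      all_goals try omega
      · rw [map_sum]
        apply Finset.sum_eq_zero
        intro i hi
        rw [Finset.mem_range] at hi
        rw [map_mul, kill_mm, kill_z (g := GG.v i) (show i < f - 1 by omega),
          kill_z (g := GG.v (f - 2)) (show f - 2 < f - 1 by omega)]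
        ring
      · rw [map_sum]
        apply Finset.sum_eq_zero
        intro i hi
        rw [Finset.mem_range] at hi
        rw [map_mul, kill_mm, kill_z (g := GG.v i) (show i < f - 1 by omega),
          kill_z (g := GG.v (f - 2)) (show f - 2 < f - 1 by omega)]
        ring
      · rw [map_neg, map_sum, neg_eq_zero]
        apply Finset.sum_eq_zero
        intro i hi
        rw [Finset.mem_range] at hi
        rw [map_mul, kill_mm, kill_z (g := GG.v i) (show i < f - 1 by omega),
          kill_z (g := GG.u i) (show i < f - 2 by omega)]
        ring
      · rw [map_mul, kill_z (g := GG.w l) (show k < l by omega)]; ring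

open scoped Classical in
/-- evaluation at the indicator -/
def evZ (Z : GG → Prop) : MvPolynomial GG ℤ →+* ℤ := MvPolynomial.eval fun g => if Z g then 0 else 1

open scoped Classical in
theorem evZ_X (Z g) : evZ Z (MvPolynomial.X g) = if Z g then 0 else 1 := MvPolynomial.eval_X _

theorem evZ_z {Z : GG → Prop} {g : GG} (h : Z g) : evZ Z (MvPolynomial.X g) = 0 := by
  rw [evZ_X, if_pos h]

theorem evZ_nz {Z : GG → Prop} {g : GG} (h : ¬ Z g) : evZ Z (MvPolynomial.X g) = 1 := by
  rw [evZ_X, if_neg h]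

theorem evZ_kill (Z : GG → Prop) (p) : evZ Z (kill Z p) = evZ Z p := by
  change ((evZ Z).comp (kill Z).toRingHom) p = _
  congr 1
  apply MvPolynomial.ringHom_ext
  · intro r; simp
  · intro g
    change evZ Z (kill Z (MvPolynomial.X g)) = _
    by_cases h : Z g
    · rw [kill_z h, evZ_z h, map_zero]
    · rw [kill_nz h]

theorem evZ_mm (Z : GG → Prop) (i j : ℕ) : evZ Z (mm i j) =
    evZ Z (MvPolynomial.X (GG.u i)) * evZ Z (MvPolynomial.X (GG.v j)) -
    evZ Z (MvPolynomial.X (GG.u j)) * evZ Z (MvPolynomial.X (GG.v i)) := by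
  unfold mm; simp

theorem evZ_φ {f : ℕ} (hf : 4 ≤ f) (v : W f) : evZ (ZW v) (φvar v) ≠ 0 := by
  cases v using W.cases with
  | hx i j hij hj =>
    rw [φvar_xx, map_mul, evZ_mm, ZW_xx, evZ_nz (g := GG.c) (fun h => h),
      evZ_nz (g := GG.u i) (show ¬ i < i by omega), evZ_nz (g := GG.v j) (show ¬ j < j by omega),
      evZ_z (g := GG.v i) hij]
    simp
  | ht k hk =>
    rw [φvar_tt, ZW_tt]
    unfold φt
    obtain ⟨g, rfl⟩ : ∃ g, f = g + 3 := ⟨f - 3, by omega⟩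
    split_ifs
    all_goals try omega
    · rw [map_sum, show g + 3 - 2 = g + 1 from rfl, Finset.sum_range_succ, Finset.sum_eq_zero]
      · rw [map_mul, evZ_mm, evZ_nz (g := GG.w g) (show ¬ k < g by omega),
          evZ_nz (g := GG.u g) (show ¬ g < g by omega),
          evZ_nz (g := GG.v (g + 1)) (show ¬ g + 1 < g + 1 by omega),
          evZ_z (g := GG.v g) (show g < g + 1 by omega)]
        simp
      · intro i hi
        rw [Finset.mem_range] at hi
        rw [map_mul, evZ_mm, evZ_z (g := GG.u i) (show i < g by omega),
          evZ_z (g := GG.v i) (show i < g + 1 by omega)]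
        ring
    · rw [map_neg, map_sum, show g + 3 - 2 = g + 1 from rfl, Finset.sum_range_succ,
        Finset.sum_eq_zero]
      · rw [map_mul, evZ_mm, evZ_nz (g := GG.w g) (show ¬ k < g by omega),
          evZ_nz (g := GG.u g) (show ¬ g < g by omega),
          evZ_nz (g := GG.v (g + 3 - 1)) (show ¬ g + 3 - 1 < g + 3 - 1 by omega),
          evZ_z (g := GG.v g) (show g < g + 3 - 1 by omega)]
        simp
      · intro i hi
        rw [Finset.mem_range] at hi
        rw [map_mul, evZ_mm, evZ_z (g := GG.u i) (show i < g by omega),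
          evZ_z (g := GG.v i) (show i < g + 3 - 1 by omega)]
        ring
    · rw [map_mul, evZ_mm, evZ_nz (g := GG.w k) (show ¬ k < k by omega),
          evZ_nz (g := GG.u (g + 3 - 2)) (show ¬ g + 3 - 2 < g + 3 - 2 by omega),
          evZ_nz (g := GG.v (g + 3 - 1)) (show ¬ g + 3 - 1 < g + 3 - 1 by omega),
          evZ_z (g := GG.v (g + 3 - 2)) (show g + 3 - 2 < g + 3 - 1 by omega)]
      simp

theorem KW_X_notMem {f : ℕ} (hf : 4 ≤ f) (v : W f) : MvPolynomial.X v ∉ KW f v := by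
  intro h
  rw [mem_KW, φW, MvPolynomial.aeval_X] at h
  apply evZ_φ hf v
  rw [← evZ_kill, h, map_zero]

/-- the straightening structure -/
def DW {f : ℕ} (hf : 4 ≤ f) : RASL (W f) where
  J := JW f
  K := KW f
  prime v := RingHom.ker_isPrime _
  J_le v := by
    intro p hp
    have := φW_J hf hp
    rw [RingHom.mem_ker] at this
    rw [mem_KW, this, map_zero]
  X_mem := KW_X_mem hf
  X_notMem := KW_X_notMem hf
  mono v v' h p hp := by
    rw [mem_KW] at hp ⊢
    rw [← kill_kill (ZW_mono hf h), hp, map_zero]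
  const := KW_const
  std := stdW hf
  homog := JW_homog f
  N := 3 * f - 5
  rk v := ⟨rkN v, rkN_lt hf v⟩
  bot := botW hf
  top := topW hf
  bot_le := botW_le hf
  le_top := le_topW hf
  rk_lt := rkN_mono hf
  rk_top := by
    change rkN (tt 0 _ : W f) + 1 = _
    rw [rkN_tt]; omega
  rk_bot := rfl
  nxt := nxtW hf
  le_nxt v _ := le_nxtW hf v
  rk_nxt := rk_nxtW hf
  cov := covW hf

/-! ### Part III d: factoriality -/

theorem ufd_of_chart {U A L : Type} [CommRing U] [IsDomain U] [UniqueFactorizationMonoid U]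
    [CommRing A] [IsDomain A] [IsNoetherianRing A] [CommRing L] [Algebra U L] (y : U) (hy : y ≠ 0)
    [IsLocalization.Away y L] (ι : U →+* A) (ψ : A →+* L)
    (hψ : ∀ u, ψ (ι u) = algebraMap U L u) (hι : ∀ a, ∃ n u, ι y ^ n * a = ι u)
    (hp : Prime (ι y)) : UniqueFactorizationMonoid A := by
  letI := ψ.toAlgebra
  have hinj : Function.Injective (algebraMap U L) :=
    IsLocalization.injective L (powers_le_nonZeroDivisors_of_noZeroDivisors hy)
  have hL : IsDomain L := IsLocalization.Away.isDomain L hy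
  have : UniqueFactorizationMonoid L :=
    UniqueFactorizationMonoid.of_isLocalization (Submonoid.powers y) L
  have hψi : ∀ a, ψ a = 0 → a = 0 := by
    intro a ha
    obtain ⟨n, u, h⟩ := hι a
    have h1 := congrArg ψ h
    rw [map_mul, ha, mul_zero, hψ] at h1
    have h2 : u = 0 := hinj (by rw [← h1, map_zero])
    rw [h2, map_zero] at h
    exact (mul_eq_zero.1 h).resolve_left (pow_ne_zero _ hp.ne_zero)
  have : IsLocalization.Away (ι y) L := by
    rw [IsLocalization.Away, isLocalization_iff]
    refine ⟨?_, ?_, ?_⟩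
    · rintro ⟨_, n, rfl⟩
      change IsUnit (ψ (ι y ^ n))
      rw [map_pow, hψ]
      exact (IsLocalization.Away.algebraMap_isUnit y).pow n
    · intro z
      obtain ⟨n, u, h⟩ := IsLocalization.Away.surj y z
      refine ⟨(ι u, ⟨ι y ^ n, n, rfl⟩), ?_⟩
      change z * ψ (ι y ^ n) = ψ (ι u)
      rw [map_pow, hψ, hψ, h]
    · intro a b h
      refine ⟨1, ?_⟩
      rw [sub_eq_zero.1 (hψi (a - b) (by rw [map_sub, sub_eq_zero]; exact h))]
  exact (UniqueFactorizationMonoid.iff_of_isLocalizationAway_of_prime hp L).2 ‹_›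

/-- the chart variables -/
def good {f : ℕ} : W f → Prop
  | Sum.inl a => a.1.1.1 ≤ 1
  | Sum.inr k => 2 ≤ k.1

theorem good_xx {f i j hij hj} : good (xx i j hij hj : W f) ↔ i ≤ 1 := Iff.rfl
theorem good_tt {f k hk} : good (tt k hk : W f) ↔ 2 ≤ k := Iff.rfl

/-- the chart ring -/
abbrev UU (f : ℕ) := MvPolynomial {v : W f // good v} ℤ

/-- first row -/
def pU (f i : ℕ) : UU f :=
  if h : 0 < i ∧ i < f then MvPolynomial.X ⟨xx 0 i h.1 h.2, good_xx.2 (by omega)⟩ else 0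

/-- second row -/
def qU (f i : ℕ) : UU f :=
  if i = 0 then - pU f 1 else
  if h : 1 < i ∧ i < f then MvPolynomial.X ⟨xx 1 i h.1 h.2, good_xx.2 (by omega)⟩ else 0

/-- vector -/
def sU (f k : ℕ) : UU f :=
  if h : 2 ≤ k ∧ k < f then MvPolynomial.X ⟨tt k h.2, good_tt.2 h.1⟩ else 0

section chart
variable {f : ℕ} (L : Type) [CommRing L] [Algebra (UU f) L] (d : L)

/-- the images of the vector variables -/
def τU (k : ℕ) : L :=
  if k = 0 then d * ∑ i ∈ Finset.range f, algebraMap (UU f) L (sU f i * qU f i)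
  else if k = 1 then - (d * ∑ i ∈ Finset.range f, algebraMap (UU f) L (sU f i * pU f i))
  else algebraMap (UU f) L (sU f k)

/-- images of variables -/
def ψvar : W f → L
  | Sum.inl a => d * algebraMap (UU f) L (pU f a.1.1.1 * qU f a.1.2.1 - pU f a.1.2.1 * qU f a.1.1.1)
  | Sum.inr k => τU (f := f) L d k.1

theorem ψvar_xx {i j hij hj} : ψvar L d (xx i j hij hj : W f) =
  d * algebraMap (UU f) L (pU f i * qU f j - pU f j * qU f i) := rfl
theorem ψvar_tt {k hk} : ψvar L d (tt k hk : W f) = τU (f := f) L d k := rfl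

/-- the chart map -/
def ψP : MvPolynomial (W f) ℤ →+* L := MvPolynomial.eval₂Hom (Int.castRingHom L) (ψvar L d)

theorem ψP_X (v : W f) : ψP L d (MvPolynomial.X v) = ψvar L d v := MvPolynomial.eval₂Hom_X' _ _ _

theorem ψP_x {i j : ℕ} (hi : i < f) (hj : j < f) : ψP L d (xW f i j) =
    d * algebraMap (UU f) L (pU f i * qU f j - pU f j * qU f i) := by
  rcases lt_trichotomy i j with h | rfl | h
  · rw [xW_eq h hj, ψP_X, ψvar_xx]
  · rw [xW_self, map_zero, sub_self, map_zero, mul_zero]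
  · rw [xW_eq' h hi, map_neg, ψP_X, ψvar_xx, ← mul_neg, ← map_neg, neg_sub]

theorem ψP_t {k : ℕ} (hk : k < f) : ψP L d (tW f k) = τU (f := f) L d k := by
  rw [tW_eq hk, ψP_X, ψvar_tt]

theorem ψP_J (hf : 4 ≤ f) (hd : d * algebraMap (UU f) L (pU f 1) = 1) :
    JW f ≤ RingHom.ker (ψP (f := f) L d) := by
  rw [JW_eq, Ideal.span_le]
  rintro p (⟨i, j, k, l, h1, h2, h3, h4, rfl⟩ | ⟨j, hj, rfl⟩)
  · rw [SetLike.mem_coe, RingHom.mem_ker]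
    unfold pfW
    simp only [map_add, map_sub, map_mul]
    rw [ψP_x L d (by omega) (by omega), ψP_x L d (by omega) (by omega),
      ψP_x L d (by omega) (by omega), ψP_x L d (by omega) (by omega),
      ψP_x L d (by omega) (by omega), ψP_x L d (by omega) (by omega)]
    simp only [map_add, map_sub, map_mul]
    ring
  · rw [SetLike.mem_coe, RingHom.mem_ker]
    unfold tXW
    rw [map_sum]
    have : ∀ i ∈ Finset.range f, ψP L d (tW f i * xW f i j) =
        τU (f := f) L d i *
          (d * algebraMap (UU f) L (pU f i * qU f j - pU f j * qU f i)) := by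
      intro i hi
      rw [Finset.mem_range] at hi
      rw [map_mul, ψP_t L d hi, ψP_x L d hi hj]
    rw [Finset.sum_congr rfl this]
    obtain ⟨g, rfl⟩ : ∃ g, f = g + 2 := ⟨f - 2, by omega⟩
    rw [Finset.sum_range_succ', Finset.sum_range_succ']
    have e0 : τU (f := g + 2) L d 0 = d * ∑ i ∈ Finset.range g,
        algebraMap (UU (g + 2)) L (sU (g + 2) (i + 1 + 1) * qU (g + 2) (i + 1 + 1)) := by
      unfold τU
      rw [if_pos rfl, Finset.sum_range_succ', Finset.sum_range_succ']
      have a0 : sU (g + 2) 0 = 0 := dif_neg (by omega)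
      have a1 : sU (g + 2) (0 + 1) = 0 := dif_neg (by omega)
      rw [a0, a1]; simp
    have e1 : τU (f := g + 2) L d (0 + 1) = - (d * ∑ i ∈ Finset.range g,
        algebraMap (UU (g + 2)) L (sU (g + 2) (i + 1 + 1) * pU (g + 2) (i + 1 + 1))) := by
      unfold τU
      rw [if_neg (by omega), if_pos rfl, Finset.sum_range_succ', Finset.sum_range_succ']
      have a0 : sU (g + 2) 0 = 0 := dif_neg (by omega)
      have a1 : sU (g + 2) (0 + 1) = 0 := dif_neg (by omega)
      rw [a0, a1]; simp
    have e2 : ∀ i, τU (f := g + 2) L d (i + 1 + 1) =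
        algebraMap (UU (g + 2)) L (sU (g + 2) (i + 1 + 1)) := by
      intro i
      unfold τU
      rw [if_neg (by omega), if_neg (by omega)]
    have p0 : pU (g + 2) 0 = 0 := dif_neg (by omega)
    have q1 : qU (g + 2) (0 + 1) = 0 := by
      unfold qU; rw [if_neg (by omega), dif_neg (by omega)]
    have q0 : qU (g + 2) 0 = - pU (g + 2) 1 := if_pos rfl
    rw [e0, e1, p0, q0, q1]
    simp only [e2, zero_add]
    have k1 : algebraMap (UU (g + 2)) L (pU (g + 2) 1 * qU (g + 2) j - pU (g + 2) j * 0) * d =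
        algebraMap (UU (g + 2)) L (qU (g + 2) j) := by
      simp only [map_sub, map_mul, map_zero, mul_zero, sub_zero]
      linear_combination (algebraMap (UU (g + 2)) L (qU (g + 2) j)) * hd
    have k0 : algebraMap (UU (g + 2)) L (0 * qU (g + 2) j - pU (g + 2) j * -pU (g + 2) 1) * d =
        algebraMap (UU (g + 2)) L (pU (g + 2) j) := by
      simp only [map_sub, map_mul, map_zero, zero_mul, zero_sub, map_neg]
      linear_combination (algebraMap (UU (g + 2)) L (pU (g + 2) j)) * hd
    have : ∀ a b a' b' c : L, a + -(d * b) * (d * a') + (d * c) * (d * b') =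
        a - d * b * (a' * d) + d * c * (b' * d) := by intros; ring
    rw [this, k0, k1, mul_assoc, mul_assoc, Finset.sum_mul, Finset.sum_mul, Finset.mul_sum,
      Finset.mul_sum, ← Finset.sum_sub_distrib, ← Finset.sum_add_distrib]
    apply Finset.sum_eq_zero
    intro i _
    simp only [map_sub, map_mul]
    ring

theorem ψP_good (hf : 4 ≤ f) (hd : d * algebraMap (UU f) L (pU f 1) = 1) (v : W f) (hv : good v) :
    ψP L d (MvPolynomial.X v) = algebraMap (UU f) L (MvPolynomial.X ⟨v, hv⟩) := by
  rw [ψP_X]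
  revert hv
  cases v using W.cases with
  | hx i j hij hj =>
    intro hv
    rw [ψvar_xx]
    have := good_xx.1 hv
    obtain rfl | rfl : i = 0 ∨ i = 1 := by omega
    · have p0 : pU f 0 = 0 := dif_neg (by omega)
      have q0 : qU f 0 = - pU f 1 := if_pos rfl
      have pj : pU f j = MvPolynomial.X ⟨xx 0 j hij hj, hv⟩ := dif_pos ⟨hij, hj⟩
      rw [p0, q0, pj]
      simp only [map_sub, map_mul, map_zero, zero_mul, zero_sub, map_neg]
      linear_combination (algebraMap (UU f) L (MvPolynomial.X ⟨xx 0 j hij hj, hv⟩)) * hd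
    · have q1 : qU f 1 = 0 := by
        unfold qU; rw [if_neg (by omega), dif_neg (by omega)]
      have qj : qU f j = MvPolynomial.X ⟨xx 1 j hij hj, hv⟩ := by
        unfold qU; rw [if_neg (by omega), dif_pos ⟨hij, hj⟩]
      rw [q1, qj]
      simp only [map_sub, map_mul, map_zero, mul_zero, sub_zero]
      linear_combination (algebraMap (UU f) L (MvPolynomial.X ⟨xx 1 j hij hj, hv⟩)) * hd
  | ht k hk =>
    intro hv
    have := good_tt.1 hv
    rw [ψvar_tt]
    unfold τU
    rw [if_neg (by omega), if_neg (by omega), sU, dif_pos ⟨this, hk⟩]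

end chart

/-- the ring over the integers -/
abbrev AW (f : ℕ) := MvPolynomial (W f) ℤ ⧸ JW f

/-- the inclusion of the chart ring -/
def ιW (f : ℕ) : UU f →+* AW f :=
  (Ideal.Quotient.mk (JW f)).comp (MvPolynomial.rename (R := ℤ) (Subtype.val)).toRingHom

theorem ιW_X {f : ℕ} (v : {v : W f // good v}) :
    ιW f (MvPolynomial.X v) = Ideal.Quotient.mk (JW f) (MvPolynomial.X v.1) := by
  change Ideal.Quotient.mk (JW f) (MvPolynomial.rename _ (MvPolynomial.X v)) = _
  rw [MvPolynomial.rename_X]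

theorem JW_prime {f : ℕ} (hf : 4 ≤ f) : (JW f).IsPrime := by
  have := (DW hf).prime (DW hf).bot
  rw [(DW hf).K_bot] at this
  exact this

/-- the special element -/
def yW {f : ℕ} (hf : 4 ≤ f) : AW f := Ideal.Quotient.mk (JW f) (MvPolynomial.X (botW hf))

theorem yW_eq {f : ℕ} (hf : 4 ≤ f) : ιW f (pU f 1) = yW hf := by
  rw [pU, dif_pos ⟨by omega, by omega⟩, ιW_X]
  rfl

theorem KW_nxt {f : ℕ} (hf : 4 ≤ f) : KW f (nxtW hf (botW hf)) =
    JW f ⊔ Ideal.span {MvPolynomial.X (botW hf)} := by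
  have h := (DW hf).K_eq (nxtW hf (botW hf))
  have h2 : {u : W f | ¬ nxtW hf (botW hf) ≤ u} = {botW hf} := by
    ext u
    rw [Set.mem_ofPred_eq, Set.mem_singleton_iff]
    unfold botW
    rw [nxt_xx, dif_pos (by omega)]
    cases u using W.cases with
    | hx i j hij hj => rw [le_xx, eq_xx]; omega
    | ht k hk => rw [le_xt, ne_tx]; simp; omega
  rw [ASL.Z, h2, Set.image_singleton] at h
  exact h

theorem dvd_yW {f : ℕ} (hf : 4 ≤ f) (p) : yW hf ∣ Ideal.Quotient.mk (JW f) p ↔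
    p ∈ KW f (nxtW hf (botW hf)) := by
  rw [KW_nxt, Submodule.mem_sup]
  constructor
  · rintro ⟨c, hc⟩
    obtain ⟨c, rfl⟩ := Ideal.Quotient.mk_surjective c
    rw [yW, ← map_mul, Ideal.Quotient.eq] at hc
    exact ⟨_, hc, _, Ideal.mem_span_singleton.2 ⟨c, rfl⟩, by ring⟩
  · rintro ⟨a, ha, b, hb, rfl⟩
    obtain ⟨c, rfl⟩ := Ideal.mem_span_singleton.1 hb
    rw [map_add, Ideal.Quotient.eq_zero_iff_mem.2 ha, zero_add, map_mul]
    exact dvd_mul_right _ _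

theorem yW_prime {f : ℕ} (hf : 4 ≤ f) : Prime (yW hf) := by
  have hK := (DW hf).prime (nxtW hf (botW hf))
  change (KW f (nxtW hf (botW hf))).IsPrime at hK
  refine ⟨?_, ?_, ?_⟩
  · intro h
    rw [yW, Ideal.Quotient.eq_zero_iff_mem] at h
    exact KW_X_notMem hf (botW hf) ((DW hf).J_le _ h)
  · intro h
    have h1 : yW hf ∣ Ideal.Quotient.mk (JW f) 1 := h.dvd
    rw [dvd_yW] at h1
    exact hK.ne_top ((Ideal.eq_top_iff_one _).2 h1)
  · intro a b
    obtain ⟨a, rfl⟩ := Ideal.Quotient.mk_surjective a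
    obtain ⟨b, rfl⟩ := Ideal.Quotient.mk_surjective b
    rw [← map_mul, dvd_yW, dvd_yW, dvd_yW]
    exact hK.mem_or_mem

theorem mk_range {f : ℕ} {v : W f} (h : good v) :
    Ideal.Quotient.mk (JW f) (MvPolynomial.X v) ∈ (ιW f).range := ⟨_, ιW_X ⟨v, h⟩⟩

theorem mk_x_range {f : ℕ} {i j : ℕ} (h : i ≤ 1 ∨ j ≤ 1) :
    Ideal.Quotient.mk (JW f) (xW f i j) ∈ (ιW f).range := by
  unfold xW
  split_ifs with h1 h2
  · exact mk_range (good_xx.2 (by omega))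
  · rw [map_neg]
    exact neg_mem (mk_range (good_xx.2 (by omega)))
  · rw [map_zero]; exact zero_mem _

theorem mk_t_range {f : ℕ} {k : ℕ} (h : 2 ≤ k) :
    Ideal.Quotient.mk (JW f) (tW f k) ∈ (ιW f).range := by
  unfold tW
  split_ifs with h1
  · exact mk_range (good_tt.2 (by omega))
  · rw [map_zero]; exact zero_mem _

theorem gen_range {f : ℕ} (hf : 4 ≤ f) (v : W f) :
    yW hf * Ideal.Quotient.mk (JW f) (MvPolynomial.X v) ∈ (ιW f).range := by
  have hy : yW hf ∈ (ιW f).range := ⟨_, yW_eq hf⟩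
  have hy' : yW hf = Ideal.Quotient.mk (JW f) (xW f 0 1) := by
    rw [xW_eq (by omega) (by omega)]; rfl
  by_cases hv : good v
  · exact mul_mem hy (mk_range hv)
  revert hv
  cases v using W.cases with
  | hx i j hij hj =>
    rw [good_xx]
    intro hi
    have h := Ideal.Quotient.eq_zero_iff_mem.2
      (pfW_mem (f := f) (i := 0) (j := 1) (k := i) (l := j) (by omega) (by omega) hij hj)
    unfold pfW at h
    simp only [map_add, map_sub, map_mul] at h
    rw [← xW_eq hij hj, hy']
    have h2 : Ideal.Quotient.mk (JW f) (xW f 0 1) * Ideal.Quotient.mk (JW f) (xW f i j) =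
        Ideal.Quotient.mk (JW f) (xW f 0 i) * Ideal.Quotient.mk (JW f) (xW f 1 j) -
        Ideal.Quotient.mk (JW f) (xW f 0 j) * Ideal.Quotient.mk (JW f) (xW f 1 i) := by
      linear_combination h
    rw [h2]
    exact sub_mem (mul_mem (mk_x_range (by omega)) (mk_x_range (by omega)))
      (mul_mem (mk_x_range (by omega)) (mk_x_range (by omega)))
  | ht k hk =>
    rw [good_tt]
    intro hk2
    obtain ⟨g, rfl⟩ : ∃ g, f = g + 2 := ⟨f - 2, by omega⟩
    have key : ∀ j, j ≤ 1 → ∑ i ∈ Finset.range g, Ideal.Quotient.mk (JW (g + 2))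
        (tW (g + 2) (i + 1 + 1) * xW (g + 2) (i + 1 + 1) j) ∈ (ιW (g + 2)).range := by
      intro j hj
      apply sum_mem
      intro i _
      rw [map_mul]
      exact mul_mem (mk_t_range (by omega)) (mk_x_range (Or.inr hj))
    obtain rfl | rfl : k = 0 ∨ k = 1 := by omega
    · have h := Ideal.Quotient.eq_zero_iff_mem.2 (tXW_mem (f := g + 2) (j := 1) (by omega))
      unfold tXW at h
      rw [map_sum, Finset.sum_range_succ', Finset.sum_range_succ', zero_add, xW_self, mul_zero,
        map_zero, add_zero, map_mul] at h
      rw [← tW_eq hk, hy', mul_comm, ← neg_eq_iff_add_eq_zero.2 h]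
      exact neg_mem (key 1 le_rfl)
    · have h := Ideal.Quotient.eq_zero_iff_mem.2 (tXW_mem (f := g + 2) (j := 0) (by omega))
      unfold tXW at h
      rw [map_sum, Finset.sum_range_succ', Finset.sum_range_succ', zero_add, xW_self, mul_zero,
        map_zero, add_zero, map_mul, xW_eq' (by omega) (by omega), map_neg] at h
      have h2 : ∑ i ∈ Finset.range g, Ideal.Quotient.mk (JW (g + 2))
          (tW (g + 2) (i + 1 + 1) * xW (g + 2) (i + 1 + 1) 0) =
          yW hf * Ideal.Quotient.mk (JW (g + 2)) (tW (g + 2) 1) := by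
        rw [hy', xW_eq (by omega) (by omega)]
        linear_combination h
      rw [← tW_eq hk, ← h2]
      exact key 0 (by omega)

theorem chart_surj {f : ℕ} (hf : 4 ≤ f) (a : AW f) : ∃ n u, yW hf ^ n * a = ιW f u := by
  have hy : yW hf ∈ (ιW f).range := ⟨_, yW_eq hf⟩
  suffices h : ∃ n, yW hf ^ n * a ∈ (ιW f).range by
    obtain ⟨n, u, h⟩ := h
    exact ⟨n, u, h.symm⟩
  obtain ⟨p, rfl⟩ := Ideal.Quotient.mk_surjective a
  induction p using MvPolynomial.induction_on with
  | C r =>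
    refine ⟨0, MvPolynomial.C r, ?_⟩
    rw [pow_zero, one_mul]
    change Ideal.Quotient.mk (JW f) (MvPolynomial.rename _ (MvPolynomial.C r)) = _
    rw [MvPolynomial.rename_C]
  | add p q hp hq =>
    obtain ⟨n, hn⟩ := hp
    obtain ⟨m, hm⟩ := hq
    refine ⟨n + m, ?_⟩
    have : yW hf ^ (n + m) * Ideal.Quotient.mk (JW f) (p + q) =
        yW hf ^ m * (yW hf ^ n * Ideal.Quotient.mk (JW f) p) +
        yW hf ^ n * (yW hf ^ m * Ideal.Quotient.mk (JW f) q) := by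
      rw [map_add]; ring
    rw [this]
    exact add_mem (mul_mem (pow_mem hy _) hn) (mul_mem (pow_mem hy _) hm)
  | mul_X p v hp =>
    obtain ⟨n, hn⟩ := hp
    refine ⟨n + 1, ?_⟩
    have : yW hf ^ (n + 1) * Ideal.Quotient.mk (JW f) (p * MvPolynomial.X v) =
        (yW hf ^ n * Ideal.Quotient.mk (JW f) p) *
        (yW hf * Ideal.Quotient.mk (JW f) (MvPolynomial.X v)) := by
      rw [map_mul]; ring
    rw [this]
    exact mul_mem hn (gen_range hf v)

theorem ufdW {f : ℕ} (hf : 4 ≤ f) : ∃ _ : IsDomain (AW f), UniqueFactorizationMonoid (AW f) := by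
  have := JW_prime hf
  have hD : IsDomain (AW f) := Ideal.Quotient.isDomain _
  refine ⟨hD, ?_⟩
  have : Finite {v : W f // good v} := Subtype.finite
  let y := pU f 1
  have hy : y ≠ 0 := by
    intro h
    have h1 := yW_eq hf
    change ιW f y = _ at h1
    rw [h, map_zero] at h1
    exact (yW_prime hf).ne_zero h1.symm
  let L := Localization.Away y
  let d : L := IsLocalization.Away.invSelf y
  have hd : d * algebraMap (UU f) L (pU f 1) = 1 := by
    rw [mul_comm]; exact IsLocalization.Away.mul_invSelf y
  let ψ : AW f →+* L := Ideal.Quotient.lift (JW f) (ψP L d) (fun a ha => ψP_J L d hf hd ha)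
  refine ufd_of_chart (L := L) y hy (ιW f) ψ ?_ ?_ ?_
  · intro u
    have : (ψ.comp (ιW f)) = algebraMap (UU f) L := by
      apply MvPolynomial.ringHom_ext
      · intro r
        simp
      · intro v
        rw [RingHom.comp_apply, ιW_X]
        exact ψP_good L d hf hd v.1 v.2
    exact RingHom.congr_fun this u
  · intro a
    obtain ⟨n, u, h⟩ := chart_surj hf a
    exact ⟨n, u, by rw [← h, yW_eq hf]⟩
  · exact (yW_eq hf).symm ▸ yW_prime hf

/-! ### Part IV: base change -/

open scoped TensorProduct in
theorem tens_univ {S A : Type} {S' Q : Type u} [CommRing S] [CommRing A] [CommRing S'] [CommRing Q]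
    [Algebra S A] [Algebra S S'] (g1 : S' →+* Q) (g2 : A →+* Q)
    (hg : ∀ s, g1 (algebraMap S S' s) = g2 (algebraMap S A s)) :
    ∃ g : S' ⊗[S] A →+* Q, (∀ s, g (s ⊗ₜ 1) = g1 s) ∧ (∀ a, g (1 ⊗ₜ a) = g2 a) := by
  let : Algebra S Q := (g2.comp (algebraMap S A)).toAlgebra
  let G1 : S' →ₐ[S] Q := { g1 with commutes' := hg }
  let G2 : A →ₐ[S] Q := { g2 with commutes' := fun _ => rfl }
  let g : S' ⊗[S] A →+* Q := (Algebra.TensorProduct.productMap G1 G2).toRingHom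
  have hg : ∀ s a, g (s ⊗ₜ a) = g1 s * g2 a := fun s a =>
    Algebra.TensorProduct.productMap_apply_tmul G1 G2 s a
  exact ⟨g, fun s => by rw [hg, map_one, mul_one], fun a => by rw [hg, map_one, one_mul]⟩

open scoped TensorProduct in
theorem tens_gen {S A : Type} {S' : Type u} [CommRing S] [CommRing A] [CommRing S']
    [Algebra S A] [Algebra S S'] (h : S' ⊗[S] A →+* S' ⊗[S] A)
    (h1 : ∀ s, h (s ⊗ₜ 1) = s ⊗ₜ 1) (h2 : ∀ a, h (1 ⊗ₜ a) = 1 ⊗ₜ a) (x) : h x = x := by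
  induction x with
  | zero => simp
  | add x y hx hy => rw [map_add, hx, hy]
  | tmul s a =>
    have : s ⊗ₜ[S] a = (s ⊗ₜ[S] (1 : A)) * ((1 : S') ⊗ₜ[S] a) := by
      rw [Algebra.TensorProduct.tmul_mul_tmul, one_mul, mul_one]
    rw [this, map_mul, h1, h2]

open scoped TensorProduct in
theorem tens_swap {S A : Type} {S' : Type u} [CommRing S] [CommRing A] [CommRing S']
    [Algebra S A] [Algebra S S'] (s : S) :
    (algebraMap S S' s) ⊗ₜ[S] (1 : A) = (1 : S') ⊗ₜ[S] (algebraMap S A s) := by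
  rw [Algebra.algebraMap_eq_smul_one, Algebra.algebraMap_eq_smul_one, TensorProduct.smul_tmul]

/-- A tensor product, abstractly. -/
structure IsTens {S A : Type} {S' B : Type u} [CommRing S] [CommRing A] [CommRing S'] [CommRing B]
    (a : S →+* A) (b : S →+* S') (iL : S' →+* B) (iR : A →+* B) : Prop where
  comm : ∀ s, iL (b s) = iR (a s)
  univ : ∀ (Q : Type u) [CommRing Q] (g1 : S' →+* Q) (g2 : A →+* Q), (∀ s, g1 (b s) = g2 (a s)) →
    ∃ g : B →+* Q, (∀ s, g (iL s) = g1 s) ∧ (∀ a, g (iR a) = g2 a)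
  gen : ∀ h : B →+* B, (∀ s, h (iL s) = iL s) → (∀ a, h (iR a) = iR a) → ∀ x, h x = x

open scoped TensorProduct in
theorem isTens {S A : Type} {S' : Type u} [CommRing S] [CommRing A] [CommRing S']
    [Algebra S A] [Algebra S S'] : IsTens (algebraMap S A) (algebraMap S S')
    (Algebra.TensorProduct.includeLeftRingHom : S' →+* S' ⊗[S] A)
    (Algebra.TensorProduct.includeRight : A →ₐ[S] S' ⊗[S] A).toRingHom where
  comm := tens_swap
  univ _ _ := tens_univ
  gen := tens_gen

theorem bc_core {σ : Type} {N : ℕ} (J : Ideal (MvPolynomial σ ℤ)) {A : Type} [CommRing A]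
    (π : MvPolynomial σ ℤ →+* A) (hπ : Function.Surjective π) (hk : ∀ p, π p = 0 ↔ p ∈ J)
    (al : MvPolynomial (Fin N) ℤ →+* A) (θ : Fin N → MvPolynomial σ ℤ)
    (hθ : ∀ k, al (MvPolynomial.X k) = π (θ k))
    (R : Type u) [CommRing R] {B : Type u} [CommRing B] (iL : MvPolynomial (Fin N) R →+* B)
    (iR : A →+* B) (H : IsTens al (MvPolynomial.map (Int.castRingHom R)) iL iR) :
    Nonempty (B ≃+* MvPolynomial σ R ⧸ J.map (MvPolynomial.map (Int.castRingHom R))) := by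
  let J' := J.map (MvPolynomial.map (σ := σ) (Int.castRingHom R))
  let g1 : MvPolynomial (Fin N) R →+* MvPolynomial σ R ⧸ J' :=
    MvPolynomial.eval₂Hom ((Ideal.Quotient.mk J').comp MvPolynomial.C)
      (fun k => Ideal.Quotient.mk J' (MvPolynomial.map (Int.castRingHom R) (θ k)))
  have hJJ : ∀ p ∈ J, Ideal.Quotient.mk J' (MvPolynomial.map (Int.castRingHom R) p) = 0 :=
    fun a ha => Ideal.Quotient.eq_zero_iff_mem.2 (Ideal.mem_map_of_mem _ ha)
  have hker : RingHom.ker π = J := by ext p; exact hk p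
  let g2 : A →+* MvPolynomial σ R ⧸ J' :=
    (Ideal.Quotient.lift J ((Ideal.Quotient.mk J').comp (MvPolynomial.map (Int.castRingHom R)))
      hJJ).comp ((RingHom.quotientKerEquivOfSurjective hπ).symm.trans
        (Ideal.quotEquivOfEq hker)).toRingHom
  have hg2 : ∀ p, g2 (π p) =
      Ideal.Quotient.mk J' (MvPolynomial.map (Int.castRingHom R) p) := by
    intro p
    have : (RingHom.quotientKerEquivOfSurjective hπ).symm (π p) = Ideal.Quotient.mk _ p := by
      rw [RingEquiv.symm_apply_eq]; rfl
    change (Ideal.Quotient.lift J ((Ideal.Quotient.mk J').comp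
      (MvPolynomial.map (Int.castRingHom R))) hJJ) (Ideal.quotEquivOfEq hker
      ((RingHom.quotientKerEquivOfSurjective hπ).symm (π p))) = _
    rw [this]
    rfl
  have hg1C : ∀ r, g1 (MvPolynomial.C r) = Ideal.Quotient.mk J' (MvPolynomial.C r) := fun r =>
    MvPolynomial.eval₂Hom_C _ _ _
  have hg1X : ∀ k, g1 (MvPolynomial.X k) =
    Ideal.Quotient.mk J' (MvPolynomial.map (Int.castRingHom R) (θ k)) := fun r =>
    MvPolynomial.eval₂Hom_X' _ _ _
  let h0 : MvPolynomial σ R →+* B :=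
    MvPolynomial.eval₂Hom (iL.comp MvPolynomial.C) (fun v => iR (π (MvPolynomial.X v)))
  have h0C : ∀ r, h0 (MvPolynomial.C r) = iL (MvPolynomial.C r) := fun r =>
    MvPolynomial.eval₂Hom_C _ _ _
  have h0X : ∀ v, h0 (MvPolynomial.X v) = iR (π (MvPolynomial.X v)) := fun v =>
    MvPolynomial.eval₂Hom_X' _ _ _
  have h0m : ∀ p, h0 (MvPolynomial.map (Int.castRingHom R) p) = iR (π p) := by
    intro p
    have : h0.comp (MvPolynomial.map (Int.castRingHom R)) = iR.comp π := by
      apply MvPolynomial.ringHom_ext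
      · intro r
        have e1 : (MvPolynomial.C r : MvPolynomial σ ℤ) = (r : MvPolynomial σ ℤ) := by simp
        rw [e1, map_intCast, map_intCast]
      · intro v
        rw [RingHom.comp_apply, RingHom.comp_apply, MvPolynomial.map_X, h0X]
    exact RingHom.congr_fun this p
  let h : MvPolynomial σ R ⧸ J' →+* B :=
    Ideal.Quotient.lift J' h0 (by
      have : J' ≤ RingHom.ker h0 := by
        rw [Ideal.map_le_iff_le_comap]
        intro p hp
        rw [Ideal.mem_comap, RingHom.mem_ker, h0m, (hk p).2 hp, map_zero]
      exact fun a ha => this ha)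
  have hh : ∀ p, h (Ideal.Quotient.mk J' p) = h0 p := fun _ => rfl
  have hc : ∀ s, g1 (MvPolynomial.map (Int.castRingHom R) s) = g2 (al s) := by
    intro s
    have : g1.comp (MvPolynomial.map (Int.castRingHom R)) = g2.comp al := by
      apply MvPolynomial.ringHom_ext
      · intro r
        have e1 : (MvPolynomial.C r : MvPolynomial (Fin N) ℤ) = (r : MvPolynomial (Fin N) ℤ) := by
          simp
        rw [e1, map_intCast, map_intCast]
      · intro k
        rw [RingHom.comp_apply, RingHom.comp_apply, MvPolynomial.map_X, hg1X, hθ, hg2]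
    exact RingHom.congr_fun this s
  obtain ⟨g, e1, e2⟩ := H.univ _ g1 g2 hc
  have hhg1 : ∀ s, h (g1 s) = iL s := by
    intro s
    have : h.comp g1 = iL := by
      apply MvPolynomial.ringHom_ext
      · intro r
        rw [RingHom.comp_apply, hg1C, hh, h0C]
      · intro k
        have := H.comm (MvPolynomial.X k)
        rw [RingHom.comp_apply, hg1X, hh, h0m, ← hθ, ← this, MvPolynomial.map_X]
    exact RingHom.congr_fun this s
  have hl : ∀ x, h (g x) = x := by
    apply H.gen (h.comp g)
    · intro s
      rw [RingHom.comp_apply, e1, hhg1]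
    · intro a
      obtain ⟨p, rfl⟩ := hπ a
      rw [RingHom.comp_apply, e2, hg2, hh, h0m]
  have hr : ∀ q, g (h q) = q := by
    intro q
    obtain ⟨p, rfl⟩ := Ideal.Quotient.mk_surjective q
    rw [hh]
    have : g.comp h0 = Ideal.Quotient.mk J' := by
      apply MvPolynomial.ringHom_ext
      · intro r
        rw [RingHom.comp_apply, h0C, e1, hg1C]
      · intro v
        rw [RingHom.comp_apply, h0X, e2, hg2, MvPolynomial.map_X]
    exact RingHom.congr_fun this p
  exact ⟨RingEquiv.ofRingHom g h (RingHom.ext hr) (RingHom.ext hl)⟩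

set_option synthInstance.maxHeartbeats 400000 in
set_option maxHeartbeats 1000000 in
theorem gor_bc {σ : Type} {N : ℕ} (J : Ideal (MvPolynomial σ ℤ)) {A : Type} [CommRing A]
    (π : MvPolynomial σ ℤ →+* A) (hπ : Function.Surjective π) (hk : ∀ p, π p = 0 ↔ p ∈ J)
    [Algebra (MvPolynomial (Fin N) ℤ) A] [Module.Finite (MvPolynomial (Fin N) ℤ) A]
    (hF : Frob (MvPolynomial (Fin N) ℤ) A)
    (θ : Fin N → MvPolynomial σ ℤ)
    (hθ : ∀ k, algebraMap (MvPolynomial (Fin N) ℤ) A (MvPolynomial.X k) = π (θ k))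
    (R : Type u) [CommRing R] (hR : IsGorensteinRing R) :
    IsGorensteinRing (MvPolynomial σ R ⧸ J.map (MvPolynomial.map (Int.castRingHom R))) := by
  let : Algebra (MvPolynomial (Fin N) ℤ) (MvPolynomial (Fin N) R) :=
    (MvPolynomial.map (Int.castRingHom R)).toAlgebra
  have hS' := gor_mvPoly R hR N
  have hNo : IsNoetherianRing (MvPolynomial (Fin N) R) := hS'.1
  have hF' := Frob.baseChange (S' := MvPolynomial (Fin N) R) hF
  have hNB : IsNoetherianRing (TensorProduct (MvPolynomial (Fin N) ℤ) (MvPolynomial (Fin N) R) A) :=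
    IsNoetherianRing.of_finite (MvPolynomial (Fin N) R) (TensorProduct (MvPolynomial (Fin N) ℤ)
      (MvPolynomial (Fin N) R) A)
  have hB := hF'.gor hS'
  obtain ⟨e⟩ := bc_core J π hπ hk (algebraMap _ A) θ hθ R _ _
    (isTens (S := MvPolynomial (Fin N) ℤ) (A := A) (S' := MvPolynomial (Fin N) R))
  exact gor_ringEquiv e hB

theorem map_xvt (R : Type u) [CommRing R] (f : ℕ) (i j : Fin f) :
    MvPolynomial.map (Int.castRingHom R) (xvt ℤ f i j) = xvt R f i j := by
  unfold xvt
  split_ifs <;> simp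

theorem map_tvt (R : Type u) [CommRing R] (f : ℕ) (i : Fin f) :
    MvPolynomial.map (Int.castRingHom R) (tvt ℤ f i) = tvt R f i := by
  unfold tvt
  simp

theorem map_Jt (R : Type u) [CommRing R] (f : ℕ) :
    (Jt ℤ f).map (MvPolynomial.map (Int.castRingHom R)) = Jt R f := by
  unfold Jt
  rw [Submodule.add_eq_sup, Ideal.map_sup, Submodule.add_eq_sup]
  unfold Pf4t ItX
  rw [Ideal.map_span, Ideal.map_span]
  have hp : ∀ i j k l, MvPolynomial.map (Int.castRingHom R) (pf4t ℤ f i j k l) =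
      pf4t R f i j k l := by
    intro i j k l
    unfold pf4t
    simp only [map_add, map_sub, map_mul, map_xvt]
  have ht : ∀ j, MvPolynomial.map (Int.castRingHom R) (tX ℤ f j) = tX R f j := by
    intro j
    unfold tX
    simp only [map_sum, map_mul, map_xvt, map_tvt]
  congr 2
  · ext p
    constructor
    · rintro ⟨_, ⟨i, j, k, l, h1, h2, h3, rfl⟩, rfl⟩
      exact ⟨i, j, k, l, h1, h2, h3, hp _ _ _ _⟩
    · rintro ⟨i, j, k, l, h1, h2, h3, rfl⟩
      exact ⟨_, ⟨i, j, k, l, h1, h2, h3, rfl⟩, hp _ _ _ _⟩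
  · ext p
    constructor
    · rintro ⟨_, ⟨j, rfl⟩, rfl⟩
      exact ⟨j, ht _⟩
    · rintro ⟨j, rfl⟩
      exact ⟨_, ⟨j, rfl⟩, ht _⟩

theorem final (R₀ : Type u) [CommRing R₀] (f : ℕ) (hf : 4 ≤ f)
    (hGor : IsGorensteinRing R₀) :
    IsGorensteinRing (MvPolynomial (Var f) R₀ ⧸ Jt R₀ f) := by
  let D := DW hf
  let := D.alg
  obtain ⟨h1, h2⟩ := D.free
  obtain ⟨hd, hu⟩ := ufdW hf
  have hd' : IsDomain (MvPolynomial (W f) ℤ ⧸ D.J) := hd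
  have hu' : UniqueFactorizationMonoid (MvPolynomial (W f) ℤ ⧸ D.J) := hu
  have hF : Frob (MvPolynomial (Fin D.N) ℤ) (MvPolynomial (W f) ℤ ⧸ D.J) := frob_of_ufd
  have := gor_bc D.J (Ideal.Quotient.mk D.J) Ideal.Quotient.mk_surjective
    (fun p => Ideal.Quotient.eq_zero_iff_mem) hF (fun k => D.θ (MvPolynomial.X k)) (fun k => rfl) R₀ hGor
  rw [← map_Jt]
  exact this

/-- for an arbitrary commutative Noetherian ring `R₀` and
`f ≥ 4`, if `R₀` is Gorenstein then `𝓡/J` is a Gorenstein ring, where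
`J = Pf₄(X) + I₁(tX)` in `𝓡 = R₀[x_{i,j}; t_i]`. -/
theorem stmt_13 (R₀ : Type u) [CommRing R₀] [IsNoetherianRing R₀] (f : ℕ) (hf : 4 ≤ f)
    (hGor : IsGorensteinRing R₀) :
    IsGorensteinRing (MvPolynomial (Var f) R₀ ⧸ Jt R₀ f) := by
  exact final R₀ f hf hGor

end AluffiStmt
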